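/- arXiv:math/0602446 — 3 statements merged into one kernel-verified Lean document; each statement's English description precedes it below -/
import Mathlib

section
/- Let f : ℕ → ℕ and let 𝔊 = ∏_{n=5}^∞ Alt(n)^{f(n)} be the Cartesian product of copies of alternating groups, a profinite group with the product topology. If 𝔊 is topologically finitely generated, then 𝔊 is a profinite completion: there exists a finitely generated residually finite group G whose profinite completion is topologically isomorphic to 𝔊. -/
/-- A topological group is *topologically finitely generated* if some finite subset
generates a dense subgroup. -/
def TopologicallyFG (P : Type*) [Group P] [TopologicalSpace P] : Prop :=
  ∃ S : Set P, S.Finite ∧ Dense (↑(Subgroup.closure S) : Set P)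

/-- A witness that the topological group `P` is (topologically isomorphic to) the profinite
completion of a finitely generated residually finite group `G`.  This is expressed via the
universal property of the profinite completion: there is a homomorphism `ι : G → P` which is
injective (equivalently, `G` is residually finite), has dense image, and such that every
homomorphism from `G` to a finite group factors through `P` by a homomorphism which is
continuous with respect to the discrete topology on the finite group.  (Uniqueness of the
factorization is automatic from density.) -/
structure ProfiniteCompletionWitness (P : Type*) [Group P] [TopologicalSpace P] where
  G : Type
  [grp : Group G]
  fg : Group.FG G
  ι : G →* P
  inj : Function.Injective ι
  dense : DenseRange ι
  factors : ∀ (Q : Type) [Group Q] [Finite Q] (f : G →* Q),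
    ∃ g : P →* Q, (∀ s : Set Q, IsOpen ((g : P → Q) ⁻¹' s)) ∧ g.comp ι = f

/-- Each finite alternating group carries the discrete topology. -/
instance (n : ℕ) : TopologicalSpace (alternatingGroup (Fin n)) := ⊥

/-!
Let `P = ∏ i, S i` be a Cartesian product of finite simple groups and `E ≤ P` the subgroup of
finitely supported families. Suppose that `G` is a finitely generated dense subgroup of `P` that
contains `E` and whose image in `P ⧸ E` has no nontrivial finite quotients. If the orders of the
`S i` tend to infinity, then a homomorphism `φ : G →* Q` to a finite group is trivial on `S i` for
almost all `i`. Deleting the remaining finitely many coordinates and then applying `φ` therefore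
kills `E`, hence is trivial. So `φ` depends on finitely many coordinates only and extends to `P`.

A dense `G` contains `E` once it contains finitely supported families with prescribed nontrivial
coordinate: for alternating groups, these arise as commutators of conjugates of a 3-cycle whose
supports overlap in one letter for the given degree and are disjoint for all large degrees.

The finitely generated subgroups of `P ⧸ E` without finite quotients form a directed family whose
union `R` is normal, so a dense `G` as above exists as soon as `R` is everything. Each alternating
group has elements `f, a, b, t, x, v` that satisfy certain braid relations and such that `a * f`
commutes with the conjugate of `b * f` by `(t * f) ^ i` for `0 < i < k`, where `k` tends to infinity
with the degree. In `P ⧸ E` they therefore commute for all `i > 0`; in a finite group this includes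
the order of `t * f`, which forces `a * f` and `b * f` to commute, and then the braid relations make
all six elements trivial. Hence the class of `⁅a * f, b * f⁆` lies in `R`. In the alternating group
this commutator is an involution moving a positive proportion of all letters, so that every element
is a product of 16 of its conjugates; consequently `R` is everything.
-/

open Equiv Equiv.Perm Filter
open scoped Pointwise commutatorElement

/-! ### Groups without finite quotients -/

theorem commutatorElement_mem {G : Type*} [Group G] {H : Subgroup G} {x y : G} (hx : x ∈ H)
    (hy : y ∈ H) : ⁅x, y⁆ ∈ H :=
  mul_mem (mul_mem (mul_mem hx hy) (inv_mem hx)) (inv_mem hy)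

/-- A group with no nontrivial finite quotients. Only quotients in `Type` are tested, which is no
restriction since every finite group is isomorphic to one there. -/
def NoFiniteQuotients (G : Type*) [Group G] : Prop :=
  ∀ (Q : Type) [Group Q] [Finite Q] (φ : G →* Q), φ = 1

namespace NoFiniteQuotients

variable {G H : Type*} [Group G] [Group H]

theorem of_surjective (hG : NoFiniteQuotients G) {f : G →* H} (hf : Function.Surjective f) :
    NoFiniteQuotients H := fun Q _ _ φ =>
  (MonoidHom.cancel_right hf).1 (hG Q (φ.comp f))

theorem eq_one_of_ker_le (hH : NoFiniteQuotients H) {f : G →* H} (hf : Function.Surjective f)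
    {Q : Type} [Group Q] [Finite Q] {φ : G →* Q} (hφ : f.ker ≤ φ.ker) : φ = 1 := by
  have h : f.liftOfSurjective hf ⟨φ, hφ⟩ = 1 := hH Q _
  simpa [h] using (f.liftOfRightInverse_comp _ (Function.rightInverse_surjInv hf) ⟨φ, hφ⟩).symm

theorem sup {K L : Subgroup G} (hK : NoFiniteQuotients K) (hL : NoFiniteQuotients L) :
    NoFiniteQuotients ↥(K ⊔ L) := by
  intro Q _ _ φ
  have ker_of_le {M : Subgroup G} (hM : NoFiniteQuotients M) (h : M ≤ K ⊔ L) :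
      M.subgroupOf (K ⊔ L) ≤ φ.ker := fun x hx =>
    φ.mem_ker.2 (DFunLike.congr_fun (hM Q (φ.comp (Subgroup.inclusion h))) ⟨x, hx⟩)
  rw [← MonoidHom.ker_eq_top_iff, eq_top_iff, ← Subgroup.subgroupOf_self,
    Subgroup.subgroupOf_sup le_sup_left le_sup_right]
  exact sup_le (ker_of_le hK le_sup_left) (ker_of_le hL le_sup_right)

end NoFiniteQuotients

section Radical

variable (Γ : Type*) [Group Γ]

/-- The subgroup generated by (in fact, the directed union of) the finitely generated subgroups
without nontrivial finite quotients. -/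
def finiteQuotientFreeRadical : Subgroup Γ :=
  sSup {H | H.FG ∧ NoFiniteQuotients H}

variable {Γ}

theorem le_finiteQuotientFreeRadical {H : Subgroup Γ} (hfg : H.FG) (hH : NoFiniteQuotients H) :
    H ≤ finiteQuotientFreeRadical Γ :=
  le_sSup ⟨hfg, hH⟩

theorem exists_fg_noFiniteQuotients_of_finite_subset {T : Set Γ} (hT : T.Finite)
    (h : T ⊆ finiteQuotientFreeRadical Γ) :
    ∃ H : Subgroup Γ, H.FG ∧ NoFiniteQuotients H ∧ T ⊆ H := by
  have directed : DirectedOn (· ≤ ·) {H : Subgroup Γ | H.FG ∧ NoFiniteQuotients H} :=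
    fun K hK L hL => ⟨K ⊔ L, ⟨hK.1.sup hL.1, hK.2.sup hL.2⟩, le_sup_left, le_sup_right⟩
  have nonempty : {H : Subgroup Γ | H.FG ∧ NoFiniteQuotients H}.Nonempty :=
    ⟨⊥, Subgroup.FG.bot, fun Q _ _ φ => Subsingleton.elim _ _⟩
  induction T, hT using Set.Finite.induction_on with
  | empty => exact nonempty.imp fun H hH => ⟨hH.1, hH.2, Set.empty_subset _⟩
  | @insert a T _ _ ih =>
    obtain ⟨haT, hT⟩ := Set.insert_subset_iff.1 h
    obtain ⟨K, hKfg, hK, haK⟩ := ih hT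
    obtain ⟨L, ⟨hLfg, hL⟩, haL⟩ := (Subgroup.mem_sSup_of_directedOn nonempty directed).1 haT
    exact ⟨K ⊔ L, hKfg.sup hLfg, hK.sup hL, Set.insert_subset (le_sup_right (a := K) haL)
      (haK.trans (le_sup_left (a := K)))⟩

instance normal_finiteQuotientFreeRadical : (finiteQuotientFreeRadical Γ).Normal where
  conj_mem x hx g := by
    obtain ⟨H, hfg, hH, hxH⟩ :=
      exists_fg_noFiniteQuotients_of_finite_subset (Set.finite_singleton x) (by simpa using hx)
    have hfg' : (H.map (MulAut.conj g).toMonoidHom).FG :=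
      (Subgroup.fg_iff_submonoid_fg _).2 (((Subgroup.fg_iff_submonoid_fg _).1 hfg).map _)
    exact le_finiteQuotientFreeRadical hfg'
      (hH.of_surjective (MonoidHom.subgroupMap_surjective _ H))
      (Subgroup.mem_map_of_mem _ (hxH rfl))

end Radical

theorem exists_fg_map_eq_of_surjective {P Γ : Type*} [Group P] [Group Γ] {f : P →* Γ}
    (hf : Function.Surjective f) {H : Subgroup Γ} (hH : H.FG) {T : Set P} (hT : T.Finite)
    (hTH : f '' T ⊆ H) : ∃ G : Subgroup P, G.FG ∧ T ⊆ G ∧ G.map f = H := by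
  obtain ⟨S, rfl, hS⟩ := (Subgroup.fg_iff H).1 hH
  refine ⟨Subgroup.closure (T ∪ Function.surjInv hf '' S),
    (Subgroup.fg_iff _).2 ⟨_, rfl, hT.union (hS.image _)⟩,
    Set.subset_union_left.trans Subgroup.subset_closure, ?_⟩
  rw [MonoidHom.map_closure, Set.image_union, Set.image_image]
  simp only [Function.surjInv_eq, Set.image_id']
  rw [Subgroup.closure_union, sup_eq_right, Subgroup.closure_le]
  exact hTH

theorem exists_fg_map_noFiniteQuotients {P Γ : Type*} [Group P] [Group Γ] {f : P →* Γ}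
    (hf : Function.Surjective f) (hΓ : finiteQuotientFreeRadical Γ = ⊤) {T : Set P}
    (hT : T.Finite) : ∃ G : Subgroup P, G.FG ∧ T ⊆ G ∧ NoFiniteQuotients (G.map f) := by
  obtain ⟨H, hfg, hH, hTH⟩ :=
    exists_fg_noFiniteQuotients_of_finite_subset (hT.image f) (by simp [hΓ])
  obtain ⟨G, hG, hTG, rfl⟩ := exists_fg_map_eq_of_surjective hf hfg hT hTH
  exact ⟨G, hG, hTG, hH⟩

/-- The braid relation. It forces `y = 1` as soon as `x = 1`, so that killing one element of a chain
of braided elements kills the whole chain. -/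
def BraidRel {G : Type*} [Group G] (x y : G) : Prop :=
  x * y * x = y * x * y

namespace BraidRel

variable {G H : Type*} [Group G] [Group H] {x y : G}

theorem map (h : BraidRel x y) (φ : G →* H) : BraidRel (φ x) (φ y) := by
  simpa only [BraidRel, map_mul] using congrArg φ h

theorem of_map {φ : G →* H} (hφ : Function.Injective φ) (h : BraidRel (φ x) (φ y)) :
    BraidRel x y :=
  hφ (by simpa only [BraidRel, map_mul] using h)

theorem pi {ι : Type*} {A : ι → Type*} [∀ i, Group (A i)] {x y : ∀ i, A i}
    (h : ∀ i, BraidRel (x i) (y i)) : BraidRel x y :=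
  funext h

theorem eq_one_of_left (h : BraidRel x y) (hx : x = 1) : y = 1 := by
  simpa [BraidRel, hx] using h

end BraidRel

/-- Six elements whose relations, for `I = {1, 2, …}`, are satisfied only trivially in finite
groups: if `t * f` has order `m`, then the commutation relation for `i = m` kills `⁅a * f, b * f⁆`,
and the braid relations propagate this to all six elements. For bounded `I` the relations do have
nontrivial finite solutions, in which the elements can be taken to be involutions. -/
structure IsCollapsing {G : Type*} [Group G] (I : Set ℕ) (f a b t x v : G) : Prop where
  commute : ∀ i ∈ I, Commute (a * f) ((t * f) ^ i * (b * f) * ((t * f) ^ i)⁻¹)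
  braid_comm : BraidRel ⁅a * f, b * f⁆ v
  braid_v : BraidRel v x
  braid_f : BraidRel x f
  braid_a : BraidRel x a
  braid_b : BraidRel x b
  braid_t : BraidRel x t

namespace IsCollapsing

variable {G H : Type*} [Group G] [Group H] {I : Set ℕ} {f a b t x v : G}

theorem map (h : IsCollapsing I f a b t x v) (φ : G →* H) :
    IsCollapsing I (φ f) (φ a) (φ b) (φ t) (φ x) (φ v) where
  commute i hi := by simpa only [map_mul, map_pow, map_inv] using (h.commute i hi).map φ
  braid_comm := by simpa only [map_mul, map_commutatorElement] using h.braid_comm.map φ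
  braid_v := h.braid_v.map φ
  braid_f := h.braid_f.map φ
  braid_a := h.braid_a.map φ
  braid_b := h.braid_b.map φ
  braid_t := h.braid_t.map φ

theorem of_map {φ : G →* H} (hφ : Function.Injective φ)
    (h : IsCollapsing I (φ f) (φ a) (φ b) (φ t) (φ x) (φ v)) : IsCollapsing I f a b t x v where
  commute i hi := hφ (by simpa only [map_mul, map_pow, map_inv] using (h.commute i hi).eq)
  braid_comm :=
    BraidRel.of_map hφ (by simpa only [map_mul, map_commutatorElement] using h.braid_comm)
  braid_v := h.braid_v.of_map hφ
  braid_f := h.braid_f.of_map hφ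
  braid_a := h.braid_a.of_map hφ
  braid_b := h.braid_b.of_map hφ
  braid_t := h.braid_t.of_map hφ

theorem one : IsCollapsing I (1 : G) 1 1 1 1 1 := by
  constructor <;> simp [BraidRel]

theorem eq_one_of_finite [Finite G] (h : IsCollapsing (Set.Ioi 0) f a b t x v) :
    f = 1 ∧ a = 1 ∧ b = 1 ∧ t = 1 ∧ x = 1 ∧ v = 1 := by
  have hcomm : ⁅a * f, b * f⁆ = 1 := by
    simpa [pow_orderOf_eq_one, commutatorElement_eq_one_iff_commute] using
      h.commute (orderOf (t * f)) (orderOf_pos _)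
  have hv := h.braid_comm.eq_one_of_left hcomm
  have hx := h.braid_v.eq_one_of_left hv
  exact ⟨h.braid_f.eq_one_of_left hx, h.braid_a.eq_one_of_left hx, h.braid_b.eq_one_of_left hx,
    h.braid_t.eq_one_of_left hx, hx, hv⟩

theorem noFiniteQuotients_closure (h : IsCollapsing (Set.Ioi 0) f a b t x v) :
    NoFiniteQuotients (Subgroup.closure {f, a, b, t, x, v}) := by
  intro Q _ _ φ
  have mem : ({f, a, b, t, x, v} : Set G) ⊆ Subgroup.closure {f, a, b, t, x, v} :=
    Subgroup.subset_closure
  simp only [Set.insert_subset_iff, Set.singleton_subset_iff, SetLike.mem_coe] at mem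
  obtain ⟨hf, ha, hb, ht, hx, hv⟩ := mem
  have collapsing : IsCollapsing (Set.Ioi 0)
      (⟨f, hf⟩ : Subgroup.closure {f, a, b, t, x, v}) ⟨a, ha⟩ ⟨b, hb⟩ ⟨t, ht⟩ ⟨x, hx⟩ ⟨v, hv⟩ :=
    of_map (Subgroup.subtype_injective _) h
  refine MonoidHom.eq_of_eqOn_dense Subgroup.closure_closure_coe_preimage ?_
  rintro ⟨g, _⟩ (hg : g = f ∨ g = a ∨ g = b ∨ g = t ∨ g = x ∨ g = v)
  obtain rfl | rfl | rfl | rfl | rfl | rfl := hg <;> simp [(collapsing.map φ).eq_one_of_finite]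

theorem commutatorElement_mem_finiteQuotientFreeRadical
    (h : IsCollapsing (Set.Ioi 0) f a b t x v) :
    ⁅a * f, b * f⁆ ∈ finiteQuotientFreeRadical G := by
  have subset : ({f, a, b, t, x, v} : Set G) ⊆ finiteQuotientFreeRadical G :=
    Subgroup.subset_closure.trans (le_finiteQuotientFreeRadical
      ((Subgroup.fg_iff _).2 ⟨_, rfl, Set.toFinite _⟩) h.noFiniteQuotients_closure)
  exact commutatorElement_mem (mul_mem (subset (by simp)) (subset (by simp)))
    (mul_mem (subset (by simp)) (subset (by simp)))

end IsCollapsing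

/-! ### Products of conjugates of an involution -/

section Involutions

variable {α : Type*}

theorem exists_involution_mul_mul_eq_inv (σ : Perm α) :
    ∃ ρ : Perm α, ρ ^ 2 = 1 ∧ ρ * σ * ρ = σ⁻¹ := by
  -- Reflect every cycle of `σ` in a chosen base point: `σ ^ i (rep x)` goes to `σ ^ (-i) (rep x)`.
  let rep (x : α) : α := (Quotient.mk (SameCycle.setoid σ) x).out
  have rep_zpow (x : α) (i : ℤ) : rep ((σ ^ i) (rep x)) = rep x :=
    have same : SameCycle σ ((σ ^ i) (rep x)) (rep x) := sameCycle_zpow_left.2 (SameCycle.refl σ _)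
    congrArg Quotient.out
      ((Quotient.sound (s := SameCycle.setoid σ) same).trans (Quotient.out_eq _))
  have sameCycle_rep (x : α) : ∃ i : ℤ, (σ ^ i) (rep x) = x :=
    Quotient.exact (s := SameCycle.setoid σ) (Quotient.out_eq _)
  choose e he using sameCycle_rep
  let reflect (x : α) : α := (σ ^ (-e x)) (rep x)
  have reflect_zpow (x : α) (i : ℤ) : reflect ((σ ^ i) (rep x)) = (σ ^ (-i)) (rep x) := by
    have h := he ((σ ^ i) (rep x))
    simp only [reflect, rep_zpow] at h ⊢
    generalize e ((σ ^ i) (rep x)) = j at h ⊢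
    rw [← (σ ^ (i + j)).injective.eq_iff, ← mul_apply, ← mul_apply, ← zpow_add, ← zpow_add]
    simpa using h.symm
  have involutive : Function.Involutive reflect := fun x => by
    calc reflect (reflect x) = reflect ((σ ^ (-e x)) (rep x)) := rfl
      _ = x := by rw [reflect_zpow, neg_neg, he]
  refine ⟨involutive.toPerm, Perm.ext involutive, Perm.ext fun x => ?_⟩
  have h : σ ((σ ^ (-e x)) (rep x)) = (σ ^ (1 - e x)) (rep x) := by
    rw [sub_eq_add_neg, zpow_add, zpow_one, mul_apply]
  calc reflect (σ (reflect x)) = (σ ^ (-(1 - e x))) (rep x) := by rw [← reflect_zpow, ← h]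
    _ = σ⁻¹ ((σ ^ e x) (rep x)) := by
      rw [← mul_apply, ← zpow_neg_one, ← zpow_add, neg_sub, sub_eq_neg_add]
    _ = σ⁻¹ x := by rw [he]

theorem exists_involutions_mul_eq (σ : Perm α) :
    ∃ r s : Perm α, r ^ 2 = 1 ∧ s ^ 2 = 1 ∧ r * s = σ := by
  obtain ⟨ρ, hρ, h⟩ := exists_involution_mul_mul_eq_inv σ
  refine ⟨ρ, ρ * σ, hρ, ?_, by rw [← mul_assoc, ← sq, hρ, one_mul]⟩
  rw [sq, ← mul_assoc, h, inv_mul_cancel]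

variable [Fintype α] [DecidableEq α]

theorem card_support_of_involution {r : Perm α} (hr : r ^ 2 = 1) :
    r.support.card = 2 * r.cycleType.card := by
  rw [← sum_cycleType, cycleType_of_pow_prime_eq_one hr]
  simp [mul_comm]

theorem isConj_of_involutions {r s : Perm α} (hr : r ^ 2 = 1) (hs : s ^ 2 = 1)
    (h : r.support.card = s.support.card) : IsConj r s := by
  rw [isConj_iff_cycleType_eq, cycleType_of_pow_prime_eq_one hr, cycleType_of_pow_prime_eq_one hs]
  rw [card_support_of_involution hr, card_support_of_involution hs] at h
  rw [Nat.eq_of_mul_eq_mul_left two_pos h]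

variable (α) in
/-- The elements of order at most two in the alternating group. -/
def evenInvolutions : Set (Perm α) :=
  {s | s ^ 2 = 1 ∧ sign s = 1}

theorem four_dvd_card_support {s : Perm α} (hs : s ∈ evenInvolutions α) :
    4 ∣ s.support.card := by
  have even : Even s.cycleType.card := by
    have h := hs.2
    rw [sign_of_cycleType', cycleType_of_pow_prime_eq_one hs.1] at h
    simpa [neg_one_pow_eq_one_iff_even] using h
  rw [card_support_of_involution hs.1]
  exact mul_dvd_mul_left 2 even.two_dvd

theorem exists_mul_swap_mem_evenInvolutions {r : Perm α} (hr : r ^ 2 = 1) (hodd : sign r = -1) :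
    ∃ a b, a ≠ b ∧ Commute r (swap a b) ∧ r * swap a b ∈ evenInvolutions α := by
  obtain ⟨a, ha⟩ : ∃ a, r a ≠ a := by
    by_contra! h
    rw [show r = 1 from Perm.ext h] at hodd
    simp at hodd
  have hra : r (r a) = a := by rw [← mul_apply, ← sq, hr, one_apply]
  have comm : Commute r (swap a (r a)) := by
    rw [Commute, SemiconjBy, mul_swap_eq_swap_mul, hra, swap_comm]
  refine ⟨a, r a, ha.symm, comm, ?_, by simp [hodd, sign_swap ha.symm]⟩
  rw [comm.mul_pow, hr, sq, swap_mul_self, one_mul]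

theorem swap_mul_swap_mem_evenInvolutions {a b c d : α} (hab : a ≠ b) (hcd : c ≠ d)
    (hc : c ∉ ({a, b} : Finset α)) (hd : d ∉ ({a, b} : Finset α)) :
    swap a b * swap c d ∈ evenInvolutions α := by
  have comm : Commute (swap a b) (swap c d) := by
    rw [Commute, SemiconjBy, mul_swap_eq_swap_mul, swap_apply_of_ne_of_ne, swap_apply_of_ne_of_ne]
      <;> grind
  refine ⟨?_, by simp [hab, hcd]⟩
  rw [comm.mul_pow, sq, sq, swap_mul_self, swap_mul_self, one_mul]

theorem mem_evenInvolutions_pow_four (hα : 6 ≤ Fintype.card α) {σ : Perm α} (hσ : sign σ = 1) :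
    σ ∈ evenInvolutions α ^ 4 := by
  obtain ⟨r, s, hr, hs, rfl⟩ := exists_involutions_mul_eq σ
  rw [map_mul] at hσ
  rcases Int.units_eq_one_or (sign r) with hsign | hsign
  · have hr' : r ∈ evenInvolutions α := ⟨hr, hsign⟩
    have hs' : s ∈ evenInvolutions α := ⟨hs, by rwa [hsign, one_mul] at hσ⟩
    refine Set.pow_subset_pow_right (m := 2) (by simp [evenInvolutions]) (by norm_num) ?_
    exact sq (evenInvolutions α) ▸ Set.mul_mem_mul hr' hs'
  · -- Both factors are odd: correct each by a transposition of its own, and both by a common one.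
    obtain ⟨a, b, hab, -, hr'⟩ := exists_mul_swap_mem_evenInvolutions hr hsign
    obtain ⟨c, d, hcd, comm, hs'⟩ := exists_mul_swap_mem_evenInvolutions hs
      (by simpa [hsign, neg_eq_iff_eq_neg] using hσ)
    obtain ⟨x, hx, y, hy, hxy⟩ : ∃ x ∈ ({a, b, c, d} : Finset α)ᶜ,
        ∃ y ∈ ({a, b, c, d} : Finset α)ᶜ, x ≠ y := by
      refine Finset.one_lt_card.1 ?_
      have := Finset.card_le_four (a := a) (b := b) (c := c) (d := d)
      rw [Finset.card_compl]
      omega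
    simp only [Finset.mem_compl, Finset.mem_insert, Finset.mem_singleton, not_or] at hx hy
    have hab' : swap a b * swap x y ∈ evenInvolutions α :=
      swap_mul_swap_mem_evenInvolutions hab hxy (by simp [hx]) (by simp [hy])
    have hcd' : swap x y * swap c d ∈ evenInvolutions α :=
      swap_mul_swap_mem_evenInvolutions hxy hcd (by simp [Ne.symm hx.2.2.1, Ne.symm hy.2.2.1])
        (by simp [Ne.symm hx.2.2.2, Ne.symm hy.2.2.2])
    have factorization : r * s =
        r * swap a b * (swap a b * swap x y) * (swap x y * swap c d) * (s * swap c d) := by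
      rw [comm.eq]
      simp [mul_assoc]
    rw [factorization, pow_succ, pow_succ, sq]
    exact Set.mul_mem_mul (Set.mul_mem_mul (Set.mul_mem_mul hr' hab') hcd') hs'

end Involutions

/-- The permutation of `α × β` acting on the fibre over `a` by the given `u a`. -/
def fiberwise (α β : Type*) : (α → Perm β) →* Perm (α × β) where
  toFun := prodCongrRight
  map_one' := rfl
  map_mul' _ _ := rfl

section Fiberwise

variable {α β : Type*}

@[simp]
theorem fiberwise_apply (u : α → Perm β) (p : α × β) : fiberwise α β u p = (p.1, u p.1 p.2) :=
  rfl

variable [Fintype α] [Fintype β] [DecidableEq α] [DecidableEq β]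

theorem sign_fiberwise (u : α → Perm β) : sign (fiberwise α β u) = ∏ a, sign (u a) :=
  sign_prodCongrRight u

theorem card_support_fiberwise (u : α → Perm β) :
    (fiberwise α β u).support.card = ∑ a, (u a).support.card := by
  have : (fiberwise α β u).support =
      (Finset.univ.sigma fun a => (u a).support).map (sigmaEquivProd α β).toEmbedding := by
    ext ⟨a, b⟩
    simp [Prod.ext_iff]
  rw [this, Finset.card_map, Finset.card_sigma]

end Fiberwise

theorem card_support_viaEmbedding {α β : Type*} [Fintype α] [DecidableEq α] [Fintype β]
    [DecidableEq β] (σ : Perm α) (e : α ↪ β) :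
    (σ.viaEmbedding e).support.card = σ.support.card := by
  classical
  rw [viaEmbedding]
  convert card_support_extend_domain _

theorem sign_viaEmbedding {α β : Type*} [Fintype α] [DecidableEq α] [Fintype β]
    [DecidableEq β] (σ : Perm α) (e : α ↪ β) : sign (σ.viaEmbedding e) = sign σ := by
  classical
  rw [viaEmbedding, sign_extendDomain]

theorem exists_symmDiff_eq_of_card {ι : Type*} [DecidableEq ι] [Fintype ι] {V : Finset ι} {j m : ℕ}
    (hV : V.card = 2 * j) (hj : j ≤ m) (hm : j + m ≤ Fintype.card ι) :
    ∃ U U' : Finset ι, U.card = m ∧ U'.card = m ∧ symmDiff U U' = V := by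
  obtain ⟨V₁, hV₁, hV₁card⟩ := Finset.exists_subset_card_eq (s := V) (n := j) (by omega)
  obtain ⟨C, hC, hCcard⟩ := Finset.exists_subset_card_eq (s := Vᶜ) (n := m - j)
    (by rw [Finset.card_compl]; omega)
  have disjoint : Disjoint V C := Finset.subset_compl_iff_disjoint_left.1 hC
  refine ⟨V₁ ∪ C, V \ V₁ ∪ C, ?_, ?_, ?_⟩
  · rw [Finset.card_union_of_disjoint (disjoint.mono_left hV₁)]
    omega
  · rw [Finset.card_union_of_disjoint (disjoint.mono_left Finset.sdiff_subset),
      Finset.card_sdiff_of_subset hV₁]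
    omega
  · ext x
    have : x ∈ V₁ → x ∈ V := fun h => hV₁ h
    have : x ∈ V → x ∉ C := fun h => Finset.disjoint_left.1 disjoint h
    simp only [Finset.mem_symmDiff, Finset.mem_union, Finset.mem_sdiff]
    tauto

theorem mem_conjugatesOf_pow_of_isConj {G : Type*} [Group G] {w x y : G} {n : ℕ}
    (hxy : IsConj x y) (hx : x ∈ conjugatesOf w ^ n) : y ∈ conjugatesOf w ^ n := by
  obtain ⟨g, rfl⟩ := isConj_iff.1 hxy
  have image_subset : MulAut.conj g '' conjugatesOf w ⊆ conjugatesOf w := by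
    rintro _ ⟨z, hz, rfl⟩
    exact IsConj.trans hz (isConj_iff.2 ⟨g, rfl⟩)
  refine Set.pow_subset_pow_left image_subset ?_
  rw [← Set.image_pow]
  exact ⟨x, hx, rfl⟩

section Width

variable {α : Type*} [Fintype α]

variable (α) in
/-- Product of the transpositions swapping the two points of each pair in `U`, for a fixed choice of
`n / 2` disjoint pairs among `n` points. -/
noncomputable def pairFlips (U : Finset (Fin (Fintype.card α / 2))) : Perm α :=
  (fiberwise _ Bool fun i => if i ∈ U then boolNot else 1).viaEmbedding
    (Classical.choice (Function.Embedding.nonempty_of_card_le (by simp; omega)))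

theorem pairFlips_mul (U V : Finset (Fin (Fintype.card α / 2))) :
    pairFlips α U * pairFlips α V = pairFlips α (symmDiff U V) := by
  simp only [pairFlips, ← viaEmbeddingHom_apply, ← map_mul]
  congr 2
  funext i
  have boolNot_mul_self : boolNot * boolNot = 1 := by decide
  by_cases hU : i ∈ U <;> by_cases hV : i ∈ V <;>
    simp [Finset.mem_symmDiff, hU, hV, boolNot_mul_self]

theorem pairFlips_sq (U : Finset (Fin (Fintype.card α / 2))) : pairFlips α U ^ 2 = 1 := by
  rw [sq, pairFlips_mul, symmDiff_self, pairFlips, ← viaEmbeddingHom_apply]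
  simp [← Pi.one_def]

variable [DecidableEq α]

theorem card_support_pairFlips (U : Finset (Fin (Fintype.card α / 2))) :
    (pairFlips α U).support.card = 2 * U.card := by
  have card_support_not : (boolNot : Perm Bool).support.card = 2 := by decide
  rw [pairFlips, card_support_viaEmbedding, card_support_fiberwise]
  simp [apply_ite, card_support_not, mul_comm]

theorem evenInvolutions_subset_conjugatesOf_pow {w : Perm α} {m : ℕ} (hw : w ^ 2 = 1)
    (hwm : w.support.card = 2 * m) (hm : 4 * m ≤ Fintype.card α) (hm' : Fintype.card α ≤ 8 * m) :
    evenInvolutions α ⊆ conjugatesOf w ^ 4 := by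
  have conj_pairFlips {U} (hU : U.card = m) : pairFlips α U ∈ conjugatesOf w :=
    isConj_of_involutions hw (pairFlips_sq U) (by rw [card_support_pairFlips, hU, hwm])
  have pairFlips_mem {V : Finset (Fin (Fintype.card α / 2))} {j : ℕ} (hV : V.card = 2 * j)
      (hj : 2 * j ≤ 2 * m) : pairFlips α V ∈ conjugatesOf w ^ 2 := by
    obtain ⟨U, U', hU, hU', rfl⟩ := exists_symmDiff_eq_of_card (m := m) hV (by omega)
      (by rw [Fintype.card_fin]; omega)
    rw [← pairFlips_mul, sq]
    exact Set.mul_mem_mul (conj_pairFlips hU) (conj_pairFlips hU')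
  intro s hs
  obtain ⟨j, hj⟩ := four_dvd_card_support hs
  have hjα : 4 * j ≤ Fintype.card α := hj ▸ s.support.card_le_univ
  obtain ⟨V, -, hV⟩ := Finset.exists_subset_card_eq
    (s := (Finset.univ : Finset (Fin (Fintype.card α / 2)))) (n := 2 * j) (by simp; omega)
  obtain ⟨V₁, hV₁, hV₁card⟩ := Finset.exists_subset_card_eq (s := V) (n := 2 * (j / 2)) (by omega)
  have hV₂card : (V \ V₁).card = 2 * (j - j / 2) := by
    rw [Finset.card_sdiff_of_subset hV₁]
    omega
  have pairFlips_V_mem : pairFlips α V ∈ conjugatesOf w ^ 4 := by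
    have : symmDiff V₁ (V \ V₁) = V := by
      rw [symmDiff_sdiff_eq_sup, sup_eq_right]
      exact hV₁
    rw [← this, ← pairFlips_mul, show 4 = 2 + 2 from rfl, pow_add]
    exact Set.mul_mem_mul (pairFlips_mem hV₁card (by omega)) (pairFlips_mem hV₂card (by omega))
  refine mem_conjugatesOf_pow_of_isConj (isConj_of_involutions (pairFlips_sq V) hs.1 ?_)
    pairFlips_V_mem
  rw [card_support_pairFlips, hV, hj]
  omega

theorem mem_conjugatesOf_pow {w π : alternatingGroup α} {m : ℕ} (hw : w ^ 2 = 1)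
    (hwm : (w : Perm α).support.card = 2 * m) (hα : 6 ≤ Fintype.card α)
    (hm : 4 * m ≤ Fintype.card α) (hm' : Fintype.card α ≤ 8 * m) : π ∈ conjugatesOf w ^ 16 := by
  have conjugatesOf_coe :
      conjugatesOf (w : Perm α) = (alternatingGroup α).subtype '' conjugatesOf w := by
    refine Set.Subset.antisymm (fun x hx => ?_) ?_
    · have : x ∈ alternatingGroup α := by
        obtain ⟨g, rfl⟩ := isConj_iff.1 hx
        exact alternatingGroup.normal.conj_mem _ w.2 g
      exact ⟨⟨x, this⟩, alternatingGroup.isConj_of hx (by omega), rfl⟩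
    · rintro _ ⟨x, hx, rfl⟩
      exact (alternatingGroup α).subtype.map_isConj hx
  have h : (π : Perm α) ∈ conjugatesOf (w : Perm α) ^ 16 :=
    pow_mul (conjugatesOf (w : Perm α)) 4 4 ▸ Set.pow_subset_pow_left
      (evenInvolutions_subset_conjugatesOf_pow (by exact_mod_cast hw) hwm hm hm')
      (mem_evenInvolutions_pow_four hα π.2)
  rw [conjugatesOf_coe, ← Set.image_pow] at h
  exact (alternatingGroup α).subtype_injective.mem_set_image.1 h

end Width

/-! ### Collapsing elements in alternating groups -/

section TwistedSwap

variable {Y : Type*}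

/-- The involution of three copies of `Y` that identifies the first copy with the second by `σ` and
fixes the third. -/
def twistedSwap (σ : Perm Y) : Perm (Fin 3 × Y) :=
  fiberwise (Fin 3) Y ![σ⁻¹, σ, 1] * prodCongrLeft fun _ => swap 0 1

theorem twistedSwap_mul_twistedSwap_one (σ : Perm Y) :
    twistedSwap σ * twistedSwap 1 = fiberwise (Fin 3) Y ![σ⁻¹, σ, 1] := by
  ext ⟨i, y⟩ : 1
  fin_cases i <;> simp [twistedSwap, swap_apply_of_ne_of_ne]

theorem braidRel_prodCongrLeft_twistedSwap (σ : Perm Y) :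
    BraidRel (prodCongrLeft fun _ => swap 1 2) (twistedSwap σ) := by
  ext ⟨i, y⟩ : 1
  fin_cases i <;> simp [twistedSwap, swap_apply_of_ne_of_ne]

theorem commutatorElement_twistedSwap (σ τ : Perm Y) :
    ⁅twistedSwap σ * twistedSwap 1, twistedSwap τ * twistedSwap 1⁆ =
      fiberwise (Fin 3) Y ![⁅σ⁻¹, τ⁻¹⁆, ⁅σ, τ⁆, 1] := by
  simp only [twistedSwap_mul_twistedSwap_one, ← map_commutatorElement]
  congr 1
  ext i : 1
  fin_cases i <;> simp [commutatorElement_def]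

theorem isCollapsing_twistedSwap {I : Set ℕ} {α β ς : Perm Y} {v : Perm (Fin 3 × Y)}
    (comm : ∀ i ∈ I, Commute α (ς ^ i * β * (ς ^ i)⁻¹))
    (comm' : ∀ i ∈ I, Commute α ((ς ^ i)⁻¹ * β * ς ^ i))
    (braid_comm : BraidRel (fiberwise (Fin 3) Y ![⁅α⁻¹, β⁻¹⁆, ⁅α, β⁆, 1]) v)
    (braid_v : BraidRel v (prodCongrLeft fun _ => swap 1 2)) :
    IsCollapsing I (twistedSwap 1) (twistedSwap α) (twistedSwap β) (twistedSwap ς)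
      (prodCongrLeft fun _ => swap 1 2) v where
  commute i hi := by
    simp only [twistedSwap_mul_twistedSwap_one, ← map_pow, ← map_inv, ← map_mul]
    refine Commute.map (Pi.commute_iff.2 fun j => ?_) _
    fin_cases j
    · simpa [mul_assoc] using (comm' i hi).inv_inv
    · simpa using comm i hi
    · simp
  braid_comm := by rwa [commutatorElement_twistedSwap]
  braid_v := braid_v
  braid_f := braidRel_prodCongrLeft_twistedSwap 1
  braid_a := braidRel_prodCongrLeft_twistedSwap α
  braid_b := braidRel_prodCongrLeft_twistedSwap β
  braid_t := braidRel_prodCongrLeft_twistedSwap ς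

end TwistedSwap

section BitStrings

variable (k : ℕ)

/-- Cyclic bit strings of length `k`, together with a separate control bit. -/
abbrev BitState : Type :=
  (ZMod k → Bool) × Bool

namespace BitState

/-- Negate the bit at position `0`. -/
def flipZero : Perm (BitState k) :=
  prodCongrLeft fun _ => ⟨fun y => Function.update y 0 !(y 0), fun y => Function.update y 0 !(y 0),
    fun y => by simp, fun y => by simp⟩

variable {k}

/-- Add the bit at position `j` to the control bit. -/
def addBit (j : ZMod k) : Perm (BitState k) :=
  fiberwise (ZMod k → Bool) Bool fun y => if y j then boolNot else 1

variable (k) in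
/-- Move every bit to the next position. -/
def shift : Perm (BitState k) :=
  prodCongrLeft fun _ => arrowCongr (Equiv.addRight 1) (Equiv.refl Bool)

variable (k) in
/-- Negate the control bit. -/
def flipControl : Perm (BitState k) :=
  prodCongrRight fun _ => boolNot

variable (k) in
theorem inv_flipZero : (flipZero k)⁻¹ = flipZero k :=
  rfl

theorem inv_addBit (j : ZMod k) : (addBit j)⁻¹ = addBit j := by
  rw [inv_eq_iff_mul_eq_one]
  ext ⟨y, c⟩ : 1
  cases h : y j <;> simp [addBit, h]

theorem commute_flipZero_addBit {j : ZMod k} (hj : j ≠ 0) : Commute (flipZero k) (addBit j) := by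
  ext ⟨y, c⟩ : 1
  cases h : y j <;> simp [flipZero, addBit, hj, h]

theorem commutatorElement_flipZero_addBit_zero :
    ⁅flipZero k, addBit (0 : ZMod k)⁆ = flipControl k := by
  rw [commutatorElement_def, inv_flipZero, inv_addBit]
  ext ⟨y, c⟩ : 1
  cases h : y 0 <;> simp [flipZero, addBit, flipControl, h]

theorem shift_conj_addBit (j : ZMod k) : shift k * addBit j * (shift k)⁻¹ = addBit (j + 1) := by
  rw [mul_inv_eq_iff_eq_mul]
  ext ⟨y, c⟩ : 1
  simp [shift, addBit]

theorem shift_pow_conj_addBit (i : ℕ) (j : ZMod k) :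
    shift k ^ i * addBit j * (shift k ^ i)⁻¹ = addBit (j + (i : ZMod k)) := by
  induction i generalizing j with
  | zero => simp
  | succ i ih =>
    calc shift k ^ (i + 1) * addBit j * (shift k ^ (i + 1))⁻¹
        = shift k ^ i * (shift k * addBit j * (shift k)⁻¹) * (shift k ^ i)⁻¹ := by group
      _ = addBit (j + ((i + 1 : ℕ) : ZMod k)) := by
          rw [shift_conj_addBit, ih, add_assoc, Nat.cast_succ, add_comm 1]

variable (k) in
/-- Exchange layer `0` or layer `1`, depending on the control bit, with layer `2`. -/
def controlledSwap : Perm (Fin 3 × BitState k) :=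
  prodCongrLeft fun s => swap (bif s.2 then 1 else 0) 2

theorem commutatorElement_twistedSwap_flipZero_addBit :
    ⁅twistedSwap (flipZero k) * twistedSwap 1, twistedSwap (addBit (0 : ZMod k)) * twistedSwap 1⁆ =
      fiberwise (Fin 3) (BitState k) ![flipControl k, flipControl k, 1] := by
  rw [commutatorElement_twistedSwap, inv_flipZero, inv_addBit,
    commutatorElement_flipZero_addBit_zero]

theorem isCollapsing : IsCollapsing (Set.Ioo 0 k) (twistedSwap 1)
    (twistedSwap (flipZero k)) (twistedSwap (addBit (0 : ZMod k))) (twistedSwap (shift k))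
    (prodCongrLeft fun _ => swap 1 2) (controlledSwap k) := by
  have cast_ne_zero {i : ℕ} (hi : i ∈ Set.Ioo 0 k) : (i : ZMod k) ≠ 0 := by
    rw [Ne, ZMod.natCast_eq_zero_iff]
    exact Nat.not_dvd_of_pos_of_lt hi.1 hi.2
  refine isCollapsing_twistedSwap (fun i hi => ?_) (fun i hi => ?_) ?_ ?_
  · rw [shift_pow_conj_addBit, zero_add]
    exact commute_flipZero_addBit (cast_ne_zero hi)
  · have : (shift k ^ i)⁻¹ * addBit (0 : ZMod k) * shift k ^ i = addBit (-(i : ZMod k)) := by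
      rw [← neg_add_cancel (i : ZMod k), ← shift_pow_conj_addBit]
      group
    rw [this]
    exact commute_flipZero_addBit (neg_ne_zero.2 (cast_ne_zero hi))
  · rw [← commutatorElement_twistedSwap, commutatorElement_twistedSwap_flipZero_addBit]
    ext ⟨i, y, c⟩ : 1
    fin_cases i <;> cases c <;>
      simp [controlledSwap, flipControl, swap_apply_of_ne_of_ne]
  · ext ⟨i, y, c⟩ : 1
    fin_cases i <;> cases c <;> simp [controlledSwap, swap_apply_of_ne_of_ne]

theorem commutatorElement_twistedSwap_sq : ⁅twistedSwap (flipZero k) * twistedSwap 1,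
    twistedSwap (addBit (0 : ZMod k)) * twistedSwap 1⁆ ^ 2 = 1 := by
  rw [commutatorElement_twistedSwap_flipZero_addBit]
  ext ⟨i, y, c⟩ : 1
  fin_cases i <;> simp [sq, flipControl]

theorem card_support_commutatorElement_twistedSwap [NeZero k] :
    ⁅twistedSwap (flipZero k) * twistedSwap 1,
      twistedSwap (addBit (0 : ZMod k)) * twistedSwap 1⁆.support.card = 2 ^ (k + 2) := by
  have card_support_flipControl : (flipControl k).support.card = 2 ^ (k + 1) := by
    have : (flipControl k).support = Finset.univ := by
      ext ⟨y, c⟩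
      simp [flipControl]
    rw [this, Finset.card_univ]
    simp [BitState, ZMod.card, pow_succ]
  rw [commutatorElement_twistedSwap_flipZero_addBit, card_support_fiberwise, Fin.sum_univ_three]
  calc _ = (flipControl k).support.card + (flipControl k).support.card + 0 := by simp
    _ = 2 ^ (k + 2) := by rw [card_support_flipControl]; ring

theorem card_layers [NeZero k] : Fintype.card (Fin 3 × BitState k) = 3 * 2 ^ (k + 1) := by
  simp [BitState, ZMod.card, pow_succ]

end BitState

end BitStrings

section AlternatingGroup

variable {α : Type*} [Fintype α] [DecidableEq α]

theorem exists_hom_alternatingGroup {X : Type*} [Fintype X] [DecidableEq X]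
    (h : 2 * Fintype.card X ≤ Fintype.card α) :
    ∃ Ψ : Perm X →* alternatingGroup α,
      ∀ σ, (Ψ σ : Perm α).support.card = 2 * σ.support.card := by
  obtain ⟨e⟩ : Nonempty (Fin 2 × X ↪ α) :=
    Function.Embedding.nonempty_of_card_le (by simpa using h)
  -- Acting in parallel on two copies of `X` makes every permutation even.
  let double : Perm X →* Perm α :=
    (viaEmbeddingHom e).comp ((fiberwise (Fin 2) X).comp (Pi.constMonoidHom (Fin 2) (Perm X)))
  have double_mem (σ : Perm X) : double σ ∈ alternatingGroup α := by
    change sign (viaEmbedding (fiberwise (Fin 2) X fun _ => σ) e) = 1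
    simp [sign_viaEmbedding, sign_fiberwise, Int.units_sq]
  refine ⟨double.codRestrict _ double_mem, fun σ => ?_⟩
  change (viaEmbedding (fiberwise (Fin 2) X fun _ => σ) e).support.card = _
  simp [card_support_viaEmbedding, card_support_fiberwise]

variable (α) in
theorem exists_isCollapsing_alternatingGroup :
    ∃ f a b t x v : alternatingGroup α,
      IsCollapsing (Set.Ioo 0 (Nat.log 2 (Fintype.card α) - 4)) f a b t x v ∧
        (32 ≤ Fintype.card α → ∀ π, π ∈ conjugatesOf ⁅a * f, b * f⁆ ^ 16) := by
  by_cases hα : 32 ≤ Fintype.card α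
  swap
  · exact ⟨1, 1, 1, 1, 1, 1, .one, fun h => absurd h hα⟩
  obtain ⟨k, hk⟩ : ∃ k, Nat.log 2 (Fintype.card α) = k + 1 + 4 :=
    Nat.exists_eq_add_of_le' (m := 5) (Nat.le_log_of_pow_le one_lt_two hα)
  have lower : 4 * 2 ^ (k + 1 + 2) ≤ Fintype.card α := by
    calc 4 * 2 ^ (k + 1 + 2) = 2 ^ (k + 1 + 4) := by ring
      _ ≤ Fintype.card α := hk ▸ Nat.pow_log_le_self 2 (by omega)
  have upper : Fintype.card α ≤ 8 * 2 ^ (k + 1 + 2) := by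
    calc Fintype.card α ≤ 2 ^ (k + 1 + 4 + 1) := hk ▸ (Nat.lt_pow_succ_log_self one_lt_two _).le
      _ = 8 * 2 ^ (k + 1 + 2) := by ring
  obtain ⟨Ψ, hΨ⟩ := exists_hom_alternatingGroup (α := α) (X := Fin 3 × BitState (k + 1)) <| by
    calc 2 * Fintype.card (Fin 3 × BitState (k + 1)) = 3 * 2 ^ (k + 1 + 2) := by
          rw [BitState.card_layers]; ring
      _ ≤ Fintype.card α := by omega
  rw [hk, Nat.add_sub_cancel]
  refine ⟨_, _, _, _, _, _, BitState.isCollapsing.map Ψ, fun _ π => ?_⟩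
  simp only [← map_mul, ← map_commutatorElement]
  refine mem_conjugatesOf_pow ?_ ?_ (by omega) lower upper
  · rw [← map_pow, BitState.commutatorElement_twistedSwap_sq, map_one]
  · rw [hΨ, BitState.card_support_commutatorElement_twistedSwap]

end AlternatingGroup

/-! ### Reduced products -/

section EventuallyOne

variable {ι : Type*} (l : Filter ι) (A : ι → Type*) [∀ i, Group (A i)]

/-- The families that are trivial eventually along `l`; the quotient by this subgroup is the reduced
product of the groups `A i`. For `l = cofinite` these are the finitely supported families. -/
def eventuallyOne : Subgroup (∀ i, A i) where
  carrier := {x | ∀ᶠ i in l, x i = 1}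
  one_mem' := Eventually.of_forall fun _ => rfl
  mul_mem' hx hy := (hx.and hy).mono fun i h => by simp [h.1, h.2]
  inv_mem' hx := hx.mono fun i h => by simp [h]

instance normal_eventuallyOne : (eventuallyOne l A).Normal where
  conj_mem _ hx _ := hx.mono fun i h => by simp [h]

variable {l A}

theorem mem_eventuallyOne {x : ∀ i, A i} : x ∈ eventuallyOne l A ↔ ∀ᶠ i in l, x i = 1 :=
  Iff.rfl

theorem mk_eventuallyOne_eq {x y : ∀ i, A i} (h : ∀ᶠ i in l, x i = y i) :
    QuotientGroup.mk' (eventuallyOne l A) x = QuotientGroup.mk' (eventuallyOne l A) y :=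
  QuotientGroup.eq.2 (mem_eventuallyOne.2 (h.mono fun i hi => by simp [hi]))

theorem isCollapsing_mk_eventuallyOne {k : ι → ℕ} (hk : Tendsto k l atTop)
    {f a b t x v : ∀ i, A i}
    (h : ∀ i, IsCollapsing (Set.Ioo 0 (k i)) (f i) (a i) (b i) (t i) (x i) (v i)) :
    letI mk := QuotientGroup.mk' (eventuallyOne l A)
    IsCollapsing (Set.Ioi 0) (mk f) (mk a) (mk b) (mk t) (mk x) (mk v) where
  commute n hn := by
    simp only [← map_mul, ← map_pow, ← map_inv, Commute, SemiconjBy]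
    exact mk_eventuallyOne_eq
      ((hk.eventually_gt_atTop n).mono fun i hi => ((h i).commute n ⟨hn, hi⟩).eq)
  braid_comm := by
    simp only [← map_mul, ← map_commutatorElement]
    exact BraidRel.map (.pi fun i => (h i).braid_comm) _
  braid_v := BraidRel.map (.pi fun i => (h i).braid_v) _
  braid_f := BraidRel.map (.pi fun i => (h i).braid_f) _
  braid_a := BraidRel.map (.pi fun i => (h i).braid_a) _
  braid_b := BraidRel.map (.pi fun i => (h i).braid_b) _
  braid_t := BraidRel.map (.pi fun i => (h i).braid_t) _

theorem mem_conjugatesOf_pow_pi {w x : ∀ i, A i} {n : ℕ}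
    (h : ∀ i, x i ∈ conjugatesOf (w i) ^ n) : x ∈ conjugatesOf w ^ n := by
  induction n generalizing x with
  | zero => exact funext h
  | succ n ih =>
    simp only [pow_succ, Set.mem_mul] at h
    choose y hy z hz hyz using h
    choose g hg using fun i => isConj_iff.1 (hz i)
    exact pow_succ (conjugatesOf w) n ▸
      Set.mem_mul.2 ⟨y, ih hy, z, isConj_iff.2 ⟨g, funext hg⟩, funext hyz⟩

theorem finiteQuotientFreeRadical_quotient_eventuallyOne {k : ι → ℕ} (hk : Tendsto k l atTop)
    {f a b t x v : ∀ i, A i}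
    (h : ∀ i, IsCollapsing (Set.Ioo 0 (k i)) (f i) (a i) (b i) (t i) (x i) (v i)) {n : ℕ}
    (width : ∀ᶠ i in l, ∀ y, y ∈ conjugatesOf ⁅a i * f i, b i * f i⁆ ^ n) :
    finiteQuotientFreeRadical ((∀ i, A i) ⧸ eventuallyOne l A) = ⊤ := by
  set mk := QuotientGroup.mk' (eventuallyOne l A)
  set R := finiteQuotientFreeRadical ((∀ i, A i) ⧸ eventuallyOne l A)
  set w : ∀ i, A i := ⁅a * f, b * f⁆
  have mk_w_mem : mk w ∈ R := by
    simpa only [w, map_commutatorElement, map_mul] using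
      (isCollapsing_mk_eventuallyOne hk h).commutatorElement_mem_finiteQuotientFreeRadical
  have conjugatesOf_pow_le : conjugatesOf w ^ n ⊆ R.comap mk :=
    Submonoid.pow_subset (S := (R.comap mk).toSubmonoid)
      (Group.conjugates_subset_normal (N := R.comap mk) mk_w_mem)
  rw [eq_top_iff]
  rintro z -
  obtain ⟨y, rfl⟩ := QuotientGroup.mk'_surjective _ z
  classical
  let y' (i : ι) : A i := if y i ∈ conjugatesOf (w i) ^ n then y i else w i ^ n
  have hy' : y' ∈ conjugatesOf w ^ n := mem_conjugatesOf_pow_pi fun i => by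
    dsimp only [y']
    split_ifs with hyi
    exacts [hyi, Set.pow_mem_pow mem_conjugatesOf_self]
  rw [mk_eventuallyOne_eq (y := y') (width.mono fun i hi => (if_pos (hi (y i))).symm)]
  exact conjugatesOf_pow_le hy'

end EventuallyOne

section Dense

variable {ι : Type*} {A : ι → Type*} [∀ i, TopologicalSpace (A i)] [∀ i, DiscreteTopology (A i)]

theorem exists_mem_eqOn_of_dense {S : Set (∀ i, A i)} (hS : Dense S) {s : Set ι} (hs : s.Finite)
    (y : ∀ i, A i) : ∃ x ∈ S, ∀ i ∈ s, x i = y i := by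
  obtain ⟨x, hxS, hx⟩ := hS.exists_mem_open
    (isOpen_set_pi hs fun i _ => isOpen_discrete {y i}) ⟨y, fun i _ => rfl⟩
  exact ⟨x, hxS, hx⟩

variable [∀ i, Group (A i)]

theorem normal_comap_mulSingle_of_dense [DecidableEq ι] {G : Subgroup (∀ i, A i)}
    (hG : Dense (G : Set (∀ i, A i))) (i : ι) : (G.comap (MonoidHom.mulSingle A i)).Normal where
  conj_mem b hb c := by
    obtain ⟨g, hg, hgi⟩ := exists_mem_eqOn_of_dense hG (Set.finite_singleton i) (Pi.mulSingle i c)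
    have : MonoidHom.mulSingle A i (c * b * c⁻¹) = g * Pi.mulSingle i b * g⁻¹ := by
      ext j
      obtain rfl | hj := eq_or_ne j i
      · simp [hgi j rfl]
      · simp [hj]
    exact Subgroup.mem_comap.2 (this ▸ mul_mem (mul_mem hg hb) (inv_mem hg))

theorem mulSingle_commutatorElement_mem_of_dense [DecidableEq ι] {G : Subgroup (∀ i, A i)}
    (hG : Dense (G : Set (∀ i, A i))) {h : ∀ i, A i} (hhG : h ∈ G)
    (hh : h ∈ eventuallyOne cofinite A) (i : ι) (b : A i) : Pi.mulSingle i ⁅b, h i⁆ ∈ G := by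
  obtain ⟨g, hg, hgh⟩ := exists_mem_eqOn_of_dense hG
    (Set.Finite.union (mem_eventuallyOne.1 hh) (Set.finite_singleton i)) (Pi.mulSingle i b)
  have : Pi.mulSingle i ⁅b, h i⁆ = ⁅g, h⁆ := by
    ext j
    change _ = ⁅g j, h j⁆
    obtain rfl | hji := eq_or_ne j i
    · simp [hgh j (.inr rfl)]
    · by_cases hj : h j = 1
      · simp [hji, hj]
      · simp [hji, hgh j (.inl hj)]
  rw [this]
  exact commutatorElement_mem hg hhG

theorem eventuallyOne_cofinite_le_of_dense [∀ i, IsSimpleGroup (A i)]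
    (hcenter : ∀ i, Subgroup.center (A i) = ⊥) {G : Subgroup (∀ i, A i)}
    (hG : Dense (G : Set (∀ i, A i)))
    (h : ∀ i, ∃ g ∈ G, g ∈ eventuallyOne cofinite A ∧ g i ≠ 1) :
    eventuallyOne cofinite A ≤ G := by
  classical
  have comap_eq_top (i : ι) : G.comap (MonoidHom.mulSingle A i) = ⊤ := by
    obtain ⟨g, hgG, hg, hgi⟩ := h i
    obtain ⟨b, hb⟩ : ∃ b, ⁅b, g i⁆ ≠ 1 := by
      by_contra! hcomm
      have : g i ∈ Subgroup.center (A i) := Subgroup.mem_center_iff.2 fun b =>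
        commutatorElement_eq_one_iff_mul_comm.1 (hcomm b)
      exact hgi (Subgroup.mem_bot.1 (hcenter i ▸ this))
    refine ((normal_comap_mulSingle_of_dense hG i).eq_bot_or_eq_top).resolve_left fun hbot => hb ?_
    rw [← Subgroup.mem_bot, ← hbot]
    exact mulSingle_commutatorElement_mem_of_dense hG hgG hg i b
  intro x hx
  have hfin : {i | x i ≠ 1}.Finite := mem_eventuallyOne.1 hx
  refine Submonoid.pi_mem_of_mulSingle_mem_aux hfin.toFinset x (fun i hi => ?_) fun i _ => ?_
  · simpa using hi
  · exact Subgroup.mem_comap.1 (comap_eq_top i ▸ Subgroup.mem_top (x i))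

end Dense

section Extension

variable {ι : Type*} {A : ι → Type*} [∀ i, Group (A i)]

open Classical in
variable (A) in
/-- Replace the coordinates outside `s` by `1`. -/
noncomputable def truncate (s : Set ι) : (∀ i, A i) →* ∀ i, A i where
  toFun x := s.piecewise x (1 : ∀ i, A i)
  map_one' := s.piecewise_same (1 : ∀ i, A i)
  map_mul' x y := by rw [← Set.piecewise_mul, mul_one]

theorem truncate_apply_of_mem {s : Set ι} {i : ι} (hi : i ∈ s) (x : ∀ i, A i) :
    truncate A s x i = x i :=
  if_pos hi

theorem truncate_apply_of_notMem {s : Set ι} {i : ι} (hi : i ∉ s) (x : ∀ i, A i) :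
    truncate A s x i = 1 :=
  if_neg hi

theorem truncate_mul_truncate_compl (s : Set ι) (x : ∀ i, A i) :
    truncate A s x * truncate A sᶜ x = x := by
  ext i
  by_cases hi : i ∈ s
  · simp [truncate_apply_of_mem hi, truncate_apply_of_notMem (Set.notMem_compl_iff.2 hi)]
  · simp [truncate_apply_of_notMem hi, truncate_apply_of_mem (Set.mem_compl hi)]

theorem truncate_mem_eventuallyOne {s : Set ι} (hs : s.Finite) (x : ∀ i, A i) :
    truncate A s x ∈ eventuallyOne cofinite A :=
  hs.eventually_cofinite_notMem.mono fun _ hi => truncate_apply_of_notMem hi x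

theorem isOpen_preimage_of_truncate_eq [∀ i, TopologicalSpace (A i)]
    [∀ i, DiscreteTopology (A i)] {Q : Type*} {g : (∀ i, A i) → Q} {s : Set ι} (hs : s.Finite)
    (hg : ∀ x y, truncate A s x = truncate A s y → g x = g y) (U : Set Q) :
    IsOpen (g ⁻¹' U) := by
  refine isOpen_iff_mem_nhds.2 fun x hx => ?_
  have box : IsOpen (s.pi fun i => ({x i} : Set (A i))) :=
    isOpen_set_pi hs fun i _ => isOpen_discrete _
  refine mem_of_superset (box.mem_nhds fun i _ => rfl) fun y hy => ?_
  have : g y = g x := hg y x <| funext fun i => by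
    by_cases hi : i ∈ s
    · rw [truncate_apply_of_mem hi, truncate_apply_of_mem hi, hy i hi]
    · rw [truncate_apply_of_notMem hi, truncate_apply_of_notMem hi]
  simpa [this] using hx

variable {G : Subgroup (∀ i, A i)} {Q : Type*} [Group Q] {s : Set ι}

theorem map_eq_one_of_eventuallyOne (hG : eventuallyOne cofinite A ≤ G)
    (hs : ∀ i ∉ s, ∀ ψ : A i →* Q, ψ = 1) (φ : G →* Q) {x : G}
    (hx : (x : ∀ i, A i) ∈ eventuallyOne cofinite A) (hxs : ∀ i ∈ s, (x : ∀ i, A i) i = 1) :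
    φ x = 1 := by
  classical
  have mulSingle_mem (i : ι) (b : A i) : Pi.mulSingle i b ∈ G :=
    hG ((Set.finite_singleton i).eventually_cofinite_notMem.mono
      fun j hj => Pi.mulSingle_eq_of_ne hj b)
  suffices (x : ∀ i, A i) ∈ φ.ker.map G.subtype by
    obtain ⟨y, hy, hyx⟩ := this
    exact Subtype.ext hyx ▸ hy
  have hfin : {i | (x : ∀ i, A i) i ≠ 1}.Finite := mem_eventuallyOne.1 hx
  refine Submonoid.pi_mem_of_mulSingle_mem_aux hfin.toFinset _ (fun i hi => by simpa using hi)
    fun i hi => ?_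
  have hi : i ∉ s := fun his => hfin.mem_toFinset.1 hi (hxs i his)
  let ψ : A i →* Q := φ.comp ((MonoidHom.mulSingle A i).codRestrict G (mulSingle_mem i))
  exact ⟨⟨_, mulSingle_mem i _⟩, DFunLike.congr_fun (hs i hi ψ) _, rfl⟩

theorem map_eq_map_truncate {Q : Type} [Group Q] [Finite Q] (hG : eventuallyOne cofinite A ≤ G)
    (hquot : NoFiniteQuotients (G.map (QuotientGroup.mk' (eventuallyOne cofinite A))))
    (hsfin : s.Finite) (hs : ∀ i ∉ s, ∀ ψ : A i →* Q, ψ = 1) (φ : G →* Q) (x : G) :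
    φ x = φ ⟨truncate A s x, hG (truncate_mem_eventuallyOne hsfin (x : ∀ i, A i))⟩ := by
  have truncate_compl_mem (y : G) : truncate A sᶜ (y : ∀ i, A i) ∈ G := by
    rw [eq_inv_mul_of_mul_eq (truncate_mul_truncate_compl s (y : ∀ i, A i))]
    exact mul_mem (inv_mem (hG (truncate_mem_eventuallyOne hsfin _))) y.2
  let ψ : G →* Q :=
    φ.comp (((truncate A sᶜ).comp G.subtype).codRestrict G truncate_compl_mem)
  have hψ : ψ = 1 := by
    refine hquot.eq_one_of_ker_le (MonoidHom.subgroupMap_surjective _ G) fun y hy => ?_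
    have hy : (y : ∀ i, A i) ∈ eventuallyOne cofinite A :=
      (QuotientGroup.eq_one_iff _).1 (congrArg Subtype.val hy)
    refine map_eq_one_of_eventuallyOne hG hs φ ((mem_eventuallyOne.1 hy).mono fun i hi => ?_)
      fun i hi => truncate_apply_of_notMem (Set.notMem_compl_iff.2 hi) _
    by_cases his : i ∈ sᶜ
    · exact (truncate_apply_of_mem his _).trans hi
    · exact truncate_apply_of_notMem his _
  calc φ x = φ (⟨truncate A s x, hG (truncate_mem_eventuallyOne hsfin (x : ∀ i, A i))⟩ *
        ⟨truncate A sᶜ x, truncate_compl_mem x⟩) :=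
      congrArg φ (Subtype.ext (truncate_mul_truncate_compl s (x : ∀ i, A i)).symm)
    _ = _ * ψ x := map_mul φ _ _
    _ = _ := by rw [hψ, MonoidHom.one_apply, mul_one]

end Extension

theorem nonempty_profiniteCompletionWitness_pi {ι : Type} {A : ι → Type} [∀ i, Group (A i)]
    [∀ i, TopologicalSpace (A i)] [∀ i, DiscreteTopology (A i)] {G : Subgroup (∀ i, A i)}
    (hfg : G.FG) (hdense : Dense (G : Set (∀ i, A i))) (hG : eventuallyOne cofinite A ≤ G)
    (hquot : NoFiniteQuotients (G.map (QuotientGroup.mk' (eventuallyOne cofinite A))))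
    (hom_eq_one : ∀ (Q : Type) [Group Q] [Finite Q], ∀ᶠ i in cofinite, ∀ ψ : A i →* Q, ψ = 1) :
    Nonempty (ProfiniteCompletionWitness (∀ i, A i)) := by
  refine ⟨⟨G, (Group.fg_iff_subgroup_fg G).2 hfg, G.subtype, G.subtype_injective,
    by simpa [DenseRange] using hdense, fun Q _ _ φ => ?_⟩⟩
  set s := {i | ∀ ψ : A i →* Q, ψ = 1}ᶜ
  have hs : s.Finite := hom_eq_one Q
  let truncateG : (∀ i, A i) →* G :=
    (truncate A s).codRestrict G fun x => hG (truncate_mem_eventuallyOne hs x)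
  refine ⟨φ.comp truncateG, isOpen_preimage_of_truncate_eq hs fun x y hxy =>
    congrArg φ (Subtype.ext hxy), MonoidHom.ext fun x => ?_⟩
  exact (map_eq_map_truncate hG hquot hs (fun i hi => Set.notMem_compl_iff.1 hi) φ x).symm

/-! ### Products of alternating groups -/

section SmallSupport

variable {n : ℕ}

variable (n) in
/-- The square of the cycle `(0 1 … n + 4)`; unlike that cycle, it is even for every `n`. -/
def doubleRotation : alternatingGroup (Fin (n + 5)) :=
  ⟨Equiv.addRight 1 ^ 2, by rw [mem_alternatingGroup, map_pow, Int.units_sq]⟩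

theorem val_doubleRotation_pow_smul (j : ℕ) (x : Fin (n + 5)) :
    ((doubleRotation n ^ j) • x).val = (x.val + 2 * j) % (n + 5) := by
  have val_addRight_pow (k : ℕ) :
      ((Equiv.addRight (1 : Fin (n + 5)) ^ k) x).val = (x.val + k) % (n + 5) := by
    induction k with
    | zero => simp [Nat.mod_eq_of_lt x.isLt]
    | succ k ih => rw [pow_succ', mul_apply, coe_addRight, Fin.val_add, ih]; simp [add_assoc]
  rw [← val_addRight_pow, pow_mul]
  rfl

theorem doubleRotation_pow_card : doubleRotation n ^ (n + 5) = 1 := by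
  refine Subtype.ext (Perm.ext fun x => Fin.ext ?_)
  refine (val_doubleRotation_pow_smul (n + 5) x).trans ?_
  rw [Nat.add_mul_mod_self_right, Nat.mod_eq_of_lt x.isLt]
  rfl

variable (n) in
/-- The cycle `(0 1 2)`. -/
def threeCycle : alternatingGroup (Fin (n + 5)) :=
  ⟨swap 0 1 * swap 1 2, by simp [mem_alternatingGroup, Fin.ext_iff, Nat.mod_eq_of_lt]⟩

theorem threeCycle_smul (x : Fin (n + 5)) : threeCycle n • x = swap 0 1 (swap 1 2 x) :=
  rfl

theorem threeCycle_smul_one : threeCycle n • (1 : Fin (n + 5)) = 2 := by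
  rw [threeCycle_smul, swap_apply_left, swap_apply_of_ne_of_ne] <;>
    simp [Fin.ext_iff, Nat.mod_eq_of_lt]

theorem threeCycle_smul_zero : threeCycle n • (0 : Fin (n + 5)) = 1 := by
  rw [threeCycle_smul, swap_apply_of_ne_of_ne (x := 0), swap_apply_left] <;>
    simp [Fin.ext_iff, Nat.mod_eq_of_lt]

theorem threeCycle_smul_of_two_lt {x : Fin (n + 5)} (hx : 2 < x.val) : threeCycle n • x = x := by
  rw [threeCycle_smul, swap_apply_of_ne_of_ne (x := x), swap_apply_of_ne_of_ne] <;>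
    rintro rfl <;> simp [Nat.mod_eq_of_lt] at hx

theorem conj_smul_smul (g h : alternatingGroup (Fin (n + 5))) (x : Fin (n + 5)) :
    (g * h * g⁻¹) • g • x = g • h • x := by
  rw [mul_smul, inv_smul_smul, mul_smul]

theorem commute_threeCycle_conj {j : ℕ} (hj : 3 ≤ 2 * j) (hn : 2 * j + 2 < n + 5) :
    Commute (threeCycle n) (doubleRotation n ^ j * threeCycle n * (doubleRotation n ^ j)⁻¹) := by
  refine Subtype.ext (Disjoint.commute fun x => ?_).eq
  obtain ⟨y, rfl⟩ := MulAction.surjective (doubleRotation n ^ j) x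
  by_cases hy : 2 < y.val
  · right
    refine (conj_smul_smul _ _ y).trans ?_
    rw [threeCycle_smul_of_two_lt hy]
  · left
    refine threeCycle_smul_of_two_lt ?_
    rw [val_doubleRotation_pow_smul, Nat.mod_eq_of_lt (by omega)]
    omega

theorem not_commute_threeCycle_conj :
    ¬ Commute (threeCycle n) (doubleRotation n * threeCycle n * (doubleRotation n)⁻¹) := by
  intro h
  have val_smul (x : Fin (n + 5)) : (doubleRotation n • x).val = (x.val + 2) % (n + 5) := by
    simpa using val_doubleRotation_pow_smul 1 x
  have smul_zero : doubleRotation n • (0 : Fin (n + 5)) = 2 :=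
    Fin.ext ((val_smul 0).trans (by simp))
  have smul_last : doubleRotation n • Fin.last (n + 4) = 1 := by
    refine Fin.ext ((val_smul _).trans ?_)
    rw [Fin.val_last, show n + 4 + 2 = 1 + (n + 5) by ring, Nat.add_mod_right]
    rfl
  have smul_one : doubleRotation n • (1 : Fin (n + 5)) = 2 := by
    calc doubleRotation n • (1 : Fin (n + 5))
        = doubleRotation n • threeCycle n • (0 : Fin (n + 5)) := by rw [threeCycle_smul_zero]
      _ = (doubleRotation n * threeCycle n * (doubleRotation n)⁻¹) • threeCycle n •
            doubleRotation n • Fin.last (n + 4) := by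
          rw [smul_last, threeCycle_smul_one, ← smul_zero, conj_smul_smul]
      _ = threeCycle n • doubleRotation n • threeCycle n • Fin.last (n + 4) := by
          rw [← mul_smul, ← h.eq, mul_smul, conj_smul_smul]
      _ = 2 := by
          rw [threeCycle_smul_of_two_lt (x := Fin.last (n + 4)) (by simp), smul_last,
            threeCycle_smul_one]
  simpa [smul_one, Nat.mod_eq_of_lt] using val_smul 1

theorem exists_mem_closure_eventuallyOne_ne_one {ι : Type*} {d : ι → ℕ}
    (hd : Tendsto d cofinite atTop) (i : ι) :
    ∃ h ∈ Subgroup.closure {fun i => doubleRotation (d i), fun i => threeCycle (d i)},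
      h ∈ eventuallyOne cofinite (fun i => alternatingGroup (Fin (d i + 5))) ∧ h i ≠ 1 := by
  set t : ∀ i, alternatingGroup (Fin (d i + 5)) := fun i => doubleRotation (d i)
  set c : ∀ i, alternatingGroup (Fin (d i + 5)) := fun i => threeCycle (d i)
  -- On `d i + 5` letters `t ^ j` is `t`, so that `c` and its conjugate overlap in one letter.
  let j := d i + 5 + 1
  have ht : t ∈ Subgroup.closure {t, c} := Subgroup.subset_closure (by simp)
  have hc : c ∈ Subgroup.closure {t, c} := Subgroup.subset_closure (by simp)
  have hconj := mul_mem (mul_mem (pow_mem ht j) hc) (inv_mem (pow_mem ht j))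
  refine ⟨⁅c, t ^ j * c * (t ^ j)⁻¹⁆, commutatorElement_mem hc hconj, ?_, fun h => ?_⟩
  · refine mem_eventuallyOne.2 ((hd.eventually_gt_atTop (2 * j)).mono fun m hm => ?_)
    exact commutatorElement_eq_one_iff_commute.2 (commute_threeCycle_conj (by omega) (by omega))
  · have hj : doubleRotation (d i) ^ j = doubleRotation (d i) := by
      rw [pow_succ, doubleRotation_pow_card, one_mul]
    have comm := commutatorElement_eq_one_iff_commute.1 h
    simp only [Pi.mul_apply, Pi.pow_apply, Pi.inv_apply, t, c, hj] at comm
    exact not_commute_threeCycle_conj comm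

end SmallSupport

section Product

theorem eq_one_of_card_lt {H Q : Type*} [Group H] [IsSimpleGroup H] [Group Q] [Finite Q]
    (h : Nat.card Q < Nat.card H) (φ : H →* Q) : φ = 1 := by
  refine MonoidHom.ker_eq_top_iff.1 (φ.normal_ker.eq_bot_or_eq_top.resolve_left fun hker => ?_)
  exact h.not_ge (Nat.card_le_card_of_injective φ ((MonoidHom.ker_eq_bot_iff φ).1 hker))

theorem lt_card_alternatingGroup (n : ℕ) : n < Nat.card (alternatingGroup (Fin (n + 5))) := by
  have two_mul_card := two_mul_nat_card_alternatingGroup (α := Fin (n + 5))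
  rw [Nat.card_perm, Nat.card_fin, Nat.factorial_succ] at two_mul_card
  nlinarith [Nat.self_le_factorial (n + 4)]

theorem tendsto_log_two_atTop : Tendsto (Nat.log 2) atTop atTop :=
  tendsto_atTop_atTop.2 fun b => ⟨2 ^ b, fun _ h => Nat.le_log_of_pow_le one_lt_two h⟩

instance (n : ℕ) : DiscreteTopology (alternatingGroup (Fin n)) :=
  ⟨rfl⟩

variable {ι : Type} {d : ι → ℕ}

theorem nonempty_profiniteCompletionWitness_pi_alternatingGroup (hd : Tendsto d cofinite atTop)
    (hfg : TopologicallyFG (∀ i, alternatingGroup (Fin (d i + 5)))) :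
    Nonempty (ProfiniteCompletionWitness (∀ i, alternatingGroup (Fin (d i + 5)))) := by
  obtain ⟨S, hS, hdense⟩ := hfg
  set A : ι → Type := fun i => alternatingGroup (Fin (d i + 5))
  have simple (i : ι) : IsSimpleGroup (A i) := alternatingGroup.isSimpleGroup (by simp)
  choose f a b t x v hcollapsing width using fun i =>
    exists_isCollapsing_alternatingGroup (Fin (d i + 5))
  simp only [Fintype.card_fin] at hcollapsing width
  have log_tendsto : Tendsto (fun i => Nat.log 2 (d i + 5) - 4) cofinite atTop :=
    (tendsto_sub_atTop_nat 4).comp <| tendsto_log_two_atTop.comp <|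
      tendsto_atTop_mono (fun i => Nat.le_add_right (d i) 5) hd
  have radical_eq_top : finiteQuotientFreeRadical ((∀ i, A i) ⧸ eventuallyOne cofinite A) = ⊤ :=
    finiteQuotientFreeRadical_quotient_eventuallyOne log_tendsto hcollapsing
      ((hd.eventually_ge_atTop 32).mono fun i hi => width i (by omega))
  obtain ⟨G, hG, hSG, hquot⟩ := exists_fg_map_noFiniteQuotients
    (QuotientGroup.mk'_surjective _) radical_eq_top
    (hS.union (Set.toFinite {fun i => doubleRotation (d i), fun i => threeCycle (d i)}))
  obtain ⟨hSG, hsmall⟩ := Set.union_subset_iff.1 hSG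
  have hGdense : Dense (G : Set (∀ i, A i)) := hdense.mono ((Subgroup.closure_le G).2 hSG)
  have hle : eventuallyOne cofinite A ≤ G := by
    refine eventuallyOne_cofinite_le_of_dense (fun i => ?_) hGdense fun i => ?_
    · exact alternatingGroup.center_eq_bot (by simp)
    · obtain ⟨h, hh, hh'⟩ := exists_mem_closure_eventuallyOne_ne_one hd i
      exact ⟨h, (Subgroup.closure_le G).2 hsmall hh, hh'⟩
  refine nonempty_profiniteCompletionWitness_pi hG hGdense hle hquot fun Q _ _ => ?_
  exact (hd.eventually_ge_atTop (Nat.card Q)).mono fun i hi =>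
    eq_one_of_card_lt (hi.trans_lt (lt_card_alternatingGroup (d i)))

end Product

section Transfer

variable {P P' : Type*} [Group P] [TopologicalSpace P] [Group P'] [TopologicalSpace P']

theorem TopologicallyFG.map (h : TopologicallyFG P) {φ : P →* P'} (hφ : Continuous φ)
    (hdense : DenseRange φ) : TopologicallyFG P' := by
  obtain ⟨S, hS, hSdense⟩ := h
  refine ⟨φ '' S, hS.image φ, ?_⟩
  rw [← MonoidHom.map_closure, Subgroup.coe_map]
  exact hdense.dense_image hφ hSdense

/-- Transport of a group with profinite completion `P` along an isomorphism of topological groups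
`P ≃ₜ* P'`. -/
def ProfiniteCompletionWitness.congr (W : ProfiniteCompletionWitness P) (e : P ≃ₜ* P') :
    ProfiniteCompletionWitness P' :=
  letI := W.grp
  { G := W.G
    fg := W.fg
    ι := (e : P →* P').comp W.ι
    inj := e.injective.comp W.inj
    dense := e.surjective.denseRange.comp W.dense e.continuous
    factors := fun Q _ _ φ => by
      obtain ⟨g, hg, hgφ⟩ := W.factors Q φ
      refine ⟨g.comp e.symm, fun U => (hg U).preimage e.symm.continuous, ?_⟩
      rw [← hgφ]
      ext x
      simp }

/-- Currying of families indexed by a sigma type. -/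
def piCurryContinuousMulEquiv {ι : Type*} {κ : ι → Type*} (A : ∀ i, κ i → Type*)
    [∀ i j, Group (A i j)] [∀ i j, TopologicalSpace (A i j)] :
    (∀ p : Σ i, κ i, A p.1 p.2) ≃ₜ* ∀ i j, A i j where
  toEquiv := Equiv.piCurry A
  map_mul' _ _ := rfl
  continuous_toFun := continuous_pi fun i => continuous_pi fun j =>
    continuous_apply (⟨i, j⟩ : Σ i, κ i)
  continuous_invFun := continuous_pi fun p => (continuous_apply p.2).comp (continuous_apply p.1)

end Transfer

theorem tendsto_sigma_fst_cofinite {ι : Type*} {κ : ι → Type*} [∀ i, Finite (κ i)] :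
    Tendsto (Sigma.fst : (Σ i, κ i) → ι) cofinite cofinite :=
  Tendsto.cofinite_of_finite_preimage_singleton fun i => by
    rw [← Set.range_sigmaMk]
    exact Set.finite_range _

/-- **Theorem (Kassabov–Nikolov).** If a Cartesian product
`𝔊 = ∏_{n ≥ 5} Alt(n)^{f(n)}` of alternating groups is topologically finitely generated,
then it is the profinite completion of a finitely generated residually finite group. -/
theorem cartesian_product_of_alternating_is_profinite_completion (f : ℕ → ℕ)
    (hfg : TopologicallyFG (∀ n : ℕ, Fin (f (n + 5)) → alternatingGroup (Fin (n + 5)))) :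
    Nonempty (ProfiniteCompletionWitness
      (∀ n : ℕ, Fin (f (n + 5)) → alternatingGroup (Fin (n + 5)))) := by
  let e := piCurryContinuousMulEquiv fun n (_ : Fin (f (n + 5))) => alternatingGroup (Fin (n + 5))
  have degree_tendsto : Tendsto (Sigma.fst : (Σ n, Fin (f (n + 5))) → ℕ) cofinite atTop :=
    Nat.cofinite_eq_atTop ▸ tendsto_sigma_fst_cofinite
  have flat_fg : TopologicallyFG (∀ p : Σ n, Fin (f (n + 5)), alternatingGroup (Fin (p.1 + 5))) :=
    hfg.map (φ := (e.symm : _ →* _)) e.symm.continuous e.symm.surjective.denseRange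
  obtain ⟨W⟩ := nonempty_profiniteCompletionWitness_pi_alternatingGroup degree_tendsto flat_fg
  exact ⟨W.congr e⟩
end

section
/- Let d ∈ ℕ and let (T_n)_{n≥5} be a sequence of finite groups such that for each n there exist d homomorphisms φ_{n,1}, …, φ_{n,d} : Alt(n) → T_n whose images together generate T_n. Then the Cartesian product ∏_{n=5}^∞ T_n (with the product topology) is the profinite completion of a finitely generated residually finite group. -/
/-!
Call a finitely generated subgroup of a Cartesian product of groups a *frame* if it contains the
direct sum and each of its finite quotients only depends on finitely many coordinates. A
homomorphism from a frame to a finite group then extends to the product, by truncating to these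
coordinates, so the product is the profinite completion of the frame.

The images of a frame under finitely many homomorphisms into another product, each acting
coordinate by coordinate, again generate a frame as soon as they contain the direct sum. Now
`Alt(n + 5)` is generated by boundedly many images of the alternating group of the grid
`ZMod (n / 5 + 1) × Fin 5`, since two distinct point stabilizers generate an alternating group and
at most four points have to be added to the grid. Hence it suffices to find a frame in the product
of the alternating groups of all the grids `ZMod (m + 1) × Fin 5`.

This frame is generated by the cyclic shifts of the rows and by even permutations of the columns,
applied simultaneously to all the columns in one of three sets. In a quotient of order `n` the
`n`-th powers of the row shifts die, hence so do the column permutations supported on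
`V \ (V + q)`, for `n ∣ q` and every set `V` of columns available in the frame. One of the three
sets consists of the positions whose `2`-adic valuation is odd. For this `V` and a suitable `q`,
boundedly many translates of `V \ (V + q)` cover all the columns of the large grids, so that the
column permutations of the large grids die. The row shifts of the large grids follow, since they
are products of commutators of column permutations with row shifts.
-/

theorem isOpen_preimage_of_dependsOn_finite {I : Type*} {T : I → Type*}
    [∀ i, TopologicalSpace (T i)] [∀ i, DiscreteTopology (T i)] {Q : Type*} {F : Set I}
    (hF : F.Finite) {g : (∀ i, T i) → Q} (hg : DependsOn g F) (s : Set Q) :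
    IsOpen (g ⁻¹' s) := by
  refine isOpen_iff_mem_nhds.2 fun x hx => ?_
  filter_upwards [set_pi_mem_nhds hF fun i _ => mem_nhds_discrete.2 (Set.mem_singleton (x i))]
    with y hy
  rwa [Set.mem_preimage, hg hy]

section Truncation

open scoped commutatorElement

variable {I : Type*} {T : I → Type*} [∀ i, Group (T i)]

open Classical in
/-- Truncation to the coordinates in `F`: the endomorphism of a product of groups that keeps
those coordinates and makes all the others trivial. -/
noncomputable def trunc (F : Set I) : (∀ i, T i) →* (∀ i, T i) where
  toFun x := F.piecewise x 1
  map_one' := F.piecewise_same (1 : ∀ i, T i)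
  map_mul' x y := by rw [← Set.piecewise_mul, one_mul]

@[simp]
theorem trunc_apply_of_mem {F : Set I} {i : I} (h : i ∈ F) (x : ∀ i, T i) :
    trunc F x i = x i := by
  classical exact F.piecewise_eq_of_mem x 1 h

@[simp]
theorem trunc_apply_of_notMem {F : Set I} {i : I} (h : i ∉ F) (x : ∀ i, T i) :
    trunc F x i = 1 := by
  classical exact F.piecewise_eq_of_notMem x 1 h

theorem trunc_eq_one {F : Set I} {x : ∀ i, T i} (hx : ∀ i ∈ F, x i = 1) : trunc F x = 1 := by
  ext i
  by_cases hi : i ∈ F <;> simp [hi, hx]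

theorem trunc_commutatorElement (F : Set I) (x y : ∀ i, T i) :
    trunc F ⁅x, y⁆ = ⁅trunc F x, y⁆ := by
  ext i
  by_cases hi : i ∈ F <;> simp [hi, commutatorElement_def]

theorem trunc_mem_of_finite [DecidableEq I] {G : Subgroup (∀ i, T i)}
    (hG : ∀ i (t : T i), Pi.mulSingle i t ∈ G) {F : Set I} (hF : F.Finite) (x : ∀ i, T i) :
    trunc F x ∈ G :=
  Submonoid.pi_mem_of_mulSingle_mem_aux hF.toFinset _
    (fun _ hi => trunc_apply_of_notMem (by simpa using hi) x) fun i _ => hG i _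

theorem dense_of_mulSingle_mem [DecidableEq I] [∀ i, TopologicalSpace (T i)]
    {G : Subgroup (∀ i, T i)} (hG : ∀ i (t : T i), Pi.mulSingle i t ∈ G) :
    Dense (G : Set (∀ i, T i)) := by
  intro x
  refine mem_closure_of_tendsto (b := Filter.atTop) (f := fun F : Finset I => trunc (F : Set I) x)
    (tendsto_pi_nhds.2 fun i => tendsto_const_nhds.congr' ?_)
    (.of_forall fun F => trunc_mem_of_finite hG F.finite_toSet x)
  filter_upwards [Filter.eventually_ge_atTop {i}] with F hF
  exact (trunc_apply_of_mem (by simpa using hF) x).symm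

end Truncation

section Frame

variable {I : Type*} [DecidableEq I] {T : I → Type*} [∀ i, Group (T i)]

/-- A frame of the product `∏ i, T i`, after Kassabov and Nikolov: a finitely generated subgroup
which contains the direct sum and all of whose finite quotients depend on finitely many
coordinates only. It is the group whose profinite completion will be `∏ i, T i`. -/
structure IsFrame_s2 (G : Subgroup (∀ i, T i)) : Prop where
  fg : G.FG
  mulSingle_mem : ∀ i (t : T i), Pi.mulSingle i t ∈ G
  exists_finite_support : ∀ (Q : Type) [Group Q] [Finite Q] (f : G →* Q),
    ∃ F : Set I, F.Finite ∧ ∀ g : G, (∀ i ∈ F, (g : ∀ i, T i) i = 1) → f g = 1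

namespace IsFrame_s2

variable {G : Subgroup (∀ i, T i)}

theorem trunc_mem (hG : IsFrame_s2 G) {F : Set I} (hF : F.Finite) (x : ∀ i, T i) :
    trunc F x ∈ G :=
  trunc_mem_of_finite hG.mulSingle_mem hF x

theorem map_eq_map_trunc (hG : IsFrame_s2 G) {Q : Type} [Group Q] {f : G →* Q} {F : Set I}
    (hF : F.Finite) (hf : ∀ g : G, (∀ i ∈ F, (g : ∀ i, T i) i = 1) → f g = 1) (g : G) :
    f g = f ⟨trunc F g, hG.trunc_mem hF g⟩ := by
  rw [← div_eq_one, ← map_div]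
  exact hf _ fun i hi => by simp [hi]

theorem nonempty_profiniteCompletionWitness {I : Type} [DecidableEq I] {T : I → Type}
    [∀ i, Group (T i)] [∀ i, TopologicalSpace (T i)] [∀ i, DiscreteTopology (T i)]
    {G : Subgroup (∀ i, T i)} (hG : IsFrame_s2 G) :
    Nonempty (ProfiniteCompletionWitness (∀ i, T i)) := by
  refine ⟨⟨G, (Group.fg_iff_subgroup_fg G).2 hG.fg, G.subtype, G.subtype_injective, ?_, ?_⟩⟩
  · simpa [DenseRange] using dense_of_mulSingle_mem hG.mulSingle_mem
  · intro Q _ _ f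
    obtain ⟨F, hF, hf⟩ := hG.exists_finite_support Q f
    refine ⟨f.comp ((trunc F).codRestrict G fun x => hG.trunc_mem hF x),
      isOpen_preimage_of_dependsOn_finite hF fun x y hxy => ?_, ?_⟩
    · refine congrArg f (Subtype.ext (funext fun i => ?_))
      by_cases hi : i ∈ F <;> simp [hi, hxy]
    · ext g
      exact (hG.map_eq_map_trunc hF hf g).symm

end IsFrame_s2

end Frame

section Transfer

variable {I I' C J : Type*} {K : I' → Type*} [∀ m, Group (K m)] {T : I → Type*}
  [∀ i, Group (T i)]

/-- The homomorphism `∏ m, K m → ∏ i, T i` whose coordinate at `i` is `ψ i` applied to the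
coordinate at `μ i`, if `i` has colour `c`, and trivial otherwise. -/
noncomputable def colourMap (μ : I → I') (χ : I → C) (ψ : ∀ i, K (μ i) →* T i) (c : C) :
    (∀ m, K m) →* ∀ i, T i :=
  (trunc {i | χ i = c}).comp (MonoidHom.pi fun i => (ψ i).comp (Pi.evalMonoidHom K (μ i)))

theorem colourMap_trunc (μ : I → I') (χ : I → C) (ψ : ∀ i, K (μ i) →* T i) (c : C) (F : Set I')
    (x : ∀ m, K m) :
    colourMap μ χ ψ c (trunc F x) = trunc (μ ⁻¹' F) (colourMap μ χ ψ c x) := by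
  ext i
  by_cases hc : χ i = c <;> by_cases hF : μ i ∈ F <;> simp [colourMap, hc, hF]

theorem colourMap_mulSingle [DecidableEq I] [DecidableEq I'] {μ : I → I'} {χ : I → C}
    (hμ : Function.Injective fun i => (μ i, χ i)) (ψ : ∀ i, K (μ i) →* T i) (i : I)
    (k : K (μ i)) :
    colourMap μ χ ψ (χ i) (Pi.mulSingle (μ i) k) = Pi.mulSingle i (ψ i k) := by
  ext n
  obtain rfl | hn := eq_or_ne n i
  · simp [colourMap]
  · rw [Pi.mulSingle_eq_of_ne hn]
    by_cases hχ : χ n = χ i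
    · have hne : μ n ≠ μ i := fun h => hn (hμ (Prod.ext h hχ))
      simp [colourMap, hχ, Pi.mulSingle_eq_of_ne hne]
    · simp [colourMap, hχ]

theorem finite_preimage_of_injective_prodMk [Finite C] {μ : I → I'} {χ : I → C}
    (hμ : Function.Injective fun i => (μ i, χ i)) {F : Set I'} (hF : F.Finite) :
    (μ ⁻¹' F).Finite :=
  ((hF.prod Set.finite_univ).preimage hμ.injOn).subset fun _ hi => ⟨hi, Set.mem_univ _⟩

variable [DecidableEq I] [DecidableEq I'] {G : Subgroup (∀ m, K m)} {H : Subgroup (∀ i, T i)}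
  {μ : I → I'} {χ : I → C} {ψ : J → ∀ i, K (μ i) →* T i}

theorem mulSingle_mem_of_map_colourMap_le (hG : IsFrame_s2 G)
    (hμ : Function.Injective fun i => (μ i, χ i)) (hψ : ∀ i, ⨆ j, (ψ j i).range = ⊤)
    (hH : ∀ j c, G.map (colourMap μ χ (ψ j) c) ≤ H) (i : I) (t : T i) :
    Pi.mulSingle i t ∈ H := by
  suffices h : ⊤ ≤ H.comap (MonoidHom.mulSingle T i) from h (Subgroup.mem_top t)
  rw [← hψ i, iSup_le_iff]
  rintro j _ ⟨k, rfl⟩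
  rw [Subgroup.mem_comap, MonoidHom.mulSingle_apply, ← colourMap_mulSingle hμ]
  exact hH j (χ i) (Subgroup.mem_map_of_mem _ (hG.mulSingle_mem (μ i) k))

theorem IsFrame_s2.exists_isFrame_of_iSup_range_eq_top [Finite C] [Finite J] (hG : IsFrame_s2 G)
    (hμ : Function.Injective fun i => (μ i, χ i)) (hψ : ∀ i, ⨆ j, (ψ j i).range = ⊤) :
    ∃ H : Subgroup (∀ i, T i), IsFrame_s2 H := by
  have : Group.FG G := (Group.fg_iff_subgroup_fg G).2 hG.fg
  let Ψ (p : J × C) : G →* ∀ i, T i := (colourMap μ χ (ψ p.1) p.2).comp G.subtype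
  let H : Subgroup (∀ i, T i) := ⨆ p, (Ψ p).range
  have hΨ (p : J × C) (g : G) : Ψ p g ∈ H := Subgroup.mem_iSup_of_mem p ⟨g, rfl⟩
  have hsingle : ∀ i (t : T i), Pi.mulSingle i t ∈ H :=
    mulSingle_mem_of_map_colourMap_le hG hμ hψ fun j c =>
      Subgroup.map_le_iff_le_comap.2 fun x hx => hΨ (j, c) ⟨x, hx⟩
  refine ⟨H, Subgroup.FG.iSup _ fun p => (Group.fg_iff_subgroup_fg _).1 (Group.fg_range (Ψ p)),
    hsingle, fun Q _ _ f => ?_⟩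
  choose F hF hf using fun p => hG.exists_finite_support Q (f.comp ((Ψ p).codRestrict H (hΨ p)))
  have hU : (⋃ p, F p).Finite := Set.finite_iUnion hF
  have hV : (μ ⁻¹' ⋃ p, F p).Finite := finite_preimage_of_injective_prodMk hμ hU
  have hfact (h : H) : f h = f ⟨trunc (μ ⁻¹' ⋃ p, F p) h, trunc_mem_of_finite hsingle hV _⟩ := by
    obtain ⟨h, hh⟩ := h
    induction hh using Subgroup.iSup_induction' with
    | h1 => simp
    | hmul x y hx hy ihx ihy =>
      simpa only [map_mul, ← map_mul f, Subgroup.coe_mul, MulMemClass.mk_mul_mk] using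
        congrArg₂ (· * ·) ihx ihy
    | hp p x hx =>
      obtain ⟨g, rfl⟩ := hx
      refine (hG.map_eq_map_trunc hU (fun g hg => hf p g fun m hm => hg m ?_) g).trans
        (congrArg f (Subtype.ext ?_))
      · exact Set.mem_iUnion_of_mem p hm
      · exact colourMap_trunc μ χ (ψ p.1) p.2 _ _
  refine ⟨_, hV, fun h hh => (hfact h).trans ?_⟩
  rw [← map_one f]
  exact congrArg f (Subtype.ext (trunc_eq_one hh))

end Transfer

section GeneratedByImages

variable {K L T : Type*} [Group K] [Group L] [Group T] {d d' : ℕ}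

/-- `T` is generated by the images of `d` homomorphisms from `K`. -/
def GeneratedByImages (d : ℕ) (K T : Type*) [Group K] [Group T] : Prop :=
  ∃ φ : Fin d → (K →* T), ⨆ i, (φ i).range = ⊤

namespace GeneratedByImages

theorem of_surjective {φ : K →* T} (hφ : Function.Surjective φ) : GeneratedByImages 1 K T :=
  ⟨fun _ => φ, by rw [iSup_const, MonoidHom.range_eq_top.2 hφ]⟩

theorem mono (h : GeneratedByImages d K T) (hd : d ≤ d') : GeneratedByImages d' K T := by
  obtain ⟨φ, hφ⟩ := h
  refine ⟨Function.extend (Fin.castLE hd) φ 1, top_le_iff.1 (hφ ▸ iSup_le fun i => ?_)⟩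
  rw [← (Fin.castLE_injective hd).extend_apply φ 1 i]
  exact le_iSup (fun i => (Function.extend (Fin.castLE hd) φ 1 i).range) (Fin.castLE hd i)

theorem trans (hL : GeneratedByImages d K L) (hT : GeneratedByImages d' L T) :
    GeneratedByImages (d * d') K T := by
  obtain ⟨φ, hφ⟩ := hL
  obtain ⟨ψ, hψ⟩ := hT
  refine ⟨fun k => (ψ (finProdFinEquiv.symm k).2).comp (φ (finProdFinEquiv.symm k).1), ?_⟩
  rw [finProdFinEquiv.symm.iSup_comp (g := fun p : Fin d × Fin d' => ((ψ p.2).comp (φ p.1)).range),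
    iSup_prod, iSup_comm, ← hψ]
  refine iSup_congr fun j => ?_
  simp_rw [MonoidHom.range_comp]
  rw [← Subgroup.map_iSup, hφ, MonoidHom.range_eq_map]

end GeneratedByImages

theorem IsFrame_s2.exists_isFrame_of_generatedByImages {I I' C : Type*} [DecidableEq I]
    [DecidableEq I'] [Finite C] {K : I' → Type*} [∀ m, Group (K m)] {T : I → Type*}
    [∀ i, Group (T i)] {G : Subgroup (∀ m, K m)} {μ : I → I'} {χ : I → C} (hG : IsFrame_s2 G)
    (hμ : Function.Injective fun i => (μ i, χ i)) (hT : ∀ i, GeneratedByImages d (K (μ i)) (T i)) :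
    ∃ H : Subgroup (∀ i, T i), IsFrame_s2 H := by
  choose ψ hψ using hT
  exact hG.exists_isFrame_of_iSup_range_eq_top (ψ := fun j i => ψ i j) hμ hψ

end GeneratedByImages

section Alternating

variable {α β : Type*} [Fintype α] [DecidableEq α] [Fintype β] [DecidableEq β]

theorem range_ofSubtype_compl_singleton (a : α) :
    (alternatingGroup.ofSubtype {a}ᶜ).range = MulAction.stabilizer (alternatingGroup α) a := by
  ext g
  rw [alternatingGroup.mem_range_ofSubtype_iff, MulAction.mem_stabilizer_iff]
  simp [Finset.subset_compl_comm, Subgroup.smul_def]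

theorem exists_isThreeCycle_of_ne (hα : 4 ≤ Fintype.card α) {a b : α} (hab : a ≠ b) :
    ∃ g : Equiv.Perm α, g.IsThreeCycle ∧ g a = a ∧ g b ≠ b := by
  have hcard : 1 < ({a, b}ᶜ : Finset α).card := by
    rw [Finset.card_compl, Finset.card_pair hab]
    omega
  obtain ⟨c, hc, d, hd, hcd⟩ := Finset.one_lt_card.1 hcard
  simp only [Finset.mem_compl, Finset.mem_insert, Finset.mem_singleton, not_or] at hc hd
  refine ⟨Equiv.swap b c * Equiv.swap b d,
    Equiv.Perm.isThreeCycle_swap_mul_swap_same (Ne.symm hc.2) (Ne.symm hd.2) hcd, ?_, ?_⟩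
  · simp [Equiv.swap_apply_of_ne_of_ne, hab, Ne.symm hc.1, Ne.symm hd.1]
  · simp [Equiv.swap_apply_of_ne_of_ne, hd.2, hcd.symm]

theorem stabilizer_sup_stabilizer_eq_top (hα : 4 ≤ Fintype.card α) {a b : α} (hab : a ≠ b) :
    MulAction.stabilizer (alternatingGroup α) a ⊔ MulAction.stabilizer (alternatingGroup α) b =
      ⊤ := by
  have : Nontrivial α := ⟨a, b, hab⟩
  have : MulAction.IsPreprimitive (alternatingGroup α) α :=
    alternatingGroup.isPreprimitive_of_three_le_card α (by rw [Nat.card_eq_fintype_card]; omega)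
  refine IsCoatom.sup_eq_top_of_ne
    (MulAction.IsPreprimitive.isCoatom_stabilizer_of_isPreprimitive _ a)
    (MulAction.IsPreprimitive.isCoatom_stabilizer_of_isPreprimitive _ b) fun h => ?_
  obtain ⟨g, hg, hga, hgb⟩ := exists_isThreeCycle_of_ne hα hab
  have hg' : (⟨g, hg.mem_alternatingGroup⟩ : alternatingGroup α) ∈
      MulAction.stabilizer (alternatingGroup α) a := hga
  rw [h] at hg'
  exact hgb hg'

theorem generatedByImages_two_of_card_eq_succ (hβ : 3 ≤ Fintype.card β)
    (h : Fintype.card α = Fintype.card β + 1) :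
    GeneratedByImages 2 (alternatingGroup β) (alternatingGroup α) := by
  have e (a : α) : β ≃ ({a}ᶜ : Finset α) := Fintype.equivOfCardEq (by simp [h])
  obtain ⟨a, b, hab⟩ := Fintype.exists_pair_of_one_lt_card (α := α) (by omega)
  let φ (a : α) : alternatingGroup β →* alternatingGroup α :=
    (alternatingGroup.ofSubtype {a}ᶜ).comp (e a).altCongrHom.toMonoidHom
  have hφ (a : α) : (φ a).range = MulAction.stabilizer (alternatingGroup α) a := by
    rw [← range_ofSubtype_compl_singleton, MonoidHom.range_comp,
      MonoidHom.range_eq_top.2 (e a).altCongrHom.surjective, MonoidHom.range_eq_map]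
  refine ⟨![φ a, φ b], ?_⟩
  rw [eq_top_iff, ← stabilizer_sup_stabilizer_eq_top (by omega) hab, ← hφ a, ← hφ b]
  exact sup_le (le_iSup (fun i => (![φ a, φ b] i).range) 0)
    (le_iSup (fun i => (![φ a, φ b] i).range) 1)

theorem generatedByImages_alternatingGroup (hβ : 3 ≤ Fintype.card β) (r : ℕ)
    (h : Fintype.card α = Fintype.card β + r) :
    GeneratedByImages (2 ^ r) (alternatingGroup β) (alternatingGroup α) := by
  induction r generalizing α with
  | zero =>
    let e : β ≃ α := Fintype.equivOfCardEq h.symm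
    exact .of_surjective (φ := e.altCongrHom.toMonoidHom) e.altCongrHom.surjective
  | succ r ih =>
    obtain ⟨a⟩ : Nonempty α := Fintype.card_pos_iff.1 (by omega)
    have hcard : Fintype.card ({a}ᶜ : Finset α) = Fintype.card β + r := by simp [h]
    rw [pow_succ]
    exact (ih hcard).trans (generatedByImages_two_of_card_eq_succ (by omega) (by omega))

end Alternating

section UniformSets

open scoped commutatorElement

variable {X S : Type*} [Group S]

/-- The homomorphism sending `s` to the function with constant value `s` on `V` and `1` outside. -/
noncomputable def constOn (V : Set X) : S →* (X → S) :=
  (trunc V).comp (Pi.constMonoidHom X S)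

@[simp]
theorem constOn_apply_of_mem {V : Set X} {x : X} (hx : x ∈ V) (s : S) : constOn V s x = s :=
  trunc_apply_of_mem hx _

@[simp]
theorem constOn_apply_of_notMem {V : Set X} {x : X} (hx : x ∉ V) (s : S) : constOn V s x = 1 :=
  trunc_apply_of_notMem hx _

theorem commutator_constOn (V W : Set X) (s t : S) :
    ⁅constOn V s, constOn W t⁆ = constOn (V ∩ W) ⁅s, t⁆ := by
  ext x
  by_cases hV : x ∈ V <;> by_cases hW : x ∈ W <;> simp [commutatorElement_def, hV, hW]

theorem constOn_inter_mul_constOn_sdiff (V W : Set X) (s : S) :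
    constOn (V ∩ W) s * constOn (V \ W) s = constOn V s := by
  ext x
  by_cases hV : x ∈ V <;> by_cases hW : x ∈ W <;> simp [hV, hW]

theorem constOn_mul_constOn_sdiff (V W : Set X) (s : S) :
    constOn V s * constOn (W \ V) s = constOn (V ∪ W) s := by
  ext x
  by_cases hV : x ∈ V <;> by_cases hW : x ∈ W <;> simp [hV, hW]

theorem commutator_div_constOn (V W : Set X) (s t : S) :
    ⁅constOn V s / constOn W s, constOn V t⁆ = constOn (V \ W) ⁅s, t⁆ := by
  ext x
  by_cases hV : x ∈ V <;> by_cases hW : x ∈ W <;> simp [commutatorElement_def, hV, hW]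

variable {𝒢 : Type*} [Group 𝒢] (j : (X → S) →* 𝒢) {G H : Subgroup 𝒢} {V W : Set X}

/-- The sets `V` such that `H` contains, along `j`, all functions which are constant on `V` and
trivial outside. When `S` is perfect they form a ring of sets, see `sdiff_mem_uniformSets` and
`union_mem_uniformSets`. -/
def uniformSets (H : Subgroup 𝒢) : Set (Set X) := {V | ∀ s, j (constOn V s) ∈ H}

theorem map_mem_of_commutator_mem [Group.IsPerfect S] (φ : S →* 𝒢)
    (h : ∀ s t : S, φ ⁅s, t⁆ ∈ H) (s : S) : φ s ∈ H := by
  have hle : (⊤ : Subgroup S) ≤ H.comap φ := by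
    rw [← Group.IsPerfect.commutator_eq_top, commutator_def]
    exact Subgroup.commutator_le.2 fun s _ t _ => h s t
  exact hle (Subgroup.mem_top s)

theorem commutator_mem_of_le_normalizer (hGH : G ≤ Subgroup.normalizer (H : Set 𝒢)) {g h : 𝒢}
    (hg : g ∈ G) (hh : h ∈ H) : ⁅g, h⁆ ∈ H :=
  Subgroup.le_normalizer_iff_commutator_le_right.1 hGH (Subgroup.commutator_mem_commutator hg hh)

variable {j}

theorem empty_mem_uniformSets : ∅ ∈ uniformSets j H := fun s => by
  have : constOn (∅ : Set X) s = 1 := funext fun x => constOn_apply_of_notMem (Set.notMem_empty x) s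
  rw [this, map_one]
  exact H.one_mem

theorem inter_mem_uniformSets [Group.IsPerfect S] (hGH : G ≤ Subgroup.normalizer (H : Set 𝒢))
    (hV : V ∈ uniformSets j G) (hW : W ∈ uniformSets j H) : V ∩ W ∈ uniformSets j H :=
  map_mem_of_commutator_mem (j.comp (constOn (V ∩ W))) fun s t => by
    rw [MonoidHom.comp_apply, ← commutator_constOn, map_commutatorElement]
    exact commutator_mem_of_le_normalizer hGH (hV s) (hW t)

theorem sdiff_mem_uniformSets [Group.IsPerfect S] (hGH : G ≤ Subgroup.normalizer (H : Set 𝒢))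
    (hV : V ∈ uniformSets j H) (hW : W ∈ uniformSets j G) : V \ W ∈ uniformSets j H := fun s => by
  have hinter : j (constOn (V ∩ W) s) ∈ H := Set.inter_comm W V ▸ inter_mem_uniformSets hGH hW hV s
  rw [← H.mul_mem_cancel_left hinter, ← map_mul, constOn_inter_mul_constOn_sdiff]
  exact hV s

theorem union_mem_uniformSets [Group.IsPerfect S] (hV : V ∈ uniformSets j H)
    (hW : W ∈ uniformSets j H) : V ∪ W ∈ uniformSets j H := fun s => by
  rw [← constOn_mul_constOn_sdiff, map_mul]
  exact H.mul_mem (hV s) (sdiff_mem_uniformSets Subgroup.le_normalizer hW hV s)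

theorem biUnion_mem_uniformSets [Group.IsPerfect S] {ι : Type*} {F : Set ι} (hF : F.Finite)
    {V : ι → Set X} (hV : ∀ i ∈ F, V i ∈ uniformSets j H) : ⋃ i ∈ F, V i ∈ uniformSets j H := by
  induction F, hF using Set.Finite.induction_on with
  | empty => simpa using empty_mem_uniformSets
  | insert _ _ ih =>
    rw [Set.biUnion_insert]
    exact union_mem_uniformSets (hV _ (Set.mem_insert _ _))
      (ih fun i hi => hV i (Set.mem_insert_of_mem _ hi))

variable {A : Set S}

theorem mem_uniformSets_of_conj (hA : Subgroup.closure A = ⊤)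
    (hGH : G ≤ Subgroup.normalizer (H : Set 𝒢)) (hV : V ∈ uniformSets j H)
    (hconj : ∀ s ∈ A, ∃ a ∈ G, a * j (constOn V s) * a⁻¹ = j (constOn W s)) :
    W ∈ uniformSets j H := by
  have hle : Subgroup.closure A ≤ H.comap (j.comp (constOn W)) := by
    refine (Subgroup.closure_le _).2 fun s hs => ?_
    obtain ⟨a, ha, hconj_s⟩ := hconj s hs
    rw [SetLike.mem_coe, Subgroup.mem_comap, MonoidHom.comp_apply, ← hconj_s]
    exact (Subgroup.mem_normalizer_iff.1 (hGH ha) _).1 (hV s)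
  exact fun s => hle (hA ▸ Subgroup.mem_top s)

theorem div_mem_of_closure {φ ψ : S →* 𝒢} (hA : Subgroup.closure A = ⊤)
    (hGH : G ≤ Subgroup.normalizer (H : Set 𝒢)) (hφ : ∀ s, φ s ∈ G)
    (h : ∀ s ∈ A, φ s / ψ s ∈ H) (s : S) : φ s / ψ s ∈ H := by
  have hconj {g x : 𝒢} (hg : g ∈ G) : x ∈ H ↔ g * x * g⁻¹ ∈ H :=
    Subgroup.mem_normalizer_iff.1 (hGH hg) x
  have hs : s ∈ Subgroup.closure A := hA ▸ Subgroup.mem_top s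
  induction hs using Subgroup.closure_induction with
  | mem s hs => exact h s hs
  | one => simp
  | mul s t _ _ ihs iht =>
    have := H.mul_mem ((hconj (hφ s)).1 iht) ihs
    simpa [div_eq_mul_inv, mul_assoc] using this
  | inv s _ ih =>
    have := (hconj (hφ s⁻¹)).1 (H.inv_mem ih)
    simpa [div_eq_mul_inv, mul_assoc] using this

-- Modulo `H`, the functions equal to `s` on `V` and on `W` agree for `s ∈ A`, hence for all `s`;
-- commutators of their quotient with functions supported on `V` are supported on `V \ W`.
theorem sdiff_mem_uniformSets_of_conj [Group.IsPerfect S] (hA : Subgroup.closure A = ⊤)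
    (hGH : G ≤ Subgroup.normalizer (H : Set 𝒢)) (hV : V ∈ uniformSets j G)
    (hconj : ∀ s ∈ A, ∃ a ∈ H, a * j (constOn V s) * a⁻¹ = j (constOn W s)) :
    V \ W ∈ uniformSets j H := by
  have hdiv (s : S) : j (constOn V s) / j (constOn W s) ∈ H := by
    refine div_mem_of_closure (φ := j.comp (constOn V)) (ψ := j.comp (constOn W)) hA hGH hV
      (fun s hs => ?_) s
    obtain ⟨a, ha, hconj_s⟩ := hconj s hs
    have := commutator_mem_of_le_normalizer hGH (hV s) ha
    rw [commutatorElement_def] at this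
    simpa [← hconj_s, div_eq_mul_inv, mul_assoc] using this
  refine map_mem_of_commutator_mem (j.comp (constOn (V \ W))) fun s t => ?_
  rw [MonoidHom.comp_apply, ← commutator_div_constOn, map_commutatorElement, map_div,
    ← commutatorElement_inv]
  exact H.inv_mem (commutator_mem_of_le_normalizer hGH (hV t) (hdiv s))

end UniformSets

section Transversal

theorem isMultiplyPretransitive_two_of_exists_smul_eq {G α : Type*} [Group G] [MulAction G α]
    (h : ∀ x y z : α, y ≠ x → z ≠ x → ∃ g : G, g • x = x ∧ g • y = z)
    (hα : ∀ x y : α, ∃ z, z ≠ x ∧ z ≠ y) : MulAction.IsMultiplyPretransitive G α 2 := by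
  refine MulAction.is_two_pretransitive_iff.2 fun {a b c d} hab hcd => ?_
  obtain ⟨e, hea, hec⟩ := hα a c
  obtain ⟨g, -, rfl⟩ := h e a c hea.symm hec.symm
  obtain ⟨g', hg', rfl⟩ := h (g • a) (g • b) d (by simpa using hab.symm) hcd.symm
  exact ⟨g' * g, by rw [mul_smul, hg'], by rw [mul_smul]⟩

theorem exists_ne_ne_ne {ι : Type*} [Fintype ι] (hι : 4 ≤ Fintype.card ι) (i j k : ι) :
    ∃ l, l ≠ i ∧ l ≠ j ∧ l ≠ k := by
  classical
  have hcard : ({i, j, k} : Finset ι).card < Fintype.card ι := Finset.card_le_three.trans_lt hι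
  obtain ⟨l, -, hl⟩ := Finset.exists_mem_notMem_of_card_lt_card hcard
  exact ⟨l, by simpa using hl⟩

variable {α ι : Type*} [DecidableEq α] [Fintype ι] {r : α → ι} {L : Subgroup (Equiv.Perm α)}

theorem exists_mem_apply_eq_of_transversal_mem (hr : Function.Surjective r)
    (hι : 4 ≤ Fintype.card ι)
    (hL : ∀ a b c, r a ≠ r b → r a ≠ r c → r b ≠ r c → Equiv.swap a b * Equiv.swap a c ∈ L)
    {x y z : α} (hy : y ≠ x) (hz : z ≠ x) : ∃ g ∈ L, g x = x ∧ g y = z := by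
  have hfresh (i j k : ι) : ∃ a, r a ≠ i ∧ r a ≠ j ∧ r a ≠ k :=
    hr.exists.1 (exists_ne_ne_ne hι i j k)
  have hdiff {y z : α} (hy : y ≠ x) (hz : z ≠ x) (hyz : r y ≠ r z) :
      ∃ g ∈ L, g x = x ∧ g y = z := by
    obtain ⟨w, hwx, hwy, hwz⟩ := hfresh (r x) (r y) (r z)
    have hxw : x ≠ w := fun h => hwx (h ▸ rfl)
    refine ⟨_, hL w z y hwz hwy hyz.symm, ?_, ?_⟩
    · simp [Equiv.swap_apply_of_ne_of_ne hxw hy.symm, Equiv.swap_apply_of_ne_of_ne hxw hz.symm]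
    · simp
  by_cases hyz : r y = r z
  · obtain ⟨u, hux, huy, -⟩ := hfresh (r x) (r y) (r z)
    have hu : u ≠ x := fun h => hux (h ▸ rfl)
    obtain ⟨g, hg, hgx, rfl⟩ := hdiff hy hu huy.symm
    obtain ⟨h, hh, hhx, rfl⟩ := hdiff hu hz (hyz ▸ huy)
    exact ⟨h * g, L.mul_mem hh hg, by simp [hgx, hhx], rfl⟩
  · exact hdiff hy hz hyz

theorem alternatingGroup_le_of_transversal_mem [Fintype α] (hr : Function.Surjective r)
    (hι : 4 ≤ Fintype.card ι)
    (hL : ∀ a b c, r a ≠ r b → r a ≠ r c → r b ≠ r c → Equiv.swap a b * Equiv.swap a c ∈ L) :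
    alternatingGroup α ≤ L := by
  classical
  have hcard : 4 ≤ Fintype.card α := hι.trans (Fintype.card_le_of_surjective r hr)
  have : MulAction.IsMultiplyPretransitive L α 2 := by
    refine isMultiplyPretransitive_two_of_exists_smul_eq (fun x y z hy hz => ?_) fun x y => ?_
    · obtain ⟨g, hg, hgx, hgy⟩ := exists_mem_apply_eq_of_transversal_mem hr hι hL hy hz
      exact ⟨⟨g, hg⟩, hgx, hgy⟩
    · obtain ⟨z, hzx, hzy, -⟩ := exists_ne_ne_ne hcard x y y
      exact ⟨z, hzx, hzy⟩
  have : MulAction.IsPreprimitive L α := MulAction.isPreprimitive_of_is_two_pretransitive this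
  obtain ⟨i, j, k, hij, hik, hjk⟩ := Fintype.two_lt_card_iff.1 (by omega : 2 < Fintype.card ι)
  obtain ⟨⟨a, rfl⟩, ⟨b, rfl⟩, ⟨c, rfl⟩⟩ := And.intro (hr i) (And.intro (hr j) (hr k))
  refine Equiv.Perm.alternatingGroup_le_of_isPreprimitive_of_isThreeCycle_mem this
    (Equiv.Perm.isThreeCycle_swap_mul_swap_same ?_ ?_ ?_) (hL a b c hij hik hjk)
  · exact ne_of_apply_ne r hij
  · exact ne_of_apply_ne r hik
  · exact ne_of_apply_ne r hjk

end Transversal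

section FixedPoints

variable {ι : Type*} [Fintype ι] [DecidableEq ι]

theorem isPerfect_alternatingGroup (hι : 5 ≤ Fintype.card ι) :
    Group.IsPerfect (alternatingGroup ι) :=
  ⟨commutator_alternatingGroup_eq_top (by rwa [Nat.card_eq_fintype_card])⟩

theorem closure_exists_fixed_eq_top (hι : 4 ≤ Fintype.card ι) :
    Subgroup.closure {s : alternatingGroup ι | ∃ l, s.1 l = l} = ⊤ := by
  obtain ⟨a, b, hab⟩ := Fintype.exists_pair_of_one_lt_card (α := ι) (by omega)
  rw [eq_top_iff, ← stabilizer_sup_stabilizer_eq_top hι hab]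
  exact sup_le (fun s hs => Subgroup.subset_closure ⟨a, hs⟩)
    fun s hs => Subgroup.subset_closure ⟨b, hs⟩

end FixedPoints

section ZeroSum

/-- The lattice of integer vectors with coordinate sum zero (the root lattice of type `A`). -/
def zeroSum (ι : Type*) [Fintype ι] : Submodule ℤ (ι → ℤ) :=
  LinearMap.ker (∑ i, LinearMap.proj i : (ι → ℤ) →ₗ[ℤ] ℤ)

variable {ι : Type*} [Fintype ι]

theorem mem_zeroSum {v : ι → ℤ} : v ∈ zeroSum ι ↔ ∑ i, v i = 0 := by
  simp [zeroSum]

instance : Group.FG (Multiplicative (zeroSum ι)) :=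
  AddGroup.fg_iff_mul_fg.1 (Module.Finite.iff_addGroup_fg.1 inferInstance)

variable [DecidableEq ι]

/-- The vector with coordinate sum zero which agrees with `f` away from the coordinate `l`. -/
def balance (l : ι) (f : ι → ℤ) : zeroSum ι :=
  ⟨f - Pi.single l (∑ i, f i), by simp [mem_zeroSum]⟩

theorem balance_apply (l : ι) (f : ι → ℤ) (i : ι) :
    (balance l f).1 i = f i - (Pi.single l (∑ i, f i) : ι → ℤ) i :=
  rfl

theorem balance_apply_of_ne {i l : ι} (hi : i ≠ l) (f : ι → ℤ) : (balance l f).1 i = f i := by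
  simp [balance_apply, hi]

theorem sum_balance_single (l : ι) (v : zeroSum ι) : ∑ i, balance l (Pi.single i (v.1 i)) = v := by
  ext k
  simp only [Submodule.coe_sum, Finset.sum_apply, balance_apply, Finset.sum_sub_distrib]
  simp [Pi.single_apply, mem_zeroSum.1 v.2]

end ZeroSum

theorem prod_sign_addRight {Y ι : Type*} [Fintype Y] [DecidableEq Y] [AddCommGroup Y] [Fintype ι]
    (a : ι → Y) :
    ∏ i, Equiv.Perm.sign (Equiv.addRight (a i)) = Equiv.Perm.sign (Equiv.addRight (∑ i, a i)) := by
  let φ : Multiplicative Y →* ℤˣ :=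
    { toFun := fun y => Equiv.Perm.sign (Equiv.addRight y.toAdd)
      map_one' := by simp
      map_mul' := fun y z => by
        rw [← Equiv.Perm.sign_mul]
        congr 1
        ext
        simp [add_comm, add_left_comm] }
  exact (map_prod φ (fun i => Multiplicative.ofAdd (a i)) _).symm

section Grid

variable {Y ι : Type*} [Fintype Y] [DecidableEq Y] [Fintype ι] [DecidableEq ι]

/-- The action on the grid `Y × ι` of a family of even permutations of the columns. -/
def columnAct : (Y → alternatingGroup ι) →* alternatingGroup (Y × ι) where
  toFun f := ⟨Equiv.prodCongrRight fun y => (f y).1, by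
    rw [Equiv.Perm.mem_alternatingGroup, Equiv.Perm.sign_prodCongrRight]
    exact Finset.prod_eq_one fun y _ => (f y).2⟩
  map_one' := rfl
  map_mul' _ _ := rfl

@[simp]
theorem columnAct_apply (f : Y → alternatingGroup ι) (p : Y × ι) :
    (columnAct f).1 p = (p.1, (f p.1).1 p.2) :=
  rfl

theorem columnAct_constOn_singleton {y : Y} {i k l : ι} (s : alternatingGroup ι)
    (hs : s.1 = Equiv.swap i k * Equiv.swap i l) :
    (columnAct (constOn {y} s)).1 =
      Equiv.swap (y, i) (y, k) * Equiv.swap (y, i) (y, l) := by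
  ext1 ⟨z, t⟩
  by_cases hz : z = y
  · subst hz
    simp only [columnAct_apply, constOn_apply_of_mem (Set.mem_singleton z), hs,
      Equiv.Perm.mul_apply, ← (Prod.mk_right_injective z).map_swap]
  · have hne (m : ι) : (z, t) ≠ (y, m) := fun h => hz (congrArg Prod.fst h)
    simp [hz, Equiv.swap_apply_of_ne_of_ne, hne]

variable [AddCommGroupWithOne Y]

/-- The action of a vector with coordinate sum zero on the grid `Y × ι`, which shifts each row
cyclically by the corresponding coordinate. -/
def rowAct : Multiplicative (zeroSum ι) →* alternatingGroup (Y × ι) where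
  toFun v := ⟨Equiv.prodCongrLeft fun i => Equiv.addRight ((v.toAdd.1 i : ℤ) : Y), by
    rw [Equiv.Perm.mem_alternatingGroup, Equiv.Perm.sign_prodCongrLeft, prod_sign_addRight,
      ← Int.cast_sum, mem_zeroSum.1 v.toAdd.2]
    simp⟩
  map_one' := by ext p <;> simp
  map_mul' v w := by ext p <;> simp [add_assoc, add_comm, add_left_comm]

@[simp]
theorem rowAct_apply (v : zeroSum ι) (p : Y × ι) :
    (rowAct (.ofAdd v)).1 p = (p.1 + v.1 p.2, p.2) :=
  rfl

theorem rowAct_conj_columnAct {f : Y → alternatingGroup ι} {l : ι} (hf : ∀ y, (f y).1 l = l)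
    {v : zeroSum ι} {k : ℤ} (hv : ∀ i ≠ l, v.1 i = k) :
    rowAct (.ofAdd v) * columnAct f * (rowAct (.ofAdd v))⁻¹ =
      columnAct fun y => f (y - (k : Y)) := by
  rw [mul_inv_eq_iff_eq_mul]
  ext ⟨y, i⟩ : 2
  by_cases hi : i = l
  · subst hi
    simp [hf]
  · have hfi : (f y).1 i ≠ l := fun h => hi ((f y).1.injective (h.trans (hf y).symm))
    simp [hv _ hi, hv _ hfi]

theorem columnAct_conj_rowAct (s : alternatingGroup ι) {v w : zeroSum ι}
    (hvw : ∀ i, w.1 (s.1 i) = v.1 i) :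
    columnAct (fun _ => s) * rowAct (.ofAdd v) * (columnAct fun _ => s)⁻¹ =
      (rowAct (.ofAdd w) : alternatingGroup (Y × ι)) := by
  rw [mul_inv_eq_iff_eq_mul]
  ext p <;> simp [hvw]

theorem exists_rowAct_conj_eq_swap_mul_swap (hY : Function.Surjective (Int.cast : ℤ → Y))
    (hι : 4 ≤ Fintype.card ι) {a b c : Y × ι} (hab : a.2 ≠ b.2) (hac : a.2 ≠ c.2)
    (hbc : b.2 ≠ c.2) : ∃ (v : Multiplicative (zeroSum ι)) (s : alternatingGroup ι),
      (rowAct v * columnAct (constOn {(0 : Y)} s) * (rowAct v)⁻¹).1 =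
        Equiv.swap a b * Equiv.swap a c := by
  obtain ⟨y, hy⟩ := hY.hasRightInverse
  obtain ⟨l, hla, hlb, hlc⟩ := exists_ne_ne_ne hι a.2 b.2 c.2
  let f (i : ι) : ℤ := if i = a.2 then y a.1 else if i = b.2 then y b.1 else y c.1
  let g : Equiv.Perm (Y × ι) := (rowAct (.ofAdd (balance l f))).1
  have hg {p : Y × ι} (hp : p.2 ≠ l) (hfp : f p.2 = y p.1) : g (0, p.2) = p := by
    ext <;> simp [g, balance_apply_of_ne hp, hfp, hy p.1]
  have ha : g (0, a.2) = a := hg hla.symm (by simp [f])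
  have hb : g (0, b.2) = b := hg hlb.symm (by simp [f, hab.symm])
  have hc : g (0, c.2) = c := hg hlc.symm (by simp [f, hac.symm, hbc.symm])
  refine ⟨.ofAdd (balance l f), ⟨Equiv.swap a.2 b.2 * Equiv.swap a.2 c.2,
    (Equiv.Perm.isThreeCycle_swap_mul_swap_same hab hac hbc).mem_alternatingGroup⟩, ?_⟩
  rw [Subgroup.coe_mul, Subgroup.coe_mul, columnAct_constOn_singleton _ rfl, Subgroup.coe_inv]
  conv_rhs => rw [← ha, ← hb, ← hc, Equiv.swap_apply_apply, Equiv.swap_apply_apply]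
  simp [g, mul_assoc]

theorem eq_top_of_rowAct_conj_mem (hY : Function.Surjective (Int.cast : ℤ → Y))
    (hι : 4 ≤ Fintype.card ι) {L : Subgroup (alternatingGroup (Y × ι))}
    (hL : ∀ v s, rowAct v * columnAct (constOn {(0 : Y)} s) * (rowAct v)⁻¹ ∈ L) : L = ⊤ := by
  suffices alternatingGroup (Y × ι) ≤ L.map (alternatingGroup (Y × ι)).subtype by
    refine eq_top_iff.2 fun x _ => ?_
    obtain ⟨y, hy, hyx⟩ := this x.2
    rwa [← Subtype.ext hyx]
  refine alternatingGroup_le_of_transversal_mem Prod.snd_surjective hι fun a b c hab hac hbc => ?_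
  obtain ⟨v, s, h⟩ := exists_rowAct_conj_eq_swap_mul_swap hY hι hab hac hbc
  exact ⟨_, hL v s, h⟩

end Grid

section Columns

/-- The columns of all the grids `ZMod (m + 1) × ι`, the `m`-th of which has `m + 1` columns. -/
abbrev Column : Type := Σ m : ℕ, ZMod (m + 1)

/-- The columns at position zero. -/
def origin : Set Column := {x | x.2 = 0}

/-- The columns whose position has odd `2`-adic valuation: on large grids, this set is far from
being invariant under any given translation. -/
def aperiodic : Set Column := {x | Odd (padicValNat 2 x.2.val)}

/-- The columns of all but the first `M` grids. -/
def tail (M : ℕ) : Set Column := {x | M ≤ x.1}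

/-- The set of columns obtained by a cyclic translation by `k` of every grid. -/
def translateColumns (k : ℤ) (V : Set Column) : Set Column :=
  {x | ⟨x.1, x.2 - (k : ZMod (x.1 + 1))⟩ ∈ V}

theorem mk_natCast_mem_aperiodic {m n : ℕ} (h : n ≤ m) :
    (⟨m, (n : ZMod (m + 1))⟩ : Column) ∈ aperiodic ↔ Odd (padicValNat 2 n) := by
  rw [aperiodic, Set.mem_ofPred_eq, ZMod.val_cast_of_lt (Nat.lt_succ_of_le h)]

theorem padicValNat_two_pow_mul_odd (k : ℕ) {u : ℕ} (hu : Odd u) :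
    padicValNat 2 (2 ^ k * u) = k := by
  rw [padicValNat_base_pow_mul one_lt_two hu.pos.ne',
    padicValNat.eq_zero_of_not_dvd hu.not_two_dvd_nat, zero_add]

theorem exists_padicValNat_eq_succ_and_padicValNat_add_eq (k b : ℕ) {u : ℕ} (hu : Odd u) :
    ∃ c, b ≤ c + 2 ^ (k + 2) ∧ c ≤ b + 2 ^ (k + 2) ∧ padicValNat 2 c = k + 1 ∧
      padicValNat 2 (c + 2 ^ k * u) = k := by
  -- `c` is an odd multiple of `2 ^ (k + 1)` next to `b`, and `2 ^ k * u` has smaller valuation.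
  set l := b / 2 ^ (k + 2)
  have hc : 2 ^ (k + 1) * (2 * l + 1) = 2 ^ (k + 2) * l + 2 ^ (k + 1) := by ring
  have hpos : 0 < 2 ^ (k + 1) := Nat.two_pow_pos (k + 1)
  have hle : 2 ^ (k + 1) ≤ 2 ^ (k + 2) := Nat.pow_le_pow_right two_pos (k + 1).le_succ
  have hb : b < 2 ^ (k + 2) * l + 2 ^ (k + 2) := Nat.lt_mul_div_succ b (Nat.two_pow_pos (k + 2))
  have hb' : 2 ^ (k + 2) * l ≤ b := Nat.mul_div_le b (2 ^ (k + 2))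
  refine ⟨2 ^ (k + 1) * (2 * l + 1), by linarith, by linarith,
    padicValNat_two_pow_mul_odd _ (odd_two_mul_add_one _), ?_⟩
  rw [pow_succ, mul_assoc, ← mul_add,
    padicValNat_two_pow_mul_odd _ ((even_two_mul _).add_odd hu)]

theorem exists_odd_dvd_two_pow_mul_odd {n : ℕ} (hn : n ≠ 0) :
    ∃ k u, Odd k ∧ Odd u ∧ n ∣ 2 ^ k * u := by
  obtain ⟨k, u, hu, rfl⟩ := Nat.exists_eq_two_pow_mul_odd hn
  exact ⟨2 * k + 1, u, odd_two_mul_add_one k, hu,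
    mul_dvd_mul_right (pow_dvd_pow 2 (by lia)) u⟩

theorem exists_tail_subset_biUnion_translateColumns {n : ℕ} (hn : n ≠ 0) : ∃ q M N : ℕ, n ∣ q ∧
    tail M ⊆ ⋃ i ∈ Set.Icc (-N : ℤ) N,
      translateColumns i (aperiodic \ translateColumns q aperiodic) := by
  obtain ⟨k, u, hk, hu, hdvd⟩ := exists_odd_dvd_two_pow_mul_odd hn
  set q := 2 ^ k * u with hq
  set P := 2 ^ (k + 2) with hP
  refine ⟨q, P + q, P + q + P + q, hdvd, fun ⟨m, y⟩ hm => ?_⟩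
  have hym : y.val ≤ m := Nat.le_of_lt_succ y.val_lt
  change P + q ≤ m at hm
  obtain ⟨c, hbc, hcb, hc, hcq⟩ :=
    exists_padicValNat_eq_succ_and_padicValNat_add_eq k (y.val - (P + q)) hu
  rw [← hP] at hbc hcb
  rw [← hq] at hcq
  have hcm : c + q ≤ m := by lia
  have hy : y - ((y.val - (c + q : ℕ) : ℤ) : ZMod (m + 1)) = (c + q : ℕ) := by simp
  refine Set.mem_biUnion (x := (y.val - (c + q : ℕ) : ℤ)) ⟨by lia, by lia⟩ ⟨?_, fun h => ?_⟩
  · rw [hy, mk_natCast_mem_aperiodic hcm, hcq]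
    exact hk
  · have hyc : y - ((y.val - (c + q : ℕ) : ℤ) : ZMod (m + 1)) - ((q : ℤ) : ZMod (m + 1)) = c := by
      simp
    simp only [translateColumns, Set.mem_ofPred_eq] at h
    rw [hyc, mk_natCast_mem_aperiodic (by lia), hc] at h
    exact (Nat.not_odd_iff_even.2 hk.add_one) h

theorem singleton_zero_eq_sdiff (m : ℕ) : {(⟨m, 0⟩ : Column)} =
    (origin ∩ translateColumns (m + 1 : ℕ) origin) \ ⋃ n ∈ Set.Iio m, {(⟨n, 0⟩ : Column)} := by
  ext ⟨n, y⟩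
  have hsingle (k : ℕ) : (⟨n, y⟩ : Column) = ⟨k, 0⟩ ↔ n = k ∧ y = 0 := by
    constructor
    · rintro ⟨⟩
      exact ⟨rfl, rfl⟩
    · rintro ⟨rfl, rfl⟩
      rfl
  simp only [origin, translateColumns, Set.mem_sdiff, Set.mem_inter_iff, Set.mem_ofPred_eq,
    Set.mem_iUnion, Set.mem_singleton_iff, hsingle, Int.cast_natCast]
  constructor
  · rintro ⟨rfl, rfl⟩
    exact ⟨⟨rfl, by rw [ZMod.natCast_self, sub_zero]⟩, by simp⟩
  · rintro ⟨⟨hy, hdvd⟩, hlt⟩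
    rw [hy, zero_sub, neg_eq_zero, ZMod.natCast_eq_zero_iff] at hdvd
    have hle : n ≤ m := Nat.succ_le_succ_iff.1 (Nat.le_of_dvd m.succ_pos hdvd)
    exact ⟨hle.eq_of_not_lt fun h => hlt ⟨n, h, rfl, hy⟩, hy⟩

end Columns

section Grids

open scoped commutatorElement

variable {ι : Type*} [Fintype ι] [DecidableEq ι]

variable (ι) in
/-- The product of the alternating groups of all the grids `ZMod (m + 1) × ι`. -/
abbrev GridProduct : Type _ := ∀ m : ℕ, alternatingGroup (ZMod (m + 1) × ι)

/-- The action on all the grids of a family of even permutations of their columns. -/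
def columnwise : (Column → alternatingGroup ι) →* GridProduct ι where
  toFun f m := columnAct fun y => f ⟨m, y⟩
  map_one' := rfl
  map_mul' _ _ := rfl

/-- The diagonal cyclic action on the rows of all the grids. -/
def rowShift : Multiplicative (zeroSum ι) →* GridProduct ι where
  toFun v _ := rowAct v
  map_one' := by ext1; exact map_one _
  map_mul' v w := by ext1; exact map_mul _ v w

theorem rowShift_conj_columnwise_constOn {s : alternatingGroup ι} {l : ι} (hs : s.1 l = l)
    {v : zeroSum ι} {k : ℤ} (hv : ∀ i ≠ l, v.1 i = k) (V : Set Column) :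
    rowShift (.ofAdd v) * columnwise (constOn V s) * (rowShift (.ofAdd v))⁻¹ =
      columnwise (constOn (translateColumns k V) s) := by
  ext1 m
  refine (rowAct_conj_columnAct (l := l) (fun y => ?_) hv).trans rfl
  by_cases hy : (⟨m, y⟩ : Column) ∈ V <;> simp [hy, hs]

theorem columnwise_conj_rowShift (s : alternatingGroup ι) {v w : zeroSum ι}
    (hvw : ∀ i, w.1 (s.1 i) = v.1 i) :
    columnwise (constOn Set.univ s) * rowShift (.ofAdd v) * (columnwise (constOn Set.univ s))⁻¹ =
      rowShift (.ofAdd w) := by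
  ext1 m
  have huniv : (fun y : ZMod (m + 1) => constOn Set.univ s (⟨m, y⟩ : Column)) = fun _ => s :=
    funext fun y => constOn_apply_of_mem (Set.mem_univ _) s
  change columnAct _ * rowAct (.ofAdd v) * (columnAct _)⁻¹ = rowAct (.ofAdd w)
  rw [huniv, columnAct_conj_rowAct s hvw]

theorem columnwise_constOn_singleton (m : ℕ) (y : ZMod (m + 1)) (s : alternatingGroup ι) :
    columnwise (constOn {⟨m, y⟩} s) =
      (Pi.mulSingle m (columnAct (constOn {y} s)) : GridProduct ι) := by
  ext1 n
  obtain rfl | hn := eq_or_ne n m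
  · rw [Pi.mulSingle_eq_same]
    refine congrArg columnAct (funext fun z => ?_)
    by_cases hz : z = y <;> simp [hz]
  · rw [Pi.mulSingle_eq_of_ne hn]
    refine (congrArg columnAct (funext fun z => ?_)).trans (map_one _)
    exact constOn_apply_of_notMem (fun h => hn (congrArg Sigma.fst h)) s

theorem trunc_columnwise_constOn (M : ℕ) (V : Set Column) (s : alternatingGroup ι) :
    trunc (Set.Ici M) (columnwise (constOn V s)) = columnwise (constOn (V ∩ tail M) s) := by
  ext1 m
  by_cases hm : m ∈ Set.Ici M
  · rw [trunc_apply_of_mem hm]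
    refine congrArg columnAct (funext fun y => ?_)
    have hy : (⟨m, y⟩ : Column) ∈ tail M := hm
    by_cases hV : (⟨m, y⟩ : Column) ∈ V <;> simp [hV, hy]
  · rw [trunc_apply_of_notMem hm]
    refine ((congrArg columnAct (funext fun y => ?_)).trans (map_one _)).symm
    exact constOn_apply_of_notMem (fun h => hm h.2) s

section UniformColumns

variable {G H : Subgroup (GridProduct ι)} {V : Set Column}

theorem translateColumns_mem_uniformSets (hι : 4 ≤ Fintype.card ι)
    (hG : ∀ v : Multiplicative (zeroSum ι), rowShift v ∈ G)
    (hGH : G ≤ Subgroup.normalizer (H : Set (GridProduct ι))) (k : ℤ)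
    (hV : V ∈ uniformSets columnwise H) : translateColumns k V ∈ uniformSets columnwise H :=
  mem_uniformSets_of_conj (closure_exists_fixed_eq_top hι) hGH hV fun _ ⟨l, hl⟩ =>
    ⟨_, hG (.ofAdd (balance l fun _ => k)),
      rowShift_conj_columnwise_constOn hl (fun _ hi => balance_apply_of_ne hi _) V⟩

theorem sdiff_translateColumns_mem_uniformSets (hι : 5 ≤ Fintype.card ι)
    (hGH : G ≤ Subgroup.normalizer (H : Set (GridProduct ι))) {q : ℕ}
    (hq : ∀ v : Multiplicative (zeroSum ι), rowShift (v ^ q) ∈ H)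
    (hV : V ∈ uniformSets columnwise G) :
    V \ translateColumns q V ∈ uniformSets columnwise H :=
  have := isPerfect_alternatingGroup hι
  sdiff_mem_uniformSets_of_conj (closure_exists_fixed_eq_top (by lia)) hGH hV fun _ ⟨l, hl⟩ =>
    ⟨_, hq (.ofAdd (balance l 1)), rowShift_conj_columnwise_constOn hl
      (v := q • balance l 1) (fun _ hi => by simp [balance_apply_of_ne hi]) V⟩

end UniformColumns

variable (ι) in
/-- The finitely generated group generated by the cyclic actions on the rows and by the
permutations of columns which are constant on all columns, on the columns at position zero, or on
the columns in `aperiodic`. -/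
noncomputable def gridGroup : Subgroup (GridProduct ι) :=
  (columnwise.comp (constOn Set.univ)).range ⊔ (columnwise.comp (constOn origin)).range ⊔
    (columnwise.comp (constOn aperiodic)).range ⊔ rowShift.range

theorem gridGroup_fg : (gridGroup ι).FG := by
  refine ((Subgroup.FG.sup ?_ ?_).sup ?_).sup ?_ <;>
    exact (Group.fg_iff_subgroup_fg _).1 (Group.fg_range _)

theorem univ_mem_uniformSets : Set.univ ∈ uniformSets columnwise (gridGroup ι) := fun s =>
  Subgroup.mem_sup_left (Subgroup.mem_sup_left (Subgroup.mem_sup_left ⟨s, rfl⟩))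

theorem origin_mem_uniformSets : origin ∈ uniformSets columnwise (gridGroup ι) := fun s =>
  Subgroup.mem_sup_left (Subgroup.mem_sup_left (Subgroup.mem_sup_right ⟨s, rfl⟩))

theorem aperiodic_mem_uniformSets : aperiodic ∈ uniformSets columnwise (gridGroup ι) := fun s =>
  Subgroup.mem_sup_left (Subgroup.mem_sup_right ⟨s, rfl⟩)

theorem rowShift_mem_gridGroup (v : Multiplicative (zeroSum ι)) : rowShift v ∈ gridGroup ι :=
  Subgroup.mem_sup_right ⟨v, rfl⟩

theorem gridGroup_le {L : Subgroup (GridProduct ι)} (huniv : Set.univ ∈ uniformSets columnwise L)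
    (horigin : origin ∈ uniformSets columnwise L)
    (haperiodic : aperiodic ∈ uniformSets columnwise L) (hrow : ∀ v, rowShift v ∈ L) :
    gridGroup ι ≤ L := by
  refine sup_le (sup_le (sup_le ?_ ?_) ?_) ?_ <;> rintro _ ⟨s, rfl⟩
  exacts [huniv s, horigin s, haperiodic s, hrow s]

theorem singleton_zero_mem_uniformSets (hι : 5 ≤ Fintype.card ι) (m : ℕ) :
    {(⟨m, 0⟩ : Column)} ∈ uniformSets columnwise (gridGroup ι) := by
  have := isPerfect_alternatingGroup hι
  induction m using Nat.strong_induction_on with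
  | _ m ih =>
    rw [singleton_zero_eq_sdiff]
    refine sdiff_mem_uniformSets Subgroup.le_normalizer (inter_mem_uniformSets
      Subgroup.le_normalizer origin_mem_uniformSets ?_) (biUnion_mem_uniformSets
      (Set.finite_Iio m) ih)
    exact translateColumns_mem_uniformSets (by lia) rowShift_mem_gridGroup
      Subgroup.le_normalizer _ origin_mem_uniformSets

theorem mulSingle_mem_gridGroup (hι : 5 ≤ Fintype.card ι) (m : ℕ)
    (x : alternatingGroup (ZMod (m + 1) × ι)) :
    (Pi.mulSingle m x : GridProduct ι) ∈ gridGroup ι := by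
  suffices (gridGroup ι).comap
      (MonoidHom.mulSingle (fun m : ℕ => alternatingGroup (ZMod (m + 1) × ι)) m) = ⊤ from
    this.ge (Subgroup.mem_top x)
  refine eq_top_of_rowAct_conj_mem ZMod.intCast_surjective (by lia) fun v s => ?_
  have hconj : (Pi.mulSingle m (rowAct v * columnAct (constOn {0} s) * (rowAct v)⁻¹) :
      GridProduct ι) = rowShift v * columnwise (constOn {⟨m, 0⟩} s) * (rowShift v)⁻¹ := by
    rw [columnwise_constOn_singleton]
    ext1 n
    obtain rfl | hn := eq_or_ne n m
    · simp [rowShift]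
    · simp [hn]
  rw [Subgroup.mem_comap, MonoidHom.mulSingle_apply, hconj]
  have hv := rowShift_mem_gridGroup v
  exact mul_mem (mul_mem hv (singleton_zero_mem_uniformSets hι m s)) (inv_mem hv)

theorem tail_mem_uniformSets (hι : 5 ≤ Fintype.card ι) (M : ℕ) :
    tail M ∈ uniformSets columnwise (gridGroup ι) := by
  have := isPerfect_alternatingGroup hι
  have hfin : (tail M)ᶜ.Finite := by
    refine ((Set.finite_Iio M).biUnion fun m _ => Set.finite_range (Sigma.mk m)).subset ?_
    exact fun ⟨m, y⟩ hm => Set.mem_biUnion (Set.mem_Iio.2 (not_le.1 hm)) ⟨y, rfl⟩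
  have heq : tail M = Set.univ \ ⋃ x ∈ (tail M)ᶜ, {x} := by
    rw [Set.biUnion_of_singleton, ← Set.compl_eq_univ_sdiff, compl_compl]
  rw [heq]
  refine sdiff_mem_uniformSets Subgroup.le_normalizer univ_mem_uniformSets
    (biUnion_mem_uniformSets hfin fun x _ s => ?_)
  rw [columnwise_constOn_singleton]
  exact mulSingle_mem_gridGroup hι _ _

theorem exists_commutator_eq_rowShift (hι : 4 ≤ Fintype.card ι) (l i : ι) (c : ℤ) :
    ∃ (s : alternatingGroup ι) (v : Multiplicative (zeroSum ι)),
      ⁅columnwise (constOn Set.univ s), rowShift v⁆ =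
        rowShift (.ofAdd (balance l (Pi.single i c))) := by
  obtain rfl | hil := eq_or_ne i l
  · refine ⟨1, 1, ?_⟩
    have h0 : balance i (Pi.single i c) = 0 := by
      ext t
      simp [balance_apply]
    rw [h0, ofAdd_zero, map_one rowShift, commutatorElement_one_right]
  obtain ⟨m, hmi, hml, -⟩ := exists_ne_ne_ne hι i l l
  obtain ⟨k, hki, hkl, hkm⟩ := exists_ne_ne_ne hι i l m
  let s : alternatingGroup ι := ⟨Equiv.swap i l * Equiv.swap i m,
    (Equiv.Perm.isThreeCycle_swap_mul_swap_same hil hmi.symm hml.symm).mem_alternatingGroup⟩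
  have hsl : s.1 l = i := by simp [s, Equiv.swap_apply_of_ne_of_ne hil.symm hml.symm]
  have hsk : s.1 k = k := by simp [s, Equiv.swap_apply_of_ne_of_ne, hki, hkl, hkm]
  refine ⟨s, .ofAdd (balance k (Pi.single l c)), ?_⟩
  rw [commutatorElement_def, columnwise_conj_rowShift s (w := balance k (Pi.single i c)),
    ← div_eq_mul_inv, ← map_div, ← ofAdd_sub]
  · congr 2
    ext t
    simp [balance_apply]
  · intro t
    have hti : s.1 t = i ↔ t = l := by rw [← hsl, s.1.injective.eq_iff]
    have htk : s.1 t = k ↔ t = k := by simpa only [hsk] using s.1.injective.eq_iff (b := k)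
    simp [balance_apply, Pi.single_apply, hti, htk]

variable {H : Subgroup (GridProduct ι)}

theorem exists_tail_mem_uniformSets
    (hH : gridGroup ι ≤ Subgroup.normalizer (H : Set (GridProduct ι)))
    (hι : 5 ≤ Fintype.card ι) {n : ℕ} (hn : n ≠ 0)
    (hpow : ∀ v : Multiplicative (zeroSum ι), rowShift (v ^ n) ∈ H) :
    ∃ M, tail M ∈ uniformSets columnwise H := by
  have := isPerfect_alternatingGroup hι
  obtain ⟨q, M, N, ⟨r, rfl⟩, htail⟩ := exists_tail_subset_biUnion_translateColumns hn
  refine ⟨M, ?_⟩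
  rw [← Set.inter_eq_left.2 htail]
  refine inter_mem_uniformSets hH (tail_mem_uniformSets hι M)
    (biUnion_mem_uniformSets (Set.finite_Icc _ _) fun k _ => ?_)
  refine translateColumns_mem_uniformSets (by lia) rowShift_mem_gridGroup hH k ?_
  refine sdiff_translateColumns_mem_uniformSets hι hH (fun v => ?_) aperiodic_mem_uniformSets
  rw [mul_comm, pow_mul]
  exact hpow (v ^ r)

theorem trunc_rowShift_mem_of_tail_mem_uniformSets
    (hH : gridGroup ι ≤ Subgroup.normalizer (H : Set (GridProduct ι)))
    (hι : 4 ≤ Fintype.card ι) {M : ℕ} (hM : tail M ∈ uniformSets columnwise H)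
    (v : Multiplicative (zeroSum ι)) :
    trunc (Set.Ici M) (rowShift v) ∈ H := by
  obtain ⟨l⟩ : Nonempty ι := Fintype.card_pos_iff.1 (by lia)
  have hbalance (i : ι) (c : ℤ) :
      trunc (Set.Ici M) (rowShift (.ofAdd (balance l (Pi.single i c)))) ∈ H := by
    obtain ⟨s, w, h⟩ := exists_commutator_eq_rowShift hι l i c
    rw [← h, trunc_commutatorElement, trunc_columnwise_constOn, Set.univ_inter,
      ← inv_mem_iff, commutatorElement_inv]
    exact commutator_mem_of_le_normalizer hH (rowShift_mem_gridGroup w) (hM s)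
  suffices v ∈ H.comap ((trunc (Set.Ici M)).comp rowShift) from this
  rw [← ofAdd_toAdd v, ← sum_balance_single l v.toAdd, ofAdd_sum]
  exact prod_mem fun i _ => hbalance i _

theorem trunc_mem_of_tail_mem_uniformSets
    (hH : gridGroup ι ≤ Subgroup.normalizer (H : Set (GridProduct ι)))
    (hι : 5 ≤ Fintype.card ι) {M : ℕ}
    (hM : tail M ∈ uniformSets columnwise H) {g : GridProduct ι} (hg : g ∈ gridGroup ι) :
    trunc (Set.Ici M) g ∈ H := by
  have := isPerfect_alternatingGroup hι
  have hset {V : Set Column} (hV : V ∈ uniformSets columnwise (gridGroup ι)) :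
      V ∈ uniformSets columnwise (H.comap (trunc (Set.Ici M))) := fun s => by
    rw [Subgroup.mem_comap, trunc_columnwise_constOn]
    exact inter_mem_uniformSets hH hV hM s
  exact gridGroup_le (hset univ_mem_uniformSets) (hset origin_mem_uniformSets)
    (hset aperiodic_mem_uniformSets)
    (trunc_rowShift_mem_of_tail_mem_uniformSets hH (by lia) hM) hg

theorem isFrame_gridGroup (hι : 5 ≤ Fintype.card ι) : IsFrame_s2 (gridGroup ι) where
  fg := gridGroup_fg
  mulSingle_mem := mulSingle_mem_gridGroup hι
  exists_finite_support Q _ _ f := by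
    set H := f.ker.map (gridGroup ι).subtype
    have hH : gridGroup ι ≤ Subgroup.normalizer (H : Set (GridProduct ι)) := by
      simpa only [Subgroup.normalizer_eq_top, Subgroup.range_subtype,
        ← MonoidHom.range_eq_map] using
        Subgroup.le_normalizer_map (H := f.ker) (gridGroup ι).subtype
    have hpow (v : Multiplicative (zeroSum ι)) : rowShift (v ^ Nat.card Q) ∈ H :=
      ⟨⟨_, rowShift_mem_gridGroup v⟩ ^ Nat.card Q,
        by rw [SetLike.mem_coe, MonoidHom.mem_ker, map_pow, pow_card_eq_one'], (map_pow _ _ _).symm⟩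
    obtain ⟨M, hM⟩ := exists_tail_mem_uniformSets hH hι Nat.card_pos.ne' hpow
    refine ⟨Set.Iio M, Set.finite_Iio M, fun g hg => ?_⟩
    have htrunc : trunc (Set.Ici M) (g : GridProduct ι) = g := by
      ext1 m
      by_cases hm : M ≤ m
      · exact trunc_apply_of_mem hm _
      · rw [trunc_apply_of_notMem (mt Set.mem_Ici.1 hm), hg m (Set.mem_Iio.2 (not_le.1 hm))]
    have hgH : (g : GridProduct ι) ∈ H :=
      htrunc ▸ trunc_mem_of_tail_mem_uniformSets hH hι hM g.2
    exact (Subgroup.mem_map_iff_mem (gridGroup ι).subtype_injective).1 hgH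

end Grids

theorem generatedByImages_alternatingGroup_grid (n : ℕ) :
    GeneratedByImages (2 ^ 4) (alternatingGroup (ZMod (n / 5 + 1) × Fin 5))
      (alternatingGroup (Fin (n + 5))) := by
  have hgrid : Fintype.card (ZMod (n / 5 + 1) × Fin 5) = 5 * (n / 5 + 1) := by
    rw [Fintype.card_prod, ZMod.card, Fintype.card_fin, mul_comm]
  refine (generatedByImages_alternatingGroup (by lia) (n % 5) ?_).mono
    (Nat.pow_le_pow_right two_pos (Nat.le_of_lt_succ (n.mod_lt (by lia))))
  rw [hgrid, Fintype.card_fin]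
  lia

theorem cartesian_product_generated_by_alt_images_is_profinite_completion_general
    (d : ℕ) (T : ℕ → Type) [∀ n, Group (T n)]
    [∀ n, TopologicalSpace (T n)] [∀ n, DiscreteTopology (T n)]
    (hgen : ∀ n : ℕ, ∃ φ : Fin d → (alternatingGroup (Fin (n + 5)) →* T (n + 5)),
      (⨆ i, (φ i).range) = ⊤) :
    Nonempty (ProfiniteCompletionWitness (∀ n : ℕ, T (n + 5))) := by
  have hT (n : ℕ) : GeneratedByImages (2 ^ 4 * d) (alternatingGroup (ZMod (n / 5 + 1) × Fin 5))
      (T (n + 5)) := (generatedByImages_alternatingGroup_grid n).trans (hgen n)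
  have hμ : Function.Injective fun n : ℕ => (n / 5, Fin.ofNat 5 n) := (Nat.divModEquiv 5).injective
  have hgrid : IsFrame_s2 (gridGroup (Fin 5)) := isFrame_gridGroup (Fintype.card_fin 5).ge
  obtain ⟨H, hH⟩ := hgrid.exists_isFrame_of_generatedByImages hμ hT
  exact hH.nonempty_profiniteCompletionWitness

/-- **Remark (Kassabov–Nikolov).**  Let `d ∈ ℕ` and let `(T n)_{n ≥ 5}` be a family of finite
groups such that each `T n` is generated by the images of `d` homomorphisms from the
alternating group `Alt(n)`.  Then the Cartesian product `∏_{n ≥ 5} T n` (a profinite group,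
with each factor discrete) is the profinite completion of a finitely generated residually
finite group. -/
theorem cartesian_product_generated_by_alt_images_is_profinite_completion
    (d : ℕ) (T : ℕ → Type) [∀ n, Group (T n)] [∀ n, Finite (T n)]
    [∀ n, TopologicalSpace (T n)] [∀ n, DiscreteTopology (T n)]
    (hgen : ∀ n : ℕ, ∃ φ : Fin d → (alternatingGroup (Fin (n + 5)) →* T (n + 5)),
      (⨆ i, (φ i).range) = ⊤) :
    Nonempty (ProfiniteCompletionWitness (∀ n : ℕ, T (n + 5))) :=
  cartesian_product_generated_by_alt_images_is_profinite_completion_general d T hgen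
end

section
/- For every odd prime p there exists a subgroup G₁ of ∏_{n=3}^∞ Alt(u_{n,p}) generated by 10 elements which is a frame for ∏_{n=3}^∞ Alt(u_{n,p}): G₁ contains the restricted direct sum ⊕_{n=3}^∞ Alt(u_{n,p}), and every finite-index subgroup of G₁ contains a principal congruence subgroup G₁ ∩ ker(∏_{n≥3} Alt(u_{n,p}) → ∏_{n∈V} Alt(u_{n,p})) for some finite set V of indices. -/
/-- A subgroup `G` of a Cartesian product `∏ i, S i` of finite groups is a *frame* if it is
finitely generated, contains the restricted direct sum (all elements with finite support),
and every finite-index subgroup of `G` contains a principal congruence subgroup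
`G ∩ ker(∏ i, S i → ∏ i ∈ V, S i)` for some finite set `V` of indices. -/
def IsFrame {ι : Type*} {S : ι → Type*} [∀ i, Group (S i)]
    (G : Subgroup (∀ i, S i)) : Prop :=
  G.FG ∧
  (∀ x : ∀ i, S i, {i | x i ≠ 1}.Finite → x ∈ G) ∧
  (∀ H : Subgroup G, H.FiniteIndex →
    ∃ V : Finset ι, ∀ g : G, (∀ i ∈ V, (g : ∀ i, S i) i = 1) → g ∈ H)

/-!
The permuted points are arranged in six levels `X n × Fin 6` over a finite base `X n` with
`n + 1` cyclically permuted binary coordinates. Acting fibre by fibre over subsets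
`U` of the bases with elements of `Alt(5)`, the commutator of a permutation over `U` and one over
`W` lives over `U ∩ W`, and since `Alt(5)` is perfect, the families of subsets over which a group
contains all of `Alt(5)` are closed under Boolean operations and translations.

A suitable translate of the family of origins agrees with it over the `n`-th base and is disjoint
from it over all later ones. The intersection gives an element of the group which is trivial in
all coordinates beyond `n` and a three-cycle of three points in the `n`-th. Its conjugates generate
the alternating group, so the direct sum is obtained by successive elimination of the last
nontrivial coordinate.

For a normal subgroup `J` of finite index containing the direct sum, the pigeonhole principle
applied to the half-spaces `x i = 0` makes `J` full over a cylinder `x i = 1, x j = 0`. Four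
translates of it cover all but finitely many bases, so `J` contains `Alt(5)` over everything and
hence each generator. A finitely generated group containing the direct sum and without finite
quotients modulo it is a frame.

Five levels are always moved. The sixth one is only used over a subset of each base, whose size
adjusts the degree.
-/

namespace AlternatingFrame

open Equiv Filter

section Criterion

/-- The finite quotients of `G` modulo its subgroup of elements of finite support are all trivial:
this says that each normal subgroup of finite index containing those elements is `G`, but for
subgroups of the ambient product, so that `K` is normalized by `G` rather than normal. -/
def NoFiniteQuotientModSum {ι : Type*} {S : ι → Type*} [∀ i, Group (S i)]
    (G : Subgroup (∀ i, S i)) : Prop :=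
  ∀ K ≤ G, G ≤ Subgroup.normalizer (K : Set (∀ i, S i)) → K.relIndex G ≠ 0 →
    (∀ y ∈ G, {i | y i ≠ 1}.Finite → y ∈ K) → G ≤ K

lemma finite_monoidHom_of_fg (G Q : Type*) [Group G] [Group.FG G] [Group Q] [Finite Q] :
    Finite (G →* Q) := by
  obtain ⟨s, hs, hfin⟩ := Group.fg_iff.1 ‹Group.FG G›
  have := hfin.to_subtype
  refine Finite.of_injective (fun (φ : G →* Q) (x : s) => φ x) fun φ ψ h => ?_
  exact MonoidHom.eq_of_eqOn_dense hs fun x hx => congrFun h ⟨x, hx⟩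

variable {ι : Type*} {S P : ι → Type*} [∀ i, Group (S i)] [∀ i, Group (P i)]

open Classical in
/-- The endomorphism of a product of groups which replaces the coordinates in `V` by `1`. -/
noncomputable def deleteCoords (V : Finset ι) : (∀ i, S i) →* ∀ i, S i :=
  MonoidHom.pi fun i => if i ∈ V then 1 else Pi.evalMonoidHom S i

lemma deleteCoords_apply_of_mem {V : Finset ι} {i : ι} (hi : i ∈ V) (y : ∀ i, S i) :
    deleteCoords V y i = 1 := by
  simp [deleteCoords, hi]

lemma deleteCoords_apply_of_notMem {V : Finset ι} {i : ι} (hi : i ∉ V) (y : ∀ i, S i) :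
    deleteCoords V y i = y i := by
  simp [deleteCoords, hi]

lemma deleteCoords_eq_self {V : Finset ι} {y : ∀ i, S i} (hy : ∀ i ∈ V, y i = 1) :
    deleteCoords V y = y := by
  ext i
  by_cases hi : i ∈ V
  · rw [deleteCoords_apply_of_mem hi, hy i hi]
  · rw [deleteCoords_apply_of_notMem hi]

lemma deleteCoords_eq_one {V : Finset ι} {y : ∀ i, S i} (hy : ∀ i ∉ V, y i = 1) :
    deleteCoords V y = 1 := by
  ext i
  by_cases hi : i ∈ V
  · rw [deleteCoords_apply_of_mem hi, Pi.one_apply]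
  · rw [deleteCoords_apply_of_notMem hi, hy i hi, Pi.one_apply]

lemma deleteCoords_mem {G : Subgroup (∀ i, S i)}
    (hsum : ∀ y : ∀ i, S i, {i | y i ≠ 1}.Finite → y ∈ G) (V : Finset ι) {y : ∀ i, S i}
    (hy : y ∈ G) : deleteCoords V y ∈ G := by
  have hfin : {i | (deleteCoords V y * y⁻¹) i ≠ 1}.Finite := by
    refine V.finite_toSet.subset fun i hi => by_contra fun hiV => hi ?_
    rw [Pi.mul_apply, deleteCoords_apply_of_notMem hiV, Pi.inv_apply, mul_inv_cancel]
  simpa using G.mul_mem (hsum _ hfin) hy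

/-- For a homomorphism `θ` onto a finite quotient, `θ ∘ deleteCoords V` takes only finitely many
values as `V` varies. A value `ψ` taken for arbitrarily large `V` kills the elements of finite
support, so it is trivial, and hence so is `θ` on the elements supported off one of those `V`. -/
theorem isFrame_of_noFiniteQuotientModSum {G : Subgroup (∀ i, S i)} (hfg : G.FG)
    (hsum : ∀ y : ∀ i, S i, {i | y i ≠ 1}.Finite → y ∈ G) (hG : NoFiniteQuotientModSum G) :
    IsFrame G := by
  refine ⟨hfg, hsum, fun H _ => ?_⟩
  have := (Group.fg_iff_subgroup_fg G).2 hfg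
  have := finite_monoidHom_of_fg G (G ⧸ H.normalCore)
  let Θ (V : Finset ι) : G →* G ⧸ H.normalCore := (QuotientGroup.mk' _).comp
    (((deleteCoords V).comp G.subtype).codRestrict G fun g => deleteCoords_mem hsum V g.2)
  obtain ⟨ψ, hψ⟩ : ∃ ψ, ∃ᶠ V in atTop, Θ V = ψ :=
    frequently_exists.1 (Eventually.of_forall fun V => ⟨_, rfl⟩).frequently
  have hker : ∀ g : G, {i | (g : ∀ i, S i) i ≠ 1}.Finite → ψ g = 1 := fun g hg => by
    obtain ⟨V, rfl, hV⟩ := (hψ.and_eventually (eventually_ge_atTop hg.toFinset)).exists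
    have hone : deleteCoords V (g : ∀ i, S i) = 1 :=
      deleteCoords_eq_one fun i hi => by_contra fun h => hi (hV (hg.mem_toFinset.2 h))
    exact congrArg (QuotientGroup.mk' H.normalCore) (Subtype.ext hone)
  have htop : G ≤ ψ.ker.map G.subtype := by
    have hcomap : (ψ.ker.map G.subtype).subgroupOf G = ψ.ker :=
      Subgroup.comap_map_eq_self_of_injective G.subtype_injective _
    refine hG _ (Subgroup.map_subtype_le _) ?_ ?_ fun y hy hfin => ⟨⟨y, hy⟩, hker _ hfin, rfl⟩
    · rw [← Subgroup.normal_subgroupOf_iff_le_normalizer (Subgroup.map_subtype_le _), hcomap]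
      infer_instance
    · rw [Subgroup.relIndex, hcomap]
      exact Subgroup.FiniteIndex.index_ne_zero
  obtain ⟨V, rfl⟩ := hψ.exists
  refine ⟨V, fun g hg => H.normalCore_le ?_⟩
  obtain ⟨k, hk, hkg⟩ := htop g.2
  obtain rfl : k = g := Subtype.ext hkg
  have hself : Θ V k = QuotientGroup.mk' H.normalCore k :=
    congrArg (QuotientGroup.mk' H.normalCore) (Subtype.ext (deleteCoords_eq_self hg))
  exact (QuotientGroup.eq_one_iff k).1 (hself.symm.trans hk)

lemma NoFiniteQuotientModSum.of_map {f : ∀ i, S i →* P i} (hf : ∀ i, Function.Injective (f i))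
    {G : Subgroup (∀ i, S i)} (h : NoFiniteQuotientModSum (G.map (MonoidHom.piMap f))) :
    NoFiniteQuotientModSum G := by
  have hinj : Function.Injective (MonoidHom.piMap f) := Function.Injective.piMap hf
  intro K hKG hnorm hidx hsum
  rw [← Subgroup.map_le_map_iff_of_injective hinj]
  refine h _ (Subgroup.map_mono hKG) ?_ ?_ ?_
  · exact (Subgroup.map_mono hnorm).trans (Subgroup.le_normalizer_map _)
  · rwa [Subgroup.relIndex_map_map_of_injective _ _ hinj]
  · rintro _ ⟨y, hy, rfl⟩ hfin
    refine ⟨y, hsum y hy ?_, rfl⟩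
    simpa [map_eq_one_iff _ (hf _)] using hfin

end Criterion

section LeadingCoordinates

variable {S P : ℕ → Type*} [∀ n, Group (S n)] [∀ n, Group (P n)]

/-- The values at `n` of the elements of `G` which are trivial in all coordinates beyond `n`. -/
def leadingGroup (G : Subgroup (∀ n, S n)) (n : ℕ) : Subgroup (S n) :=
  (G ⊓ Subgroup.pi (Set.Ioi n) fun _ => ⊥).map (Pi.evalMonoidHom S n)

lemma mem_leadingGroup {G : Subgroup (∀ n, S n)} {n : ℕ} {a : S n} :
    a ∈ leadingGroup G n ↔ ∃ y ∈ G, (∀ j > n, y j = 1) ∧ y n = a := by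
  simp [leadingGroup, Subgroup.mem_pi, and_assoc]

lemma conj_mem_leadingGroup {G : Subgroup (∀ n, S n)} {n : ℕ} {a : S n}
    (ha : a ∈ leadingGroup G n) {g : ∀ n, S n} (hg : g ∈ G) :
    g n * a * (g n)⁻¹ ∈ leadingGroup G n := by
  obtain ⟨y, hy, hyj, rfl⟩ := mem_leadingGroup.1 ha
  refine mem_leadingGroup.2 ⟨g * y * g⁻¹, mul_mem (mul_mem hg hy) (inv_mem hg), fun j hj => ?_, rfl⟩
  simp [hyj j hj]

lemma leadingGroup_eq_top_of_map {f : ∀ n, S n →* P n} (hf : ∀ n, Function.Injective (f n))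
    {G : Subgroup (∀ n, S n)} {n : ℕ}
    (h : (f n).range ≤ leadingGroup (G.map (MonoidHom.piMap f)) n) : leadingGroup G n = ⊤ := by
  refine eq_top_iff.2 fun a _ => mem_leadingGroup.2 ?_
  obtain ⟨_, ⟨y, hy, rfl⟩, hyj, hyn⟩ := mem_leadingGroup.1 (h ⟨a, rfl⟩)
  exact ⟨y, hy, fun j hj => (map_eq_one_iff _ (hf j)).1 (hyj j hj), hf n hyn⟩

lemma mem_of_leadingGroup_eq_top {G : Subgroup (∀ n, S n)} (hG : ∀ n, leadingGroup G n = ⊤)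
    (y : ∀ n, S n) (hy : {n | y n ≠ 1}.Finite) : y ∈ G := by
  obtain ⟨N, hN⟩ := hy.bddAbove
  have hbelow : ∀ m (y : ∀ n, S n), (∀ n ≥ m, y n = 1) → y ∈ G := by
    intro m
    induction m with
    | zero => exact fun y hy => (funext fun n => hy n n.zero_le : y = 1) ▸ G.one_mem
    | succ m ih =>
      intro y hy
      obtain ⟨z, hz, hzj, hzm⟩ := mem_leadingGroup.1 (hG m ▸ Subgroup.mem_top (y m))
      suffices y * z⁻¹ ∈ G by simpa using mul_mem this hz
      refine ih _ fun n hn => ?_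
      rcases hn.eq_or_lt with rfl | hlt
      · simp [hzm]
      · simp [hzj n hlt, hy n hlt]
  exact hbelow (N + 1) y fun n hn => by_contra fun h => (hN h).not_gt hn

end LeadingCoordinates

section Fibrations

variable {ι : Type*} {X : ι → Type*} {L : Type*}

open Classical in
/-- The permutations of the products `X i × L` which act by `c` on the fibres `{x} × L` over the
points `x ∈ U i`, and trivially on the other fibres. -/
noncomputable def fiberwise (U : ∀ i, Set (X i)) : Perm L →* ∀ i, Perm (X i × L) where
  toFun c i := prodCongrRight fun x => if x ∈ U i then c else 1
  map_one' := by ext <;> simp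
  map_mul' c c' := by ext i ⟨x, l⟩ <;> by_cases hx : x ∈ U i <;> simp [hx]

/-- The permutations of the products `X i × L` which act by `Λ l` on the level `X i × {l}`. -/
def levelwise : (L → ∀ i, Perm (X i)) →* ∀ i, Perm (X i × L) where
  toFun Λ i := prodCongrLeft fun l => Λ l i
  map_one' := rfl
  map_mul' _ _ := rfl

@[simp]
lemma fiberwise_apply_of_mem {U : ∀ i, Set (X i)} {i : ι} {x : X i} (hx : x ∈ U i) (c : Perm L)
    (l : L) : fiberwise U c i (x, l) = (x, c l) := by
  simp [fiberwise, hx]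

@[simp]
lemma fiberwise_apply_of_notMem {U : ∀ i, Set (X i)} {i : ι} {x : X i} (hx : x ∉ U i) (c : Perm L)
    (l : L) : fiberwise U c i (x, l) = (x, l) := by
  simp [fiberwise, hx]

@[simp]
lemma levelwise_apply (Λ : L → ∀ i, Perm (X i)) (i : ι) (x : X i) (l : L) :
    levelwise Λ i (x, l) = (Λ l i x, l) := rfl

open scoped commutatorElement in
lemma commutatorElement_fiberwise (U W : ∀ i, Set (X i)) (c c' : Perm L) :
    ⁅fiberwise U c, fiberwise W c'⁆ = fiberwise (U ⊓ W) ⁅c, c'⁆ := by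
  ext1 i
  ext1 ⟨x, l⟩
  by_cases hU : x ∈ U i <;> by_cases hW : x ∈ W i <;>
    simp [commutatorElement_def, ← map_inv, hU, hW]

lemma fiberwise_mul_of_disjoint {U W : ∀ i, Set (X i)} (h : Disjoint U W) (c : Perm L) :
    fiberwise U c * fiberwise W c = fiberwise (U ⊔ W) c := by
  ext1 i
  ext1 ⟨x, l⟩
  by_cases hU : x ∈ U i
  · simp [hU, Set.disjoint_left.1 (Pi.disjoint_iff.1 h i) hU]
  · by_cases hW : x ∈ W i <;> simp [hU, hW]

lemma fiberwise_top_conj_fiberwise (α c : Perm L) (U : ∀ i, Set (X i)) :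
    fiberwise ⊤ α * fiberwise U c * (fiberwise ⊤ α)⁻¹ = fiberwise U (α * c * α⁻¹) := by
  ext1 i
  ext1 ⟨x, l⟩
  by_cases hU : x ∈ U i <;> simp [← map_inv, hU]

lemma fiberwise_top_conj_levelwise (α : Perm L) (Λ : L → ∀ i, Perm (X i)) :
    fiberwise ⊤ α * levelwise Λ * (fiberwise ⊤ α)⁻¹ = levelwise fun l => Λ (α⁻¹ l) := by
  ext1 i
  ext1 ⟨x, l⟩
  simp [← map_inv]

lemma levelwise_inv_conj_fiberwise {Λ : L → ∀ i, Perm (X i)} {c : Perm L} {γ : ∀ i, Perm (X i)}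
    (h : ∀ l, c l ≠ l → Λ l = γ) (U : ∀ i, Set (X i)) :
    (levelwise Λ)⁻¹ * fiberwise U c * levelwise Λ = fiberwise (fun i => γ i ⁻¹' U i) c := by
  rw [mul_assoc, inv_mul_eq_iff_eq_mul]
  ext1 i
  ext1 ⟨x, l⟩
  by_cases hl : c l = l
  · by_cases hx : γ i x ∈ U i <;> by_cases hx' : Λ l i x ∈ U i <;> simp [hx, hx', hl]
  · by_cases hx : γ i x ∈ U i <;> simp [hx, h l hl, h (c l) (c.injective.ne hl)]

lemma fiberwise_eq_one {U : ∀ i, Set (X i)} {i : ι} (hU : U i = ∅) (c : Perm L) :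
    fiberwise U c i = 1 := by
  ext1 ⟨x, l⟩
  simp [hU]

/-- The permutation `i ↦ j ↦ k ↦ i`, a three-cycle when `i`, `j` and `k` are distinct. -/
def threeCycle {α : Type*} [DecidableEq α] (i j k : α) : Perm α := swap i j * swap j k

lemma fiberwise_threeCycle_of_eq_singleton [∀ i, DecidableEq (X i)] [DecidableEq L]
    {U : ∀ i, Set (X i)} {i : ι} {x : X i} (hU : U i = {x}) (j k l : L) :
    fiberwise U (threeCycle j k l) i = threeCycle (x, j) (x, k) (x, l) := by
  have hswap : ∀ j k : L, fiberwise U (swap j k) i = swap (x, j) (x, k) := fun j k => by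
    ext1 ⟨y, m⟩
    by_cases hy : y = x
    · subst hy
      simp [hU, (Prod.mk_right_injective y).swap_apply]
    · simp [hU, hy, swap_apply_of_ne_of_ne]
  simp only [threeCycle, map_mul, Pi.mul_apply, hswap]

end Fibrations

section SixLevels

open scoped commutatorElement

/-- The three-cycle on the first three of six levels. -/
abbrev lowCycle : Perm (Fin 6) := threeCycle 0 1 2

/-- The three-cycle on the last three of the first five of six levels. -/
abbrev highCycle : Perm (Fin 6) := threeCycle 2 3 4

/-- The alternating group on the first five of six levels, given by two generators. -/
def levelGroup : Subgroup (Perm (Fin 6)) := Subgroup.closure {lowCycle, highCycle}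

lemma lowCycle_mem : lowCycle ∈ levelGroup := Subgroup.subset_closure (by simp)

lemma highCycle_mem : highCycle ∈ levelGroup := Subgroup.subset_closure (by simp)

lemma conj_lowCycle :
    (lowCycle * highCycle) ^ 2 * lowCycle * ((lowCycle * highCycle) ^ 2)⁻¹ = highCycle := by
  decide

lemma conj_commutatorElement_lowCycle_highCycle :
    highCycle ^ 2 * lowCycle * ⁅lowCycle, highCycle⁆ * (highCycle ^ 2 * lowCycle)⁻¹ =
      lowCycle := by
  set_option maxRecDepth 10000 in decide

variable {ι : Type*} {X : ι → Type*}

/-- The families of sets over which `J` contains every element of `levelGroup`. -/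
def fullSets (J : Subgroup (∀ i, Perm (X i × Fin 6))) : Set (∀ i, Set (X i)) :=
  {U | ∀ α ∈ levelGroup, fiberwise U α ∈ J}

/-- The permutations of the bases which `G` induces on the third level without moving the first two
levels. -/
def translations (G : Subgroup (∀ i, Perm (X i × Fin 6))) : Subgroup (∀ i, Perm (X i)) :=
  (G.comap levelwise ⊓ (Pi.evalMonoidHom _ 0).ker ⊓ (Pi.evalMonoidHom _ 1).ker).map
    (Pi.evalMonoidHom _ 2)

/-- The three-cycle `(2 3 4)` of the levels, with its fifth level displaced by `γ`. -/
noncomputable def twist (γ : ∀ i, Perm (X i)) : ∀ i, Perm (X i × Fin 6) :=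
  levelwise (Pi.mulSingle 4 γ) * fiberwise ⊤ highCycle * (levelwise (Pi.mulSingle 4 γ))⁻¹

lemma mem_translations {G : Subgroup (∀ i, Perm (X i × Fin 6))} {γ : ∀ i, Perm (X i)} :
    γ ∈ translations G ↔ ∃ Λ, levelwise Λ ∈ G ∧ Λ 0 = 1 ∧ Λ 1 = 1 ∧ Λ 2 = γ := by
  simp only [translations, Subgroup.mem_map, Subgroup.mem_inf, Subgroup.mem_comap,
    MonoidHom.mem_ker, Pi.evalMonoidHom_apply, and_assoc]

variable {G J : Subgroup (∀ i, Perm (X i × Fin 6))} {U W : ∀ i, Set (X i)}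
  {γ : ∀ i, Perm (X i)}

lemma mem_translations_of_twist (hG : ⊤ ∈ fullSets G) (hγ : twist γ ∈ G) : γ ∈ translations G := by
  have hmem := mul_mem hγ (inv_mem (hG _ highCycle_mem))
  rw [twist, mul_assoc, mul_assoc, ← mul_assoc (fiberwise _ _), ← map_inv levelwise,
    fiberwise_top_conj_levelwise, ← map_mul] at hmem
  refine inv_mem_iff.1 (mem_translations.2 ⟨_, hmem, ?_⟩)
  simp [Pi.mulSingle_apply, show highCycle.symm 0 = 0 by decide,
    show highCycle.symm 1 = 1 by decide, show highCycle.symm 2 = 4 by decide]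

lemma fiberwise_conj_mem (hG : ⊤ ∈ fullSets G) (hJ : G ≤ Subgroup.normalizer (J : Set _))
    {α c : Perm (Fin 6)} (hα : α ∈ levelGroup) (hc : fiberwise U c ∈ J) :
    fiberwise U (α * c * α⁻¹) ∈ J := by
  rw [← fiberwise_top_conj_fiberwise]
  exact Subgroup.le_normalizer_iff.1 hJ _ (hG α hα) _ hc

lemma mem_fullSets_of_lowCycle (hG : ⊤ ∈ fullSets G)
    (hJ : G ≤ Subgroup.normalizer (J : Set _))
    (h : fiberwise U lowCycle ∈ J) : U ∈ fullSets J := by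
  suffices levelGroup ≤ J.comap (fiberwise U) from fun α hα => this hα
  refine (Subgroup.closure_le _).2 (Set.pair_subset h ?_)
  rw [SetLike.mem_coe, Subgroup.mem_comap, ← conj_lowCycle]
  exact fiberwise_conj_mem hG hJ (pow_mem (mul_mem lowCycle_mem highCycle_mem) 2) h

lemma mem_fullSets_of_commutatorElement (hG : ⊤ ∈ fullSets G)
    (hJ : G ≤ Subgroup.normalizer (J : Set _))
    (h : fiberwise U ⁅lowCycle, highCycle⁆ ∈ J) : U ∈ fullSets J := by
  have hα : highCycle ^ 2 * lowCycle ∈ levelGroup :=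
    mul_mem (pow_mem highCycle_mem 2) lowCycle_mem
  exact mem_fullSets_of_lowCycle hG hJ <|
    conj_commutatorElement_lowCycle_highCycle ▸ fiberwise_conj_mem hG hJ hα h

lemma commutatorElement_mem_of_le_normalizer {H : Type*} [Group H] {G J : Subgroup H}
    (hJ : G ≤ Subgroup.normalizer (J : Set H)) {x y : H} (hx : x ∈ J) (hy : y ∈ G) :
    ⁅x, y⁆ ∈ J := by
  rw [commutatorElement_def, mul_assoc, mul_assoc, ← mul_assoc y]
  exact mul_mem hx (Subgroup.le_normalizer_iff.1 hJ y hy _ (inv_mem hx))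

lemma inf_mem_fullSets (hG : ⊤ ∈ fullSets G) (hJ : G ≤ Subgroup.normalizer (J : Set _))
    (hU : U ∈ fullSets J) (hW : W ∈ fullSets G) : U ⊓ W ∈ fullSets J := by
  refine mem_fullSets_of_commutatorElement hG hJ ?_
  rw [← commutatorElement_fiberwise]
  exact commutatorElement_mem_of_le_normalizer hJ (hU _ lowCycle_mem) (hW _ highCycle_mem)

lemma compl_mem_fullSets (hG : ⊤ ∈ fullSets G) (hU : U ∈ fullSets G) : Uᶜ ∈ fullSets G := by
  intro α hα
  have hmul := fiberwise_mul_of_disjoint (disjoint_compl_right (a := U)) α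
  rw [sup_compl_eq_top, ← eq_inv_mul_iff_mul_eq] at hmul
  rw [hmul]
  exact mul_mem (inv_mem (hU α hα)) (hG α hα)

lemma sup_mem_fullSets (hG : ⊤ ∈ fullSets G) (hJG : J ≤ G)
    (hJ : G ≤ Subgroup.normalizer (J : Set _)) (hU : U ∈ fullSets J) (hW : W ∈ fullSets J) :
    U ⊔ W ∈ fullSets J := by
  have hUG : Uᶜ ∈ fullSets G := compl_mem_fullSets hG fun α hα => hJG (hU α hα)
  intro α hα
  rw [← sup_sdiff_self_right, sdiff_eq, ← fiberwise_mul_of_disjoint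
    (disjoint_compl_right.mono_right inf_le_right)]
  exact mul_mem (hU α hα) (inf_mem_fullSets hG hJ hW hUG α hα)

lemma sdiff_mem_fullSets (hG : ⊤ ∈ fullSets G) (hJ : G ≤ Subgroup.normalizer (J : Set _))
    (hU : U ∈ fullSets G) (hW : W ∈ fullSets G)
    (h : (fiberwise U lowCycle)⁻¹ * fiberwise W lowCycle ∈ J) :
    W \ U ∈ fullSets J := by
  have hWU : W \ U ∈ fullSets G :=
    sdiff_eq (x := W) ▸ inf_mem_fullSets hG Subgroup.le_normalizer hW (compl_mem_fullSets hG hU)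
  refine mem_fullSets_of_commutatorElement hG hJ ?_
  convert commutatorElement_mem_of_le_normalizer hJ h (hWU _ highCycle_mem) using 1
  ext1 i
  ext1 ⟨x, l⟩
  by_cases hU : x ∈ U i <;> by_cases hW : x ∈ W i <;>
    simp [commutatorElement_def, ← map_inv, hU, hW]

lemma preimage_mem_fullSets (hG : ⊤ ∈ fullSets G) (hJ : G ≤ Subgroup.normalizer (J : Set _))
    (hγ : γ ∈ translations G) (hU : U ∈ fullSets J) :
    (fun i => γ i ⁻¹' U i) ∈ fullSets J := by
  obtain ⟨Λ, hΛ, h0, h1, h2⟩ := mem_translations.1 hγ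
  have hconj : ∀ α ∈ levelGroup, levelwise (fun l => Λ (α⁻¹ l)) ∈ G := fun α hα => by
    rw [← fiberwise_top_conj_levelwise]
    exact mul_mem (mul_mem (hG α hα) hΛ) (inv_mem (hG α hα))
  set M : Fin 6 → ∀ i, Perm (X i) := Λ * (fun l => Λ (lowCycle⁻¹ l)) *
    fun l => Λ ((lowCycle ^ 2)⁻¹ l) with hM
  have hMG : levelwise M ∈ G := by
    simp only [hM, map_mul]
    exact mul_mem (mul_mem hΛ (hconj _ lowCycle_mem)) (hconj _ (pow_mem lowCycle_mem 2))
  have hMγ : ∀ l, lowCycle l ≠ l → M l = γ := fun l hl => by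
    have hone : lowCycle⁻¹ 0 = 2 ∧ lowCycle⁻¹ 1 = 0 ∧ lowCycle⁻¹ 2 = 1 := by decide
    have htwo : (lowCycle ^ 2)⁻¹ 0 = 1 ∧ (lowCycle ^ 2)⁻¹ 1 = 2 ∧ (lowCycle ^ 2)⁻¹ 2 = 0 := by
      decide
    obtain rfl | rfl | rfl : l = 0 ∨ l = 1 ∨ l = 2 := by revert l; decide
    all_goals simp only [hM, Pi.mul_apply, hone, htwo, h0, h1, h2, mul_one, one_mul]
  refine mem_fullSets_of_lowCycle hG hJ ?_
  rw [← levelwise_inv_conj_fiberwise hMγ]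
  simpa using Subgroup.le_normalizer_iff.1 hJ _ (inv_mem hMG) _ (hU _ lowCycle_mem)

lemma top_mem_fullSets (hG : ⊤ ∈ fullSets G) (hJG : J ≤ G)
    (hfin : ∀ y ∈ G, {i | y i ≠ 1}.Finite → y ∈ J) (hU : U ∈ fullSets J)
    (hUfin : {i | U i ≠ Set.univ}.Finite) : ⊤ ∈ fullSets J := by
  intro α hα
  suffices fiberwise ⊤ α * (fiberwise U α)⁻¹ ∈ J by simpa using mul_mem this (hU α hα)
  refine hfin _ (mul_mem (hG α hα) (inv_mem (hJG (hU α hα)))) (hUfin.subset fun i hi hUi => hi ?_)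
  ext1 ⟨x, l⟩
  simp [← map_inv, hUi]

lemma fullSets_subset (hG : ⊤ ∈ fullSets G) (hJ : G ≤ Subgroup.normalizer (J : Set _))
    (hJtop : ⊤ ∈ fullSets J) : fullSets G ⊆ fullSets J := fun U hU =>
  top_inf_eq U ▸ inf_mem_fullSets hG hJ hJtop hU

lemma twist_mem (hG : ⊤ ∈ fullSets G) (hJ : G ≤ Subgroup.normalizer (J : Set _))
    (hJtop : ⊤ ∈ fullSets J) (hγ : twist γ ∈ G) : twist γ ∈ J := by
  set s : ∀ i, Perm (X i × Fin 6) := levelwise (Pi.mulSingle 4 γ)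
  set a : ∀ i, Perm (X i × Fin 6) := fiberwise ⊤ lowCycle with ha
  have hfix : MulAut.conj s a = a := by
    have hΛ : ∀ l, lowCycle l ≠ l → (Pi.mulSingle 4 γ : Fin 6 → ∀ i, Perm (X i)) l = 1 :=
      fun l hl => by
        refine Pi.mulSingle_eq_of_ne ?_ _
        rintro rfl
        exact hl (by decide)
    have hcomm := levelwise_inv_conj_fiberwise hΛ ⊤
    rw [mul_assoc, inv_mul_eq_iff_eq_mul] at hcomm
    rw [MulAut.conj_apply, mul_inv_eq_iff_eq_mul]
    exact hcomm.symm
  have htwist : (a * twist γ) ^ 2 * a * ((a * twist γ) ^ 2)⁻¹ = twist γ := by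
    have := congrArg (fun c => MulAut.conj s (fiberwise ⊤ c)) conj_lowCycle
    simp only [map_mul, map_inv, map_pow, ← ha, hfix] at this
    exact this
  rw [← htwist]
  exact Subgroup.le_normalizer_iff.1 hJ _ (pow_mem (mul_mem (hG _ lowCycle_mem) hγ) 2) _
    (hJtop _ lowCycle_mem)

lemma fiberwise_threeCycle_015_mem (hG : ⊤ ∈ fullSets G)
    (hJ : G ≤ Subgroup.normalizer (J : Set _)) (hJtop : ⊤ ∈ fullSets J)
    (hU : fiberwise U (threeCycle 0 1 5) ∈ G) : fiberwise U (threeCycle 0 1 5) ∈ J := by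
  set α : Perm (Fin 6) := lowCycle ^ 2 * highCycle * lowCycle
  set β : Perm (Fin 6) := lowCycle ^ 2 * highCycle ^ 2
  have h0 := lowCycle_mem
  have h1 := highCycle_mem
  have hcomm := commutatorElement_mem_of_le_normalizer hJ
    (hJtop α (mul_mem (mul_mem (pow_mem h0 2) h1) h0)) hU
  rw [commutatorElement_fiberwise, top_inf_eq] at hcomm
  have hconj : β * ⁅α, threeCycle 0 1 5⁆ * β⁻¹ = threeCycle 0 1 5 := by
    set_option maxRecDepth 10000 in decide
  exact hconj ▸ fiberwise_conj_mem hG hJ (mul_mem (pow_mem h0 2) (pow_mem h1 2)) hcomm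

end SixLevels

section Generators

/-- The base of the `n`-th fibration: `n + 1` binary coordinates, permuted cyclically by `shift`,
and a residue which serves to adjust the number of points. -/
abbrev Base (d : ℕ → ℕ) (n : ℕ) : Type := (ZMod (n + 1) → ZMod 2) × ZMod (d n + 1)

variable {d : ℕ → ℕ}

/-- The cyclic shift of the binary coordinates. -/
def shift (n : ℕ) : Perm (Base d n) where
  toFun x := (fun j => x.1 (j + 1), x.2)
  invFun x := (fun j => x.1 (j - 1), x.2)
  left_inv x := by simp
  right_inv x := by simp

/-- The change of the `i`-th binary coordinate, where `i` is read modulo `n + 1`. -/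
def flipAt (i n : ℕ) : Perm (Base d n) := Equiv.addLeft (Pi.single (i : ZMod (n + 1)) 1, 0)

/-- The rotation of the cyclic factor of the base. -/
def rotation (n : ℕ) : Perm (Base d n) := Equiv.addLeft (0, 1)

/-- The points whose `i`-th binary coordinate vanishes, where `i` is read modulo `n + 1`. -/
def coordZero (i n : ℕ) : Set (Base d n) := {x | x.1 i = 0}

/-- The origin of each base. -/
def origin (n : ℕ) : Set (Base d n) := {0}

lemma shift_pow_apply (i n : ℕ) (x : Base d n) :
    (shift n ^ i) x = (fun j => x.1 (j + i), x.2) := by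
  induction i with
  | zero => simp
  | succ i ih =>
    rw [pow_succ', Perm.mul_apply, ih]
    simp [shift, add_assoc, add_comm (1 : ZMod (n + 1))]

lemma shift_pow_conj_flipAt (i : ℕ) :
    (shift ^ i)⁻¹ * flipAt 0 * shift ^ i = (flipAt i : ∀ n, Perm (Base d n)) := by
  rw [mul_assoc, inv_mul_eq_iff_eq_mul]
  ext1 n
  ext1 x
  refine Prod.ext (funext fun j => ?_) ?_ <;>
    simp [flipAt, Pi.single_apply, shift_pow_apply]

lemma natCast_zmod_ne {i j n : ℕ} (hij : i ≠ j) (hi : i ≤ n) (hj : j ≤ n) :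
    (i : ZMod (n + 1)) ≠ j := by
  rwa [Ne, ZMod.natCast_eq_natCast_iff', Nat.mod_eq_of_lt (by lia), Nat.mod_eq_of_lt (by lia)]

lemma cylinder_translates_cover {i j n : ℕ} (hij : (i : ZMod (n + 1)) ≠ j) :
    let D : Set (Base d n) := coordZero j n \ coordZero i n
    let V := D ∪ flipAt i n ⁻¹' D
    V ∪ flipAt j n ⁻¹' V = Set.univ := by
  have hcover : ∀ a b : ZMod 2, ((b = 0 ∧ ¬ a = 0) ∨ (b = 0 ∧ ¬ 1 + a = 0)) ∨
    ((1 + b = 0 ∧ ¬ a = 0) ∨ (1 + b = 0 ∧ ¬ 1 + a = 0)) := by decide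
  refine Set.eq_univ_of_forall fun x => ?_
  simpa [coordZero, flipAt, hij, hij.symm] using hcover (x.1 i) (x.1 j)

/-- The generators of the frame, as permutations of six levels over each base. The sets `Y n` are
the parts of the bases over which the sixth level is used. -/
noncomputable def generators (Y : ∀ n, Finset (Base d n)) :
    Fin 8 → ∀ n, Perm (Base d n × Fin 6) :=
  ![fiberwise ⊤ lowCycle, fiberwise ⊤ highCycle, twist shift, twist (flipAt 0), twist rotation,
    fiberwise (coordZero 0) lowCycle, fiberwise origin lowCycle,
    fiberwise (fun n => ↑(Y n)) (threeCycle 0 1 5)]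

/-- The group generated by `generators Y`. -/
noncomputable def frameGroup (Y : ∀ n, Finset (Base d n)) :
    Subgroup (∀ n, Perm (Base d n × Fin 6)) :=
  Subgroup.closure (Set.range (generators Y))

variable (Y : ∀ n, Finset (Base d n))

lemma generators_mem (m : Fin 8) : generators Y m ∈ frameGroup Y :=
  Subgroup.subset_closure ⟨m, rfl⟩

lemma top_mem_fullSets_frameGroup : ⊤ ∈ fullSets (frameGroup Y) := by
  suffices levelGroup ≤ (frameGroup Y).comap (fiberwise ⊤) from fun α hα => this hα
  exact (Subgroup.closure_le _).2 (Set.pair_subset (generators_mem Y 0) (generators_mem Y 1))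

lemma shift_mem_translations : shift ∈ translations (frameGroup Y) :=
  mem_translations_of_twist (top_mem_fullSets_frameGroup Y) (generators_mem Y 2)

lemma flipAt_mem_translations (i : ℕ) : flipAt i ∈ translations (frameGroup Y) := by
  have hs := pow_mem (shift_mem_translations Y) i
  rw [← shift_pow_conj_flipAt]
  exact mul_mem (mul_mem (inv_mem hs)
    (mem_translations_of_twist (top_mem_fullSets_frameGroup Y) (generators_mem Y 3))) hs

lemma rotation_mem_translations : rotation ∈ translations (frameGroup Y) :=
  mem_translations_of_twist (top_mem_fullSets_frameGroup Y) (generators_mem Y 4)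

lemma coordZero_mem_fullSets (i : ℕ) : coordZero i ∈ fullSets (frameGroup Y) := by
  have hG := top_mem_fullSets_frameGroup Y
  have hzero : coordZero 0 ∈ fullSets (frameGroup Y) :=
    mem_fullSets_of_lowCycle hG Subgroup.le_normalizer (generators_mem Y 5)
  convert preimage_mem_fullSets hG Subgroup.le_normalizer
    (pow_mem (shift_mem_translations Y) i) hzero using 1
  ext n x
  simp [coordZero, shift_pow_apply]

lemma origin_mem_fullSets : origin ∈ fullSets (frameGroup Y) :=
  mem_fullSets_of_lowCycle (top_mem_fullSets_frameGroup Y) Subgroup.le_normalizer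
    (generators_mem Y 6)

lemma exists_ne_inv_mul_mem_of_relIndex_ne_zero {H : Type*} [Group H] {G J : Subgroup H}
    (hJ : J.relIndex G ≠ 0) {α : Type*} [Infinite α] {s : α → H} (hs : ∀ i, s i ∈ G) :
    ∃ i j, i ≠ j ∧ (s i)⁻¹ * s j ∈ J := by
  have : (J.subgroupOf G).FiniteIndex := ⟨hJ⟩
  obtain ⟨i, j, hij, h⟩ := Finite.exists_ne_map_eq_of_infinite
    fun i => (QuotientGroup.mk ⟨s i, hs i⟩ : G ⧸ J.subgroupOf G)
  exact ⟨i, j, hij, Subgroup.mem_subgroupOf.1 (QuotientGroup.eq.1 h)⟩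

/-- By the pigeonhole principle, two of the three-cycles over coordinate half-spaces agree
modulo `J`, so `J` is full over a cylinder. Its translates cover almost all bases. -/
lemma top_mem_fullSets_of_relIndex_ne_zero {J : Subgroup (∀ n, Perm (Base d n × Fin 6))}
    (hJG : J ≤ frameGroup Y) (hJ : frameGroup Y ≤ Subgroup.normalizer (J : Set _))
    (hidx : J.relIndex (frameGroup Y) ≠ 0)
    (hfin : ∀ y ∈ frameGroup Y, {n | y n ≠ 1}.Finite → y ∈ J) : ⊤ ∈ fullSets J := by
  have hG := top_mem_fullSets_frameGroup Y
  obtain ⟨i, j, hij, h⟩ := exists_ne_inv_mul_mem_of_relIndex_ne_zero hidx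
    fun i => coordZero_mem_fullSets Y i _ lowCycle_mem
  have hD := sdiff_mem_fullSets hG hJ (coordZero_mem_fullSets Y i) (coordZero_mem_fullSets Y j) h
  have hV := sup_mem_fullSets hG hJG hJ hD
    (preimage_mem_fullSets hG hJ (flipAt_mem_translations Y i) hD)
  have hU := sup_mem_fullSets hG hJG hJ hV
    (preimage_mem_fullSets hG hJ (flipAt_mem_translations Y j) hV)
  refine top_mem_fullSets hG hJG hfin hU ((Set.finite_lt_nat (max i j)).subset fun n hn => ?_)
  by_contra hlt
  obtain ⟨hi, hj⟩ : i ≤ n ∧ j ≤ n := by simpa using hlt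
  exact hn (cylinder_translates_cover (natCast_zmod_ne hij hi hj))

theorem noFiniteQuotientModSum_frameGroup : NoFiniteQuotientModSum (frameGroup Y) := by
  intro J hJG hJ hidx hfin
  have hG := top_mem_fullSets_frameGroup Y
  have htop := top_mem_fullSets_of_relIndex_ne_zero Y hJG hJ hidx hfin
  have hfull := fullSets_subset hG hJ htop
  rw [frameGroup, Subgroup.closure_le]
  rintro _ ⟨m, rfl⟩
  match m with
  | 0 => exact htop _ lowCycle_mem
  | 1 => exact htop _ highCycle_mem
  | 2 => exact twist_mem hG hJ htop (generators_mem Y 2)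
  | 3 => exact twist_mem hG hJ htop (generators_mem Y 3)
  | 4 => exact twist_mem hG hJ htop (generators_mem Y 4)
  | 5 => exact hfull (coordZero_mem_fullSets Y 0) _ lowCycle_mem
  | 6 => exact hfull (origin_mem_fullSets Y) _ lowCycle_mem
  | 7 => exact fiberwise_threeCycle_015_mem hG hJ htop (generators_mem Y 7)

lemma addSubgroup_eq_top_of_single_mem {κ : Type*} [Finite κ] [DecidableEq κ] {m k : ℕ}
    [NeZero m] [NeZero k] {T : AddSubgroup ((κ → ZMod m) × ZMod k)}
    (hsingle : ∀ i, (Pi.single i 1, 0) ∈ T) (hone : (0, 1) ∈ T) : T = ⊤ := by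
  cases nonempty_fintype κ
  refine (AddSubgroup.eq_top_iff' T).2 fun x => ?_
  have hx : x = ∑ i, (x.1 i).val • (Pi.single i 1, 0) + x.2.val • (0, 1) := by
    refine Prod.ext (funext fun j => ?_) ?_ <;>
      simp [Prod.fst_sum, Prod.snd_sum, Pi.single_apply, -nsmul_eq_mul]
  rw [hx]
  exact add_mem (sum_mem fun i _ => nsmul_mem (hsingle i) _) (nsmul_mem hone _)

lemma exists_mem_translations_eq_addLeft {n : ℕ} (v : Base d n) :
    ∃ γ ∈ translations (frameGroup Y), γ n = Equiv.addLeft v := by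
  let T : AddSubgroup (Base d n) := (Subgroup.toAddSubgroup
    ((translations (frameGroup Y)).map (Pi.evalMonoidHom _ n))).comap
      (AddAction.toPermHom (Base d n) (Base d n))
  have hT : T = ⊤ := by
    refine addSubgroup_eq_top_of_single_mem
      (fun i => ⟨flipAt i.val, flipAt_mem_translations Y _, ?_⟩)
      ⟨rotation, rotation_mem_translations Y, rfl⟩
    simp only [flipAt, Pi.evalMonoidHom_apply, ZMod.natCast_zmod_val]
    rfl
  exact hT.ge (AddSubgroup.mem_top v)

variable {Y}

lemma exists_mem_frameGroup_apply {U : ∀ n, Set (Base d n)} {c : Perm (Fin 6)}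
    (hc : fiberwise U c ∈ frameGroup Y) {n : ℕ} {x : Base d n} (hx : x ∈ U n)
    (hzero : 0 ∈ U n → c 0 = 0 ∧ c 1 = 1) :
    ∃ g ∈ frameGroup Y, g n (0, 0) = (0, 0) ∧ g n (0, 1) = (0, 1) ∧ g n (0, 2) = (x, c 2) := by
  obtain ⟨γ, hγ, hγn⟩ := exists_mem_translations_eq_addLeft Y x
  obtain ⟨Λ, hΛ, h0, h1, rfl⟩ := mem_translations.1 hγ
  refine ⟨fiberwise U c * levelwise Λ, mul_mem hc hΛ, ?_⟩
  by_cases h : (0 : Base d n) ∈ U n <;> simp [h0, h1, hγn, hx, h, hzero]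

lemma exists_mem_frameGroup_fixing {n : ℕ} {z : Base d n × Fin 6} (hz : z.2 = 5 → z.1 ∈ Y n)
    (hz0 : z ≠ (0, 0)) (hz1 : z ≠ (0, 1)) :
    ∃ g ∈ frameGroup Y, g n (0, 0) = (0, 0) ∧ g n (0, 1) = (0, 1) ∧ g n (0, 2) = z := by
  have hG := top_mem_fullSets_frameGroup Y
  have horigin := compl_mem_fullSets hG (origin_mem_fullSets Y)
  have hfix : (0 : Base d n) ∈ origin n := rfl
  obtain ⟨x, l⟩ := z
  match l with
  | 0 =>
    exact exists_mem_frameGroup_apply (horigin _ lowCycle_mem) (x := x)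
      (fun h : x = 0 => hz0 (h ▸ rfl)) fun h => absurd hfix h
  | 1 =>
    exact exists_mem_frameGroup_apply (horigin _ (pow_mem lowCycle_mem 2)) (x := x)
      (fun h : x = 0 => hz1 (h ▸ rfl)) fun h => absurd hfix h
  | 2 => exact exists_mem_frameGroup_apply (hG _ (one_mem _)) (Set.mem_univ x) fun _ => ⟨rfl, rfl⟩
  | 3 => exact exists_mem_frameGroup_apply (hG _ highCycle_mem) (Set.mem_univ x) fun _ => by decide
  | 4 =>
    exact exists_mem_frameGroup_apply (hG _ (pow_mem highCycle_mem 2)) (Set.mem_univ x)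
      fun _ => by decide
  | 5 =>
    set α : Perm (Fin 6) := lowCycle * highCycle * lowCycle
    have hconj : α * (threeCycle 0 1 5) * α⁻¹ = threeCycle 2 3 5 := by decide
    have hmem : fiberwise (fun n => ↑(Y n)) (threeCycle 2 3 5) ∈ frameGroup Y :=
      hconj ▸ fiberwise_conj_mem hG Subgroup.le_normalizer
        (mul_mem (mul_mem lowCycle_mem highCycle_mem) lowCycle_mem) (generators_mem Y 7)
    refine exists_mem_frameGroup_apply (U := fun n => ↑(Y n)) (x := x)
      (c := threeCycle 2 3 5 ^ 2) ?_ (hz rfl) fun _ => by decide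
    rw [map_pow]
    exact pow_mem hmem 2

/-- Modulo `n + 1` the coordinates `0` and `n + 1` coincide, whereas modulo `j + 1` with `j > n`
they differ. So the origin agrees with its translate by the changes of these two coordinates over
the `n`-th base, and is disjoint from it over all later ones. -/
lemma threeCycle_mem_leadingGroup (n : ℕ) :
    threeCycle (0, 0) (0, 1) (0, 2) ∈ leadingGroup (frameGroup Y) n := by
  have hG := top_mem_fullSets_frameGroup Y
  set γ : ∀ n, Perm (Base d n) := (flipAt 0)⁻¹ * flipAt (n + 1)
  have hγmem : γ ∈ translations (frameGroup Y) :=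
    mul_mem (inv_mem (flipAt_mem_translations Y 0)) (flipAt_mem_translations Y (n + 1))
  have hU := inf_mem_fullSets hG Subgroup.le_normalizer (origin_mem_fullSets Y)
    (preimage_mem_fullSets hG Subgroup.le_normalizer hγmem (origin_mem_fullSets Y))
  refine mem_leadingGroup.2 ⟨_, hU _ lowCycle_mem, fun j hj => fiberwise_eq_one ?_ _,
    fiberwise_threeCycle_of_eq_singleton ?_ 0 1 2⟩
  · refine Set.eq_empty_of_forall_notMem ?_
    rintro x ⟨rfl : x = 0, hx : (flipAt 0 j)⁻¹ (flipAt (n + 1) j 0) = 0⟩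
    have hne := natCast_zmod_ne (n := j) n.succ_ne_zero hj j.zero_le
    rw [Perm.inv_eq_iff_eq] at hx
    refine hne ?_
    simpa [flipAt, Pi.single_apply] using congrFun (congrArg Prod.fst hx) (n + 1 : ℕ)
  · have hflip : flipAt 0 n = (flipAt (n + 1) n : Perm (Base d n)) := by
      simp only [flipAt, ZMod.natCast_self, Nat.cast_zero]
    have hγn : γ n = 1 := inv_mul_eq_one.2 hflip
    simp [origin, hγn]

end Generators

section Embedding

lemma closure_swap_eq_top {α : Type*} [Finite α] [DecidableEq α] (b : α) :
    Subgroup.closure {σ : Perm α | ∃ w ≠ b, σ = swap b w} = ⊤ := by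
  have : MulAction.IsPretransitive (Subgroup.closure {σ : Perm α | ∃ w ≠ b, σ = swap b w}) α := by
    refine (MulAction.isPretransitive_iff_base b).2 fun w => ?_
    rcases eq_or_ne w b with rfl | hw
    · exact ⟨1, one_smul _ _⟩
    · exact ⟨⟨swap b w, Subgroup.subset_closure ⟨w, hw, rfl⟩⟩, swap_apply_left b w⟩
  refine closure_of_isSwap_of_isPretransitive ?_
  rintro _ ⟨w, hw, rfl⟩
  exact ⟨b, w, hw.symm, rfl⟩

lemma alternatingGroup_le_of_threeCycle_mem {α : Type*} [Fintype α] [DecidableEq α] {a b : α}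
    {K : Subgroup (Perm α)} (hK : ∀ w, w ≠ a → w ≠ b → threeCycle a b w ∈ K) :
    alternatingGroup α ≤ K := by
  let IsEvenOrOdd (π : Perm α) : Prop :=
    (Perm.sign π = 1 ∧ π ∈ K) ∨ (Perm.sign π = -1 ∧ swap a b * π ∈ K)
  have hmem : ∀ w ≠ b, swap a b * swap b w ∈ K := fun w hw => by
    rcases eq_or_ne w a with rfl | ha
    · simp [swap_comm w b]
    · exact hK w ha hw
  have hstep : ∀ w ≠ b, ∀ π, IsEvenOrOdd π → IsEvenOrOdd (swap b w * π) := by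
    rintro w hw π (⟨hsign, hπ⟩ | ⟨hsign, hπ⟩)
    · exact Or.inr ⟨by simp [Perm.sign_swap hw.symm, hsign],
        by simpa [mul_assoc] using mul_mem (hmem w hw) hπ⟩
    · exact Or.inl ⟨by simp [Perm.sign_swap hw.symm, hsign],
        by simpa [mul_assoc] using mul_mem (inv_mem (hmem w hw)) hπ⟩
  have hall : ∀ π, IsEvenOrOdd π := fun π => by
    induction (closure_swap_eq_top b).ge (Subgroup.mem_top π)
      using Subgroup.closure_induction_left with
    | one => exact Or.inl ⟨Perm.sign_one, K.one_mem⟩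
    | mul_left σ hσ τ _ ih =>
      obtain ⟨w, hw, rfl⟩ := hσ
      exact hstep w hw τ ih
    | inv_mul_cancel σ hσ τ _ ih =>
      obtain ⟨w, hw, rfl⟩ := hσ
      exact swap_inv b w ▸ hstep w hw τ ih
  intro π hπ
  rw [Perm.mem_alternatingGroup] at hπ
  rcases hall π with h | h
  · exact h.2
  · exact absurd (hπ.symm.trans h.1) (by decide)

section Finset

variable {α β : Type*} [Fintype α] [DecidableEq α] [DecidableEq β] {s : Finset β}

/-- The permutations of `β` induced by the even permutations of a type equivalent to `s`. -/
def alternatingEmbedding (e : α ≃ s) : alternatingGroup α →* Perm β :=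
  (Perm.ofSubtype.comp (alternatingGroup s).subtype).comp e.altCongrHom.toMonoidHom

lemma alternatingEmbedding_injective (e : α ≃ s) : Function.Injective (alternatingEmbedding e) :=
  (Perm.ofSubtype_injective.comp Subtype.val_injective).comp e.altCongrHom.injective

lemma range_alternatingEmbedding (e : α ≃ s) :
    (alternatingEmbedding e).range = (alternatingGroup s).map Perm.ofSubtype := by
  rw [alternatingEmbedding, MonoidHom.range_comp,
    MonoidHom.range_eq_top.2 e.altCongrHom.surjective, ← MonoidHom.range_eq_map,
    MonoidHom.range_comp, Subgroup.range_subtype]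

lemma mem_range_alternatingEmbedding [Finite β] (e : α ≃ s) {σ : Perm β} {k : ℕ} (hk : Odd k)
    (hσ : σ ^ k = 1) (hfix : ∀ z ∉ s, σ z = z) : σ ∈ (alternatingEmbedding e).range := by
  cases nonempty_fintype β
  rw [range_alternatingEmbedding, alternatingGroup.map_ofSubtype]
  refine ⟨Perm.mem_range_ofSubtype_iff.2 fun z hz => ?_, Perm.mem_alternatingGroup.2 ?_⟩
  · by_contra h
    exact Perm.mem_support.1 hz (hfix z h)
  · have hsign : Perm.sign σ ^ k = 1 := by rw [← map_pow, hσ, map_one]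
    refine (Int.units_eq_one_or _).resolve_right fun h => ?_
    rw [h, hk.neg_one_pow] at hsign
    exact absurd hsign (by decide)

lemma range_alternatingEmbedding_le (e : α ≃ s) {K : Subgroup (Perm β)} {a b : β} (ha : a ∈ s)
    (hb : b ∈ s) (hK : ∀ w ∈ s, w ≠ a → w ≠ b → threeCycle a b w ∈ K) :
    (alternatingEmbedding e).range ≤ K := by
  rw [range_alternatingEmbedding, Subgroup.map_le_iff_le_comap]
  refine alternatingGroup_le_of_threeCycle_mem (a := ⟨a, ha⟩) (b := ⟨b, hb⟩) fun w hwa hwb => ?_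
  simpa [threeCycle, Perm.ofSubtype_swap_eq] using
    hK w w.2 (fun h => hwa (Subtype.ext h)) fun h => hwb (Subtype.ext h)

end Finset

variable {d : ℕ → ℕ} (Y : ∀ n, Finset (Base d n))

/-- The points moved by `frameGroup Y`: the first five levels, and the part of the sixth level
over `Y`. -/
def frameSupport (n : ℕ) : Finset (Base d n × Fin 6) := {z | z.2 = 5 → z.1 ∈ Y n}

lemma mem_frameSupport {Y : ∀ n, Finset (Base d n)} {n : ℕ} {z : Base d n × Fin 6} :
    z ∈ frameSupport Y n ↔ (z.2 = 5 → z.1 ∈ Y n) := by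
  simp [frameSupport]

lemma card_base (d : ℕ → ℕ) (n : ℕ) : Fintype.card (Base d n) = 2 ^ (n + 1) * (d n + 1) := by
  simp [ZMod.card]

lemma card_frameSupport (n : ℕ) :
    (frameSupport Y n).card = 5 * (2 ^ (n + 1) * (d n + 1)) + (Y n).card := by
  rw [← card_base, frameSupport, Finset.card_filter, Fintype.sum_prod_type_right,
    Fin.sum_univ_six]
  simp only [Fin.reduceEq, IsEmpty.forall_iff, ↓reduceIte, Finset.sum_const, Finset.card_univ,
    smul_eq_mul, mul_one, forall_const, Finset.sum_ite_mem, Finset.univ_inter]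
  ring

lemma generators_pow_three (m : Fin 8) : generators Y m ^ 3 = 1 := by
  have hfiberwise : ∀ (U : ∀ n, Set (Base d n)) {c : Perm (Fin 6)}, c ^ 3 = 1 →
      fiberwise U c ^ 3 = 1 := fun U c hc => by rw [← map_pow, hc, map_one]
  have htwist : ∀ γ : ∀ n, Perm (Base d n), twist γ ^ 3 = 1 := fun γ => by
    rw [twist, conj_pow, hfiberwise _ (by decide), mul_one, mul_inv_cancel]
  match m with
  | 0 | 1 | 5 | 6 | 7 => exact hfiberwise _ (by decide)
  | 2 | 3 | 4 => exact htwist _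

lemma generators_apply_of_notMem (m : Fin 8) {n : ℕ} {x : Base d n} (hx : x ∉ Y n) :
    generators Y m n (x, 5) = (x, 5) := by
  have hfiberwise : ∀ (U : ∀ n, Set (Base d n)) {c : Perm (Fin 6)}, c 5 = 5 →
      fiberwise U c n (x, 5) = (x, 5) := fun U c hc => by
    by_cases h : x ∈ U n <;> simp [h, hc]
  have htwist : ∀ γ : ∀ n, Perm (Base d n), twist γ n (x, 5) = (x, 5) := fun γ => by
    simp [twist, ← map_inv, show highCycle 5 = 5 by decide]
  match m with
  | 0 | 1 | 5 | 6 => exact hfiberwise _ (by decide)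
  | 2 | 3 | 4 => exact htwist _
  | 7 => exact fiberwise_apply_of_notMem hx _ _

lemma range_alternatingEmbedding_le_leadingGroup {n : ℕ} {α : Type*} [Fintype α] [DecidableEq α]
    (e : α ≃ frameSupport Y n) :
    (alternatingEmbedding e).range ≤ leadingGroup (frameGroup Y) n := by
  refine range_alternatingEmbedding_le e (a := (0, 0)) (b := (0, 1)) ?_ ?_ fun w hw hw0 hw1 => ?_
  · exact mem_frameSupport.2 (by simp)
  · exact mem_frameSupport.2 (by simp)
  · obtain ⟨g, hg, hg0, hg1, hg2⟩ :=
      exists_mem_frameGroup_fixing (mem_frameSupport.1 hw) hw0 hw1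
    have hconj : g n * threeCycle (0, 0) (0, 1) (0, 2) * (g n)⁻¹ = threeCycle (0, 0) (0, 1) w := by
      rw [threeCycle, ← conj_mul, ← swap_apply_apply, ← swap_apply_apply, hg0, hg1, hg2, threeCycle]
    exact hconj ▸ conj_mem_leadingGroup (threeCycle_mem_leadingGroup n) hg

theorem exists_isFrame_of_equiv_frameSupport {α : ℕ → Type*} [∀ n, Fintype (α n)]
    [∀ n, DecidableEq (α n)] (e : ∀ n, α n ≃ frameSupport Y n) :
    ∃ x : Fin 8 → ∀ n, alternatingGroup (α n), IsFrame (Subgroup.closure (Set.range x)) := by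
  have hrange : ∀ m n, generators Y m n ∈ (alternatingEmbedding (e n)).range := fun m n => by
    refine mem_range_alternatingEmbedding (e n) (k := 3) (by decide)
      (congrFun (generators_pow_three Y m) n) ?_
    rintro ⟨x, l⟩ hz
    obtain ⟨rfl, hx⟩ : l = 5 ∧ x ∉ Y n := by simpa [mem_frameSupport] using hz
    exact generators_apply_of_notMem Y m hx
  choose x hx using hrange
  have hinj := fun n => alternatingEmbedding_injective (e n)
  have hmap : (Subgroup.closure (Set.range x)).map
      (MonoidHom.piMap fun n => alternatingEmbedding (e n)) = frameGroup Y := by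
    rw [MonoidHom.map_closure, ← Set.range_comp, frameGroup]
    exact congrArg (fun f => Subgroup.closure (Set.range f)) (funext fun m => funext (hx m))
  refine ⟨x, isFrame_of_noFiniteQuotientModSum ?_ ?_ ?_⟩
  · exact ⟨(Set.finite_range x).toFinset, by rw [Set.Finite.coe_toFinset]⟩
  · exact mem_of_leadingGroup_eq_top fun n => leadingGroup_eq_top_of_map hinj <|
      hmap ▸ range_alternatingEmbedding_le_leadingGroup Y (e n)
  · exact .of_map hinj (hmap ▸ noFiniteQuotientModSum_frameGroup Y)

end Embedding

lemma exists_eq_five_mul_add {k N : ℕ} (hk : 0 < k) (hN : 25 * k ≤ N) :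
    ∃ d r, N = 5 * (k * (d + 1)) + r ∧ r ≤ k * (d + 1) := by
  have hq : 5 ≤ N / (5 * k) := (Nat.le_div_iff_mul_le (by positivity)).2 (by lia)
  refine ⟨N / (5 * k) - 1, N % (5 * k), ?_, ?_⟩ <;> rw [Nat.sub_add_cancel (by lia)]
  · rw [← mul_assoc, Nat.div_add_mod]
  · calc N % (5 * k) ≤ k * 5 := mul_comm k 5 ▸ (Nat.mod_lt _ (by positivity)).le
      _ ≤ k * (N / (5 * k)) := by gcongr

theorem exists_isFrame_closure_range_alternatingGroup {N : ℕ → ℕ}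
    (hN : ∀ n, 25 * 2 ^ (n + 1) ≤ N n) :
    ∃ x : Fin 8 → ∀ n, alternatingGroup (Fin (N n)),
      IsFrame (Subgroup.closure (Set.range x)) := by
  choose d r hN hr using fun n => exists_eq_five_mul_add (Nat.two_pow_pos (n + 1)) (hN n)
  have hY : ∀ n, ∃ Y : Finset (Base d n), Y.card = r n := fun n => by
    obtain ⟨Y, -, hY⟩ := Finset.exists_subset_card_eq
      ((hr n).trans_eq (card_base d n).symm : r n ≤ (Finset.univ : Finset (Base d n)).card)
    exact ⟨Y, hY⟩
  choose Y hY using hY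
  exact exists_isFrame_of_equiv_frameSupport Y fun n =>
    (Finset.equivFinOfCardEq (by rw [card_frameSupport, hY, hN])).symm

lemma le_pow_sub_one_div_sub_one {p : ℕ} (hp : 2 ≤ p) (n : ℕ) :
    25 * 2 ^ (n + 1) ≤ (p ^ (3 * (n + 3)) - 1) / (p - 1) := by
  rw [← Nat.geomSum_eq hp]
  calc 25 * 2 ^ (n + 1) ≤ 2 ^ 5 * 2 ^ (n + 1) := by gcongr; norm_num
    _ = 2 ^ (n + 6) := by ring
    _ ≤ 2 ^ (3 * n + 8) := by gcongr <;> lia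
    _ ≤ p ^ (3 * n + 8) := by gcongr
    _ ≤ ∑ i ∈ Finset.range (3 * (n + 3)), p ^ i :=
      Finset.single_le_sum_of_canonicallyOrdered (f := (p ^ ·)) (Finset.mem_range.2 (by lia))

end AlternatingFrame

theorem exists_ten_generated_frame_in_product_of_alternating_general {k : ℕ} (hk : 8 ≤ k)
    {N : ℕ → ℕ} (hN : ∀ n, 25 * 2 ^ (n + 1) ≤ N n) :
    ∃ x : Fin k → ∀ n, alternatingGroup (Fin (N n)), IsFrame (Subgroup.closure (Set.range x)) := by
  obtain ⟨x, hx⟩ := AlternatingFrame.exists_isFrame_closure_range_alternatingGroup hN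
  have : Nonempty (Fin 8) := ⟨0⟩
  have hsurj := Function.invFun_surjective (Fin.castLE_injective hk)
  exact ⟨x ∘ Function.invFun (Fin.castLE hk), by rwa [hsurj.range_comp]⟩

/-- **Theorem (Kassabov–Nikolov).**  For every odd prime `p` there is a `10`-generated
subgroup of `∏_{n ≥ 3} Alt(u_{n,p})`, where `u_{n,p} = (p^{3n} - 1)/(p - 1)`, which is a
frame for this Cartesian product. -/
theorem exists_ten_generated_frame_in_product_of_alternating
    (p : ℕ) (hp : p.Prime) (hodd : Odd p) :
    ∃ x : Fin 10 → ∀ n : ℕ, alternatingGroup (Fin ((p ^ (3 * (n + 3)) - 1) / (p - 1))),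
      IsFrame (Subgroup.closure (Set.range x)) :=
  exists_ten_generated_frame_in_product_of_alternating_general (by norm_num)
    (AlternatingFrame.le_pow_sub_one_div_sub_one hp.two_le)
end
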